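/- Let $n$ be a positive integer, $1<\alpha,\beta<\infty$ and $0<p\leqslant q<\infty$ with $q\geqslant 2$ and $\beta p\leqslant\alpha q$. Let $\mathbf{r}=(r_1,\dots,r_n)$ with $0\leqslant r_i<1$ and $r_i^2\leqslant \beta p/(\alpha q)$ for all $i=1,\dots,n$. Then for every function $f$ analytic on the polydisc $\mathbb{D}^n$, $\left(\int_{\mathbb{D}^n}|f(r_1z_1,\dots,r_nz_n)|^q\,dA_\beta(z_1)\cdots dA_\beta(z_n)\right)^{1/q}\leqslant\left(\int_{\mathbb{D}^n}|f(z_1,\dots,z_n)|^p\,dA_\alpha(z_1)\cdots dA_\alpha(z_n)\right)^{1/p}$. -/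

import Mathlib

open MeasureTheory Metric

/-- The weighted Bergman measure `dA_α(z) = (α-1)(1-|z|²)^(α-2) dA(z)` on the unit disk,
where `dA = dx dy / π` is the normalized area measure. -/
noncomputable def bergmanMeasure (α : ℝ) : Measure ℂ :=
  ((volume : Measure ℂ).restrict (ball (0 : ℂ) 1)).withDensity
    fun z => ENNReal.ofReal ((α - 1) * (1 - ‖z‖ ^ 2) ^ (α - 2) / Real.pi)

/-- The product Bergman measure `dA_α(z₁) ⋯ dA_α(zₙ)` on the polydisc. -/
noncomputable def bergmanMeasurePi (n : ℕ) (α : ℝ) : Measure (Fin n → ℂ) :=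
  Measure.pi fun _ => bergmanMeasure α

/-- `w` is real differentiable at `z`, with Wirtinger derivatives `∂w = a` and `∂̄w = b`. -/
def HasWirtingerAt (w : ℂ → ℂ) (a b z : ℂ) : Prop :=
  HasFDerivAt w (a • (1 : ℂ →L[ℝ] ℂ) + b • (Complex.conjCLE : ℂ →L[ℝ] ℂ)) z

namespace HasWirtingerAt

variable {w w₁ w₂ f h : ℂ → ℂ} {a b a₁ b₁ a₂ b₂ z c : ℂ}

theorem congr_deriv (hw : HasWirtingerAt w a₁ b₁ z) (ha : a₁ = a₂) (hb : b₁ = b₂) :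
    HasWirtingerAt w a₂ b₂ z := ha ▸ hb ▸ hw

theorem continuousAt (hw : HasWirtingerAt w a b z) : ContinuousAt w z :=
  HasFDerivAt.continuousAt hw

theorem of_hasDerivAt (hf : HasDerivAt f c z) : HasWirtingerAt f c 0 z := by
  refine (hf.hasFDerivAt.restrictScalars ℝ).congr_fderiv ?_
  ext x; simp [mul_comm]

theorem conj (hw : HasWirtingerAt w a b z) :
    HasWirtingerAt (fun x => (starRingEnd ℂ) (w x)) ((starRingEnd ℂ) b) ((starRingEnd ℂ) a) z := by
  refine (Complex.conjCLE.hasFDerivAt.comp z hw).congr_fderiv ?_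
  ext x; simp [add_comm]

theorem const : HasWirtingerAt (fun _ => c) 0 0 z := by
  refine (hasFDerivAt_const (𝕜 := ℝ) c z).congr_fderiv ?_
  ext x; simp

theorem add (h₁ : HasWirtingerAt w₁ a₁ b₁ z) (h₂ : HasWirtingerAt w₂ a₂ b₂ z) :
    HasWirtingerAt (fun x => w₁ x + w₂ x) (a₁ + a₂) (b₁ + b₂) z := by
  refine (HasFDerivAt.add h₁ h₂).congr_fderiv ?_
  ext x; simp; ring

theorem sub (h₁ : HasWirtingerAt w₁ a₁ b₁ z) (h₂ : HasWirtingerAt w₂ a₂ b₂ z) :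
    HasWirtingerAt (fun x => w₁ x - w₂ x) (a₁ - a₂) (b₁ - b₂) z := by
  refine (HasFDerivAt.sub h₁ h₂).congr_fderiv ?_
  ext x; simp; ring

theorem mul (h₁ : HasWirtingerAt w₁ a₁ b₁ z) (h₂ : HasWirtingerAt w₂ a₂ b₂ z) :
    HasWirtingerAt (fun x => w₁ x * w₂ x) (a₁ * w₂ z + w₁ z * a₂) (b₁ * w₂ z + w₁ z * b₂) z := by
  refine (HasFDerivAt.mul h₁ h₂).congr_fderiv ?_
  ext x; simp; ring

theorem comp_hasDerivAt (hw : HasWirtingerAt w a b z) (hh : HasDerivAt h c (w z)) :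
    HasWirtingerAt (fun x => h (w x)) (c * a) (c * b) z := by
  refine ((hh.hasFDerivAt.restrictScalars ℝ).comp z hw).congr_fderiv ?_
  ext x; simp; ring

/-- Chain rule for a real function of a real-valued function on `ℂ`. -/
theorem comp_real {v : ℂ → ℝ} {g : ℝ → ℝ} {g' : ℝ}
    (hv : HasWirtingerAt (fun x => (v x : ℂ)) a b z) (hg : HasDerivAt g g' (v z)) :
    HasWirtingerAt (fun x => (g (v x) : ℂ)) (g' * a) (g' * b) z := by
  have h1 : HasFDerivAt v (Complex.reCLM.comp
      (a • (1 : ℂ →L[ℝ] ℂ) + b • (Complex.conjCLE : ℂ →L[ℝ] ℂ))) z :=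
    Complex.reCLM.hasFDerivAt.comp z hv
  have h2 := Complex.ofRealCLM.hasFDerivAt.comp z h1
  have h3 := HasFDerivAt.unique h2 hv
  refine (Complex.ofRealCLM.hasFDerivAt.comp z (hg.hasFDerivAt.comp z h1)).congr_fderiv ?_
  ext x
  have := DFunLike.congr_fun h3 x
  simp at this ⊢
  linear_combination (g' : ℂ) * this

theorem comp_add_const (c : ℂ) (hw : HasWirtingerAt w a b (z + c)) :
    HasWirtingerAt (fun x => w (x + c)) a b z := by
  refine (HasFDerivAt.comp (f := fun x => x + c) z (g := w) hw ((hasFDerivAt_id z).add_const c)).congr_fderiv ?_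
  ext x; simp

/-- Derivative along a real curve. -/
theorem hasDerivAt_comp {γ : ℝ → ℂ} {γ' : ℂ} {t : ℝ} (hw : HasWirtingerAt w a b (γ t))
    (hγ : HasDerivAt γ γ' t) :
    HasDerivAt (fun x => w (γ x)) (a * γ' + b * (starRingEnd ℂ) γ') t := by
  refine (HasFDerivAt.comp_hasDerivAt t hw hγ).congr_deriv ?_
  simp

end HasWirtingerAt

section Circle

variable {w a b : ℂ → ℂ}

/-- The point `r e^{iθ}`. -/
noncomputable def polarPt (r θ : ℝ) : ℂ := r * Complex.exp (θ * Complex.I)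

theorem continuous_polarPt : Continuous fun x : ℝ × ℝ => polarPt x.1 x.2 := by
  unfold polarPt; fun_prop

theorem norm_polarPt (r θ : ℝ) : ‖polarPt r θ‖ = |r| := by
  simp [polarPt, Complex.norm_exp_ofReal_mul_I]

theorem conj_exp_mul_I (θ : ℝ) :
    (starRingEnd ℂ) (Complex.exp (θ * Complex.I)) = Complex.exp (-(θ * Complex.I)) := by
  rw [← Complex.exp_conj]; simp

theorem hasDerivAt_polarPt_left (r θ : ℝ) :
    HasDerivAt (fun r => polarPt r θ) (Complex.exp (θ * Complex.I)) r := by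
  unfold polarPt
  simpa using (Complex.ofRealCLM.hasDerivAt (x := r)).mul_const (Complex.exp (θ * Complex.I))

theorem hasDerivAt_polarPt_right (r θ : ℝ) :
    HasDerivAt (fun θ => polarPt r θ) (polarPt r θ * Complex.I) θ := by
  unfold polarPt
  have h1 : HasDerivAt (fun θ : ℝ => (θ : ℂ) * Complex.I) Complex.I θ := by
    simpa using (Complex.ofRealCLM.hasDerivAt (x := θ)).mul_const Complex.I
  simpa [mul_assoc] using (h1.cexp).const_mul (r : ℂ)

theorem polarPt_pi (r : ℝ) : polarPt r Real.pi = polarPt r (-Real.pi) := by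
  simp [polarPt, Complex.exp_neg, Complex.exp_pi_mul_I]

theorem hasDerivAt_comp_polarPt_left (hw : ∀ z, HasWirtingerAt w (a z) (b z) z) (r θ : ℝ) :
    HasDerivAt (fun r => w (polarPt r θ))
      (a (polarPt r θ) * Complex.exp (θ * Complex.I)
        + b (polarPt r θ) * Complex.exp (-(θ * Complex.I))) r := by
  rw [← conj_exp_mul_I]
  exact (hw _).hasDerivAt_comp (hasDerivAt_polarPt_left r θ)

theorem intervalIntegral_circle_wirtinger_eq (hw : ∀ z, HasWirtingerAt w (a z) (b z) z)
    (ha : Continuous a) (hb : Continuous b) {r : ℝ} (hr : r ≠ 0) :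
    ∫ θ in -Real.pi..Real.pi, a (polarPt r θ) * Complex.exp (θ * Complex.I) =
      ∫ θ in -Real.pi..Real.pi, b (polarPt r θ) * Complex.exp (-(θ * Complex.I)) := by
  have hp : Continuous fun θ => polarPt r θ :=
    continuous_polarPt.comp (Continuous.prodMk_right r)
  have ca : Continuous fun θ : ℝ => a (polarPt r θ) * Complex.exp (θ * Complex.I) := by fun_prop
  have cb : Continuous fun θ : ℝ => b (polarPt r θ) * Complex.exp (-(θ * Complex.I)) := by
    fun_prop
  have h1 : ∀ θ : ℝ, HasDerivAt (fun θ => w (polarPt r θ))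
      ((r * Complex.I) * (a (polarPt r θ) * Complex.exp (θ * Complex.I)
        - b (polarPt r θ) * Complex.exp (-(θ * Complex.I)))) θ := fun θ => by
    refine ((hw _).hasDerivAt_comp (hasDerivAt_polarPt_right r θ)).congr_deriv ?_
    rw [← conj_exp_mul_I]
    simp only [polarPt, map_mul, Complex.conj_ofReal, Complex.conj_I]
    ring
  have h2 := intervalIntegral.integral_eq_sub_of_hasDerivAt (a := -Real.pi) (b := Real.pi)
    (fun θ _ => h1 θ) (by apply Continuous.intervalIntegrable; fun_prop)
  rw [polarPt_pi, sub_self, intervalIntegral.integral_const_mul,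
    intervalIntegral.integral_sub (ca.intervalIntegrable _ _) (cb.intervalIntegrable _ _)] at h2
  have h3 : (r : ℂ) * Complex.I ≠ 0 := by simpa using hr
  exact sub_eq_zero.1 ((mul_eq_zero.1 h2).resolve_left h3)

end Circle

theorem HasWirtingerAt.eq_zero_of_notMem_tsupport {w : ℂ → ℂ} {a b z : ℂ}
    (hw : HasWirtingerAt w a b z) (hz : z ∉ tsupport w) : a = 0 ∧ b = 0 := by
  have h0 : HasFDerivAt w (0 : ℂ →L[ℝ] ℂ) z :=
    (hasFDerivAt_const (0 : ℂ) z).congr_of_eventuallyEq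
      ((notMem_tsupport_iff_eventuallyEq.1 hz).trans (by rfl))
  have h1 := HasFDerivAt.unique hw h0
  have e1 : a + b = 0 := by simpa using DFunLike.congr_fun h1 1
  have eI : a * Complex.I - b * Complex.I = 0 := by
    simpa [sub_eq_add_neg] using DFunLike.congr_fun h1 Complex.I
  have e2 : a - b = 0 := by
    rw [← sub_mul] at eI
    exact (mul_eq_zero.1 eI).resolve_right Complex.I_ne_zero
  constructor
  · linear_combination (e1 + e2) / 2
  · linear_combination (e1 - e2) / 2

theorem hasCompactSupport_wirtinger {w a b : ℂ → ℂ} (hw : ∀ z, HasWirtingerAt w (a z) (b z) z)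
    (hs : HasCompactSupport w) : HasCompactSupport a ∧ HasCompactSupport b := by
  constructor
  · exact HasCompactSupport.intro hs fun z hz => ((hw z).eq_zero_of_notMem_tsupport hz).1
  · exact HasCompactSupport.intro hs fun z hz => ((hw z).eq_zero_of_notMem_tsupport hz).2

theorem Complex.polarCoord_symm_eq_polarPt (p : ℝ × ℝ) :
    Complex.polarCoord.symm p = polarPt p.1 p.2 := by
  rw [Complex.polarCoord_symm_apply, polarPt, Complex.exp_mul_I]
  simp

theorem lintegral_eq_lintegral_polarPt {f : ℂ → ENNReal} (hf : Measurable f) :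
    ∫⁻ z, f z = ∫⁻ r in Set.Ioi (0 : ℝ), ENNReal.ofReal r *
      ∫⁻ θ in Set.Ioo (-Real.pi) Real.pi, f (polarPt r θ) := by
  have hm : Measurable fun p : ℝ × ℝ => f (polarPt p.1 p.2) :=
    hf.comp continuous_polarPt.measurable
  rw [← Complex.lintegral_comp_polarCoord_symm]
  simp only [Complex.polarCoord_symm_eq_polarPt, smul_eq_mul]
  rw [polarCoord_target, Measure.volume_eq_prod, ← Measure.prod_restrict,
    lintegral_prod (fun p : ℝ × ℝ => ENNReal.ofReal p.1 * f (polarPt p.1 p.2))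
      ((measurable_fst.ennreal_ofReal.mul hm).aemeasurable)]
  refine lintegral_congr fun r => ?_
  have hr : Measurable fun θ : ℝ => f (polarPt r θ) := hm.comp (measurable_prodMk_left (x := r))
  dsimp only
  rw [lintegral_const_mul _ hr]

theorem integrableOn_inv_norm_ball (R : ℝ) :
    IntegrableOn (fun z : ℂ => ‖z‖⁻¹) (ball 0 R) := by
  refine ⟨by fun_prop, ?_⟩
  rw [hasFiniteIntegral_iff_enorm, ← lintegral_indicator measurableSet_ball,
    lintegral_eq_lintegral_polarPt (by
      refine Measurable.indicator ?_ measurableSet_ball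
      fun_prop)]
  calc _ ≤ ∫⁻ r in Set.Ioi (0 : ℝ), (Set.Ioo 0 R).indicator
        (fun _ => ENNReal.ofReal (2 * Real.pi)) r := by
        refine setLIntegral_mono_ae' measurableSet_Ioi (Filter.Eventually.of_forall fun r hr => ?_)
        have hr : 0 < r := hr
        by_cases hR : r < R
        · have : r ∈ Set.Ioo 0 R := ⟨hr, hR⟩
          rw [Set.indicator_of_mem this]
          have h2 : ∀ θ, (ball (0 : ℂ) R).indicator (fun a : ℂ => ‖‖a‖⁻¹‖ₑ) (polarPt r θ)
              = ENNReal.ofReal r⁻¹ := fun θ => by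
            rw [Set.indicator_of_mem]
            · rw [norm_polarPt, abs_of_pos hr, Real.enorm_eq_ofReal (by positivity)]
            · simpa [norm_polarPt, abs_of_pos hr] using hR
          simp only [h2]
          rw [setLIntegral_const, Real.volume_Ioo, ← mul_assoc, ← ENNReal.ofReal_mul hr.le,
            mul_inv_cancel₀ hr.ne']
          simp [two_mul]
        · have h2 : ∀ θ, (ball (0 : ℂ) R).indicator (fun a : ℂ => ‖‖a‖⁻¹‖ₑ) (polarPt r θ) = 0 :=
            fun θ => by
            rw [Set.indicator_of_notMem]
            simpa [norm_polarPt, abs_of_pos hr] using hR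
          simp [h2]
    _ ≤ ∫⁻ r, (Set.Ioo 0 R).indicator (fun _ => ENNReal.ofReal (2 * Real.pi)) r :=
        setLIntegral_le_lintegral _ _
    _ < ⊤ := by
        rw [lintegral_indicator measurableSet_Ioo, setLIntegral_const, Real.volume_Ioo]
        exact ENNReal.mul_lt_top ENNReal.ofReal_lt_top ENNReal.ofReal_lt_top

theorem integral_wirtinger_div_conj {ψ a b : ℂ → ℂ} (hψ : ∀ z, HasWirtingerAt ψ (a z) (b z) z)
    (ha : Continuous a) (hb : Continuous b) (hs : HasCompactSupport ψ) :
    ∫ z, a z / (starRingEnd ℂ) z = -(Real.pi : ℂ) * ψ 0 := by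
  obtain ⟨sa, sb⟩ := hasCompactSupport_wirtinger hψ hs
  obtain ⟨R, hR0, hR⟩ : ∃ R : ℝ, 0 < R ∧ ∀ z : ℂ, R ≤ ‖z‖ → ψ z = 0 ∧ a z = 0 ∧ b z = 0 := by
    obtain ⟨R, hR⟩ := hs.isCompact.isBounded.subset_ball 0
    refine ⟨max R 1, by positivity, fun z hz => ?_⟩
    have : z ∉ tsupport ψ := fun h => by
      have := hR h
      rw [mem_ball_zero_iff] at this
      linarith [le_max_left R 1]
    exact ⟨image_eq_zero_of_notMem_tsupport this, (hψ z).eq_zero_of_notMem_tsupport this⟩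
  set A : ℝ × ℝ → ℂ := fun p => a (polarPt p.1 p.2) * Complex.exp (p.2 * Complex.I) with hA
  set B : ℝ × ℝ → ℂ := fun p => b (polarPt p.1 p.2) * Complex.exp (-(p.2 * Complex.I)) with hB
  have cA : Continuous A := by have := continuous_polarPt; fun_prop
  have cB : Continuous B := by have := continuous_polarPt; fun_prop
  have key : ∀ F : ℝ × ℝ → ℂ, Continuous F → (∀ p, R ≤ p.1 → F p = 0) →
      Integrable F ((volume.restrict (Set.Ioi 0)).prod
        (volume.restrict (Set.Ioo (-Real.pi) Real.pi))) := by
    intro F cF hF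
    rw [Measure.prod_restrict, ← Measure.volume_eq_prod]
    have h1 : IntegrableOn F (Set.Icc 0 R ×ˢ Set.Icc (-Real.pi) Real.pi) :=
      cF.continuousOn.integrableOn_compact (isCompact_Icc.prod isCompact_Icc)
    refine h1.of_forall_sdiff_eq_zero (measurableSet_Ioi.prod measurableSet_Ioo) ?_
    rintro ⟨r, θ⟩ ⟨⟨h2, h3⟩, h4⟩
    refine hF _ ?_
    by_contra h5
    exact h4 ⟨⟨le_of_lt h2, (not_le.1 h5).le⟩, ⟨h3.1.le, h3.2.le⟩⟩
  have fA : ∀ p : ℝ × ℝ, R ≤ p.1 → A p = 0 := fun p hp => by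
    simp [hA, (hR (polarPt p.1 p.2) (by rw [norm_polarPt]; exact hp.trans (le_abs_self _))).2.1]
  have fB : ∀ p : ℝ × ℝ, R ≤ p.1 → B p = 0 := fun p hp => by
    simp [hB, (hR (polarPt p.1 p.2) (by rw [norm_polarPt]; exact hp.trans (le_abs_self _))).2.2]
  have iA := key A cA fA
  have iB := key B cB fB
  have hpi : -Real.pi ≤ Real.pi := by linarith [Real.pi_pos]
  have e1 : ∫ z, a z / (starRingEnd ℂ) z = ∫ r in Set.Ioi (0 : ℝ),
      ∫ θ in Set.Ioo (-Real.pi) Real.pi, A (r, θ) := by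
    rw [← Complex.integral_comp_polarCoord_symm, polarCoord_target, ← integral_prod _ iA,
      Measure.prod_restrict, ← Measure.volume_eq_prod]
    refine setIntegral_congr_fun (measurableSet_Ioi.prod measurableSet_Ioo) ?_
    rintro ⟨r, θ⟩ ⟨h2, -⟩
    have hr : (r : ℂ) ≠ 0 := by
      have : 0 < r := h2
      exact_mod_cast this.ne'
    simp only [Complex.polarCoord_symm_eq_polarPt, hA]
    have : (starRingEnd ℂ) (polarPt r θ) = r * Complex.exp (-(θ * Complex.I)) := by
      rw [polarPt, map_mul, conj_exp_mul_I, Complex.conj_ofReal]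
    rw [this, Complex.exp_neg, Complex.real_smul]
    field_simp
  have e2 : ∀ r ∈ Set.Ioi (0 : ℝ), ∫ θ in Set.Ioo (-Real.pi) Real.pi, A (r, θ) =
      ∫ θ in Set.Ioo (-Real.pi) Real.pi, B (r, θ) := fun r hr => by
    have := intervalIntegral_circle_wirtinger_eq hψ ha hb (ne_of_gt hr)
    rwa [intervalIntegral.integral_of_le hpi, intervalIntegral.integral_of_le hpi,
      integral_Ioc_eq_integral_Ioo, integral_Ioc_eq_integral_Ioo] at this
  have e3 : ∫ z, a z / (starRingEnd ℂ) z = ∫ r in Set.Ioi (0 : ℝ),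
      ∫ θ in Set.Ioo (-Real.pi) Real.pi, B (r, θ) := by
    rw [e1]; exact setIntegral_congr_fun measurableSet_Ioi e2
  have e4 : ∀ θ, ∫ r in Set.Ioi (0 : ℝ), (A (r, θ) + B (r, θ)) = -ψ 0 := fun θ => by
    have hd : ∀ r ∈ Set.Ici (0 : ℝ), HasDerivAt (fun r => ψ (polarPt r θ)) (A (r, θ) + B (r, θ)) r :=
      fun r _ => hasDerivAt_comp_polarPt_left hψ r θ
    have hi : IntegrableOn (fun r => A (r, θ) + B (r, θ)) (Set.Ioi (0 : ℝ)) := by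
      have h1 : IntegrableOn (fun r => A (r, θ) + B (r, θ)) (Set.Icc 0 R) :=
        (by fun_prop : Continuous fun r => A (r, θ) + B (r, θ)).continuousOn.integrableOn_compact
          isCompact_Icc
      refine h1.of_forall_sdiff_eq_zero measurableSet_Ioi fun r hr => ?_
      have : R ≤ r := by
        by_contra h5
        exact hr.2 ⟨le_of_lt hr.1, (not_le.1 h5).le⟩
      simp [fA (r, θ) this, fB (r, θ) this]
    have ht : Filter.Tendsto (fun r => ψ (polarPt r θ)) Filter.atTop (nhds 0) := by
      refine tendsto_const_nhds.congr' ?_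
      filter_upwards [Filter.eventually_ge_atTop R] with r hr
      exact ((hR _ (by rw [norm_polarPt]; exact hr.trans (le_abs_self _))).1).symm
    rw [integral_Ioi_of_hasDerivAt_of_tendsto' hd hi ht]
    simp [polarPt]
  have e5 : 2 * ∫ z, a z / (starRingEnd ℂ) z = ∫ θ in Set.Ioo (-Real.pi) Real.pi, -ψ 0 := by
    rw [two_mul]
    nth_rewrite 1 [e1]
    rw [e3, ← integral_prod _ iA, ← integral_prod _ iB, ← integral_add iA iB,
      integral_prod_symm (fun p => A p + B p) (iA.add iB)]
    exact integral_congr_ae (Filter.Eventually.of_forall e4)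
  rw [setIntegral_const, Measure.real, Real.volume_Ioo, ENNReal.toReal_ofReal (by linarith)] at e5
  rw [Complex.real_smul] at e5
  push_cast at e5
  linear_combination e5 / 2

/-- The Cauchy–Pompeiu formula for a compactly supported function. -/
theorem integral_wirtinger_div_conj_sub {ψ a b : ℂ → ℂ}
    (hψ : ∀ z, HasWirtingerAt ψ (a z) (b z) z)
    (ha : Continuous a) (hb : Continuous b) (hs : HasCompactSupport ψ) (y : ℂ) :
    ∫ z, a z / (starRingEnd ℂ) (z - y) = -(Real.pi : ℂ) * ψ y := by
  have := integral_wirtinger_div_conj (ψ := fun z => ψ (z + y)) (a := fun z => a (z + y))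
    (b := fun z => b (z + y)) (fun z => (hψ _).comp_add_const y) (by fun_prop) (by fun_prop)
    (hs.comp_homeomorph (Homeomorph.addRight y))
  rw [zero_add] at this
  rw [← this, ← integral_add_right_eq_self _ y]
  simp

theorem one_sub_normSq_cast (z : ℂ) :
    ((1 - ‖z‖ ^ 2 : ℝ) : ℂ) = 1 - z * (starRingEnd ℂ) z := by
  rw [Complex.mul_conj, Complex.normSq_eq_norm_sq]; push_cast; ring

theorem one_sub_normSq_pos {z : ℂ} (hz : z ∈ ball (0 : ℂ) 1) : 0 < 1 - ‖z‖ ^ 2 := by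
  rw [mem_ball_zero_iff] at hz
  nlinarith [norm_nonneg z]

theorem continuous_mul_of_tsupport_subset {φ g : ℂ → ℂ} (hφ : Continuous φ)
    {U : Set ℂ} (hU : IsOpen U) (hs : tsupport φ ⊆ U) (hg : ContinuousOn g U) :
    Continuous fun z => φ z * g z := by
  refine continuous_of_tsupport fun z hz => ?_
  have hz' : z ∈ U := hs (tsupport_mul_subset_left hz)
  exact hφ.continuousAt.mul (hg.continuousAt (hU.mem_nhds hz'))

/-- A compactly supported function in the disk can be multiplied by `1/(1-|z|²)`. -/
theorem hasWirtingerAt_mul_inv_one_sub {φ a b : ℂ → ℂ}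
    (hφ : ∀ z, HasWirtingerAt φ (a z) (b z) z) (hsub : tsupport φ ⊆ ball 0 1) (z : ℂ) :
    HasWirtingerAt (fun z => φ z * (1 - z * (starRingEnd ℂ) z)⁻¹)
      (a z * (1 - z * (starRingEnd ℂ) z)⁻¹
        + φ z * ((starRingEnd ℂ) z * (1 - z * (starRingEnd ℂ) z)⁻¹ ^ 2))
      (b z * (1 - z * (starRingEnd ℂ) z)⁻¹
        + φ z * (z * (1 - z * (starRingEnd ℂ) z)⁻¹ ^ 2)) z := by
  by_cases hz : z ∈ tsupport φ
  · have hne : (1 - z * (starRingEnd ℂ) z) ≠ 0 := by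
      rw [← one_sub_normSq_cast]
      exact_mod_cast (one_sub_normSq_pos (hsub hz)).ne'
    have hid : HasWirtingerAt (fun z => z) 1 0 z := .of_hasDerivAt (hasDerivAt_id z)
    have h1 := (HasWirtingerAt.const (c := 1) (z := z)).sub (hid.mul hid.conj)
    have h2 := h1.comp_hasDerivAt (hasDerivAt_inv hne)
    refine ((hφ z).mul h2).congr_deriv ?_ ?_ <;> simp [inv_pow, mul_comm]
  · have h0 : φ =ᶠ[nhds z] 0 := notMem_tsupport_iff_eventuallyEq.1 hz
    obtain ⟨ha, hb⟩ := (hφ z).eq_zero_of_notMem_tsupport hz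
    have h1 : HasWirtingerAt (fun _ => (0 : ℂ)) 0 0 z := HasWirtingerAt.const
    rw [ha, hb, show φ z = 0 from h0.self_of_nhds]
    simp only [zero_mul, add_zero]
    refine HasFDerivAt.congr_of_eventuallyEq h1 ?_
    filter_upwards [h0] with x hx
    simp [hx]

theorem continuousOn_inv_one_sub :
    ContinuousOn (fun z : ℂ => (1 - z * (starRingEnd ℂ) z)⁻¹) (ball 0 1) := by
  refine ContinuousOn.inv₀ (by fun_prop) fun z hz => ?_
  rw [← one_sub_normSq_cast]
  exact_mod_cast (one_sub_normSq_pos hz).ne'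

theorem norm_div_conj_self_le (x : ℂ) : ‖x / (starRingEnd ℂ) x‖ ≤ 1 := by
  rw [norm_div, Complex.norm_conj]
  exact div_self_le_one _

theorem integrable_prod_mul_div_conj {A Q : ℂ → ℂ} (hA : Continuous A) (hQ : Continuous Q)
    (sA : HasCompactSupport A) (sQ : HasCompactSupport Q) {H : ℂ × ℂ → ℂ} (hH : Continuous H) :
    Integrable (fun p : ℂ × ℂ => A p.1 * Q p.2 * H p / (starRingEnd ℂ) (p.1 - p.2))
      (volume.prod volume) := by
  obtain ⟨R, hR⟩ := (sA.isCompact.isBounded.union sQ.isCompact.isBounded).subset_ball 0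
  have hinteg : Integrable ((ball (0 : ℂ) (2 * R)).indicator fun z : ℂ => ‖z‖⁻¹) :=
    (integrable_indicator_iff measurableSet_ball).2 (integrableOn_inv_norm_ball _)
  have hQi : Integrable fun z => ‖Q z‖ := (hQ.integrable_of_hasCompactSupport sQ).norm
  have h1 := Integrable.convolution_integrand (ContinuousLinearMap.mul ℝ ℝ) hQi hinteg
  obtain ⟨C, hC⟩ : ∃ C, ∀ p ∈ tsupport A ×ˢ tsupport Q, ‖A p.1 * H p‖ ≤ C :=
    (sA.isCompact.prod sQ.isCompact).exists_bound_of_continuousOn (by fun_prop)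
  replace hC : ∀ p ∈ tsupport A ×ˢ tsupport Q, ‖A p.1 * H p‖ ≤ |C| :=
    fun p hp => (hC p hp).trans (le_abs_self C)
  refine (h1.const_mul |C|).mono' ?_ (Filter.Eventually.of_forall fun p => ?_)
  · refine Measurable.aestronglyMeasurable ?_
    have : Measurable fun z : ℂ => (starRingEnd ℂ) z := by fun_prop
    fun_prop
  · by_cases hp : p ∈ tsupport A ×ˢ tsupport Q
    · have hb : p.1 - p.2 ∈ ball (0 : ℂ) (2 * R) := by
        have e1 := hR (Or.inl hp.1)
        have e2 := hR (Or.inr hp.2)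
        rw [mem_ball_zero_iff] at e1 e2 ⊢
        linarith [norm_sub_le p.1 p.2]
      simp only [ContinuousLinearMap.mul_apply']
      rw [Set.indicator_of_mem hb, norm_div, Complex.norm_conj, div_eq_mul_inv,
        mul_right_comm, norm_mul, mul_assoc]
      gcongr
      exact hC p hp
    · have : A p.1 * Q p.2 = 0 := by
        by_contra h
        exact hp ⟨subset_tsupport _ (left_ne_zero_of_mul h),
          subset_tsupport _ (right_ne_zero_of_mul h)⟩
      rw [this]
      simp only [zero_mul, zero_div, norm_zero, ContinuousLinearMap.mul_apply']
      refine mul_nonneg (abs_nonneg C) (mul_nonneg (norm_nonneg _) (Set.indicator_nonneg ?_ _))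
      intros; positivity

theorem integrable_div_conj_sub {F : ℂ → ℂ} (hF : Continuous F) (sF : HasCompactSupport F)
    (y : ℂ) : Integrable fun z => F z / (starRingEnd ℂ) (z - y) := by
  suffices h : Integrable fun z => F (z + y) / (starRingEnd ℂ) z by
    simpa using h.comp_sub_right y
  have sG : HasCompactSupport fun z => F (z + y) := sF.comp_homeomorph (Homeomorph.addRight y)
  have cG : Continuous fun z => F (z + y) := by fun_prop
  obtain ⟨R, hR⟩ := sG.isCompact.isBounded.subset_ball 0
  obtain ⟨C, hC⟩ := cG.bounded_above_of_compact_support sG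
  have hinteg : Integrable ((ball (0 : ℂ) R).indicator fun z : ℂ => ‖z‖⁻¹) :=
    (integrable_indicator_iff measurableSet_ball).2 (integrableOn_inv_norm_ball _)
  refine (hinteg.const_mul C).mono' ?_ (Filter.Eventually.of_forall fun z => ?_)
  · refine Measurable.aestronglyMeasurable ?_
    have : Measurable fun z : ℂ => (starRingEnd ℂ) z := by fun_prop
    fun_prop
  · by_cases hz : z ∈ tsupport fun z => F (z + y)
    · rw [Set.indicator_of_mem (hR hz), norm_div, Complex.norm_conj, div_eq_mul_inv]
      gcongr
      exact hC z
    · rw [image_eq_zero_of_notMem_tsupport hz, zero_div, norm_zero]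
      refine mul_nonneg ((norm_nonneg _).trans (hC z)) (Set.indicator_nonneg ?_ _)
      intros; positivity

theorem hyperbolic_isoperimetric_aux {φ a b : ℂ → ℂ}
    (hφ : ∀ z, HasWirtingerAt φ (a z) (b z) z) (ha : Continuous a) (hb : Continuous b)
    (hs : HasCompactSupport φ) (hsub : tsupport φ ⊆ ball 0 1) :
    ‖Real.pi * (∫ z, φ z ^ 2 * (1 - z * (starRingEnd ℂ) z)⁻¹ ^ 2)
      + (∫ z, φ z * (1 - z * (starRingEnd ℂ) z)⁻¹ ^ 2) ^ 2‖ ≤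
      (∫ z, ‖a z * (1 - z * (starRingEnd ℂ) z)⁻¹‖) ^ 2 := by
  set ω : ℂ → ℂ := fun z => (1 - z * (starRingEnd ℂ) z)⁻¹ with hω
  have cω : ContinuousOn ω (ball 0 1) := continuousOn_inv_one_sub
  have cφ : Continuous φ := continuous_iff_continuousAt.2 fun z => (hφ z).continuousAt
  have sta : tsupport a ⊆ tsupport φ := by
    refine closure_minimal (fun z hz => ?_) (isClosed_tsupport _)
    by_contra h
    exact hz ((hφ z).eq_zero_of_notMem_tsupport h).1
  have stb : tsupport b ⊆ tsupport φ := by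
    refine closure_minimal (fun z hz => ?_) (isClosed_tsupport _)
    by_contra h
    exact hz ((hφ z).eq_zero_of_notMem_tsupport h).2
  have hωne : ∀ z ∈ tsupport φ, (1 - z * (starRingEnd ℂ) z) ≠ 0 := fun z hz => by
    rw [← one_sub_normSq_cast]
    exact_mod_cast (one_sub_normSq_pos (hsub hz)).ne'
  set A : ℂ → ℂ := fun z => a z * ω z with hA
  set Q : ℂ → ℂ := fun z => φ z * ω z ^ 2 with hQ
  set χ : ℂ → ℂ := fun z => φ z * ω z with hχ
  have cA : Continuous A := continuous_mul_of_tsupport_subset ha isOpen_ball (sta.trans hsub) cω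
  have cQ : Continuous Q :=
    continuous_mul_of_tsupport_subset cφ isOpen_ball hsub (cω.pow 2)
  have sA : HasCompactSupport A := (hasCompactSupport_wirtinger hφ hs).1.mul_right
  have sQ : HasCompactSupport Q := hs.mul_right
  have sχ : HasCompactSupport χ := hs.mul_right
  set c : ℂ → ℂ := fun z => A z + (starRingEnd ℂ) z * Q z with hc
  set d : ℂ → ℂ := fun z => b z * ω z + z * Q z with hd
  have cc : Continuous c := by fun_prop
  have cd : Continuous d :=
    (continuous_mul_of_tsupport_subset hb isOpen_ball (stb.trans hsub) cω).add
      (continuous_id.mul cQ)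
  have hW : ∀ z, HasWirtingerAt χ (c z) (d z) z := fun z =>
    (hasWirtingerAt_mul_inv_one_sub hφ hsub z).congr_deriv
      (by simp only [hc, hA, hQ, hω]; ring) (by simp only [hd, hQ, hω]; ring)
  have cχ : Continuous χ := continuous_iff_continuousAt.2 fun z => (hW z).continuousAt
  have hχQ : ∀ z, χ z = Q z * (1 - z * (starRingEnd ℂ) z) := fun z => by
    by_cases hz : z ∈ tsupport φ
    · have := hωne z hz
      simp only [hχ, hQ, hω]; field_simp
    · simp [hχ, hQ, image_eq_zero_of_notMem_tsupport hz]
  have hid : ∀ z : ℂ, HasWirtingerAt (fun z => z) 1 0 z := fun z =>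
    .of_hasDerivAt (hasDerivAt_id z)
  have E1 : ∀ x, ∫ y, A y * ((x - y) / (starRingEnd ℂ) (x - y)) =
      ∫ y, Q y * (1 - x * (starRingEnd ℂ) y) / (starRingEnd ℂ) (x - y) := fun x => by
    have h := integral_wirtinger_div_conj_sub (ψ := fun y => χ y * (x - y))
      (a := fun y => c y * (x - y) + χ y * (0 - 1)) (b := fun y => d y * (x - y) + χ y * (0 - 0))
      (fun y => (hW y).mul (HasWirtingerAt.const.sub (hid y))) (by fun_prop) (by fun_prop)
      sχ.mul_right x
    rw [sub_self, mul_zero, mul_zero] at h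
    rw [← sub_eq_zero, ← integral_sub, ← neg_eq_zero, ← integral_neg, ← h]
    · refine integral_congr_ae (Filter.Eventually.of_forall fun y => ?_)
      have : (starRingEnd ℂ) (y - x) = -(starRingEnd ℂ) (x - y) := by
        rw [← map_neg, neg_sub]
      simp only [this, div_neg, hχQ, hc]
      ring
    · refine (integrable_div_conj_sub (F := fun y => A y * (y - x)) (by fun_prop)
        sA.mul_right x).congr (Filter.Eventually.of_forall fun y => ?_)
      simp only
      rw [← neg_sub x y, map_neg, mul_neg, neg_div_neg_eq, mul_div_assoc]
    · refine (integrable_div_conj_sub (F := fun y => -(Q y * (1 - x * (starRingEnd ℂ) y)))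
        (by fun_prop) sQ.mul_right.neg x).congr (Filter.Eventually.of_forall fun y => ?_)
      simp only
      rw [← neg_sub x y, map_neg, neg_div_neg_eq]
  have E2 : ∀ y, ∫ x, A x * (1 - x * (starRingEnd ℂ) y) / (starRingEnd ℂ) (x - y) =
      -(Real.pi : ℂ) * φ y - ∫ x, Q x := fun y => by
    have h := integral_wirtinger_div_conj_sub (ψ := fun x => χ x * (1 - x * (starRingEnd ℂ) y))
      (a := fun x => c x * (1 - x * (starRingEnd ℂ) y)
        + χ x * (0 - (1 * (starRingEnd ℂ) y + x * 0)))
      (b := fun x => d x * (1 - x * (starRingEnd ℂ) y)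
        + χ x * (0 - (0 * (starRingEnd ℂ) y + x * 0)))
      (fun x => (hW x).mul (HasWirtingerAt.const.sub ((hid x).mul HasWirtingerAt.const)))
      (by fun_prop) (by fun_prop) sχ.mul_right y
    have e : χ y * (1 - y * (starRingEnd ℂ) y) = φ y := by
      by_cases hz : y ∈ tsupport φ
      · have := hωne y hz
        simp only [hχ, hω]; field_simp
      · simp [hχ, image_eq_zero_of_notMem_tsupport hz]
    rw [e] at h
    rw [← h, eq_sub_iff_add_eq, ← integral_add]
    · refine integral_congr_ae ?_
      have : ∀ᵐ x : ℂ, x ≠ y := by simp [ae_iff, measure_singleton]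
      filter_upwards [this] with x hx
      have h3 : (starRingEnd ℂ) (x - y) ≠ 0 :=
        (map_ne_zero (starRingEnd ℂ)).2 (sub_ne_zero.2 hx)
      simp only [hχQ, hc]
      field_simp
      simp only [map_sub]
      ring
    · exact integrable_div_conj_sub (by fun_prop) sA.mul_right y
    · exact cQ.integrable_of_hasCompactSupport sQ
  have I1 : (∫ x, ∫ y, A x * A y * ((x - y) / (starRingEnd ℂ) (x - y))) =
      -(Real.pi * (∫ z, φ z ^ 2 * ω z ^ 2) + (∫ z, Q z) ^ 2) := by
    calc _ = ∫ x, ∫ y, A x * Q y * (1 - x * (starRingEnd ℂ) y) / (starRingEnd ℂ) (x - y) := by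
          refine integral_congr_ae (Filter.Eventually.of_forall fun x => ?_)
          simp only [mul_assoc, mul_div_assoc]
          rw [integral_const_mul, E1, ← integral_const_mul]
          simp only [mul_div_assoc]
      _ = ∫ y, ∫ x, A x * Q y * (1 - x * (starRingEnd ℂ) y) / (starRingEnd ℂ) (x - y) := by
          refine integral_integral_swap ?_
          exact integrable_prod_mul_div_conj cA cQ sA sQ
            (H := fun p => 1 - p.1 * (starRingEnd ℂ) p.2) (by fun_prop)
      _ = ∫ y, Q y * (-(Real.pi : ℂ) * φ y - ∫ x, Q x) := by
          refine integral_congr_ae (Filter.Eventually.of_forall fun y => ?_)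
          simp only
          rw [← E2, ← integral_const_mul]
          refine integral_congr_ae (Filter.Eventually.of_forall fun x => ?_)
          simp only
          ring
      _ = _ := by
          simp only [mul_sub]
          rw [integral_sub, integral_mul_const]
          · have : ∀ y, Q y * (-(Real.pi : ℂ) * φ y) = -Real.pi * (φ y ^ 2 * ω y ^ 2) := by
              intro y; simp only [hQ]; ring
            simp only [this]
            rw [integral_const_mul]
            ring
          · exact (cQ.mul (by fun_prop)).integrable_of_hasCompactSupport sQ.mul_right
          · exact (cQ.mul (by fun_prop)).integrable_of_hasCompactSupport sQ.mul_right
  rw [← norm_neg, ← I1, sq, ← integral_mul_const]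
  refine norm_integral_le_of_norm_le ((cA.integrable_of_hasCompactSupport sA).norm.mul_const _)
    (Filter.Eventually.of_forall fun x => ?_)
  rw [← integral_const_mul]
  refine norm_integral_le_of_norm_le ((cA.integrable_of_hasCompactSupport sA).norm.const_mul _)
    (Filter.Eventually.of_forall fun y => ?_)
  rw [norm_mul, norm_mul]
  exact mul_le_of_le_one_right (by positivity) (norm_div_conj_self_le _)

/-- A functional form of the isoperimetric inequality of the hyperbolic disk. -/
theorem hyperbolic_isoperimetric {φ : ℂ → ℝ} {a b : ℂ → ℂ}
    (hφ : ∀ z, HasWirtingerAt (fun z => (φ z : ℂ)) (a z) (b z) z)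
    (ha : Continuous a) (hb : Continuous b)
    (hs : HasCompactSupport φ) (hsub : tsupport φ ⊆ ball 0 1) :
    Real.pi * (∫ z, φ z ^ 2 / (1 - ‖z‖ ^ 2) ^ 2) + (∫ z, φ z / (1 - ‖z‖ ^ 2) ^ 2) ^ 2 ≤
      (∫ z, ‖a z‖ / |1 - ‖z‖ ^ 2|) ^ 2 := by
  have hts : tsupport (fun z => (φ z : ℂ)) = tsupport φ := by
    rw [tsupport, tsupport]; congr 1; ext z; simp
  have h := hyperbolic_isoperimetric_aux hφ ha hb (by rwa [HasCompactSupport, hts])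
    (by rwa [hts])
  simp only [← one_sub_normSq_cast] at h
  refine (le_of_eq_of_le ?_ (Complex.re_le_norm _)).trans (h.trans_eq ?_)
  · have e1 : ∀ z, (φ z : ℂ) ^ 2 * ((1 - ‖z‖ ^ 2 : ℝ) : ℂ)⁻¹ ^ 2 =
        ((φ z ^ 2 / (1 - ‖z‖ ^ 2) ^ 2 : ℝ) : ℂ) := fun z => by
      rw [div_eq_mul_inv, inv_pow]; norm_cast
    have e2 : ∀ z, (φ z : ℂ) * ((1 - ‖z‖ ^ 2 : ℝ) : ℂ)⁻¹ ^ 2 =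
        ((φ z / (1 - ‖z‖ ^ 2) ^ 2 : ℝ) : ℂ) := fun z => by
      rw [div_eq_mul_inv, inv_pow]; norm_cast
    simp only [e1, e2]
    rw [integral_complex_ofReal, integral_complex_ofReal]
    norm_cast
  · congr 1
    refine integral_congr_ae (Filter.Eventually.of_forall fun z => ?_)
    simp only
    rw [norm_mul, norm_inv, Complex.norm_real, Real.norm_eq_abs, div_eq_mul_inv]

/-- The regularized quantity `(|f|² + ε)^c (1 - |z|²)`. -/
noncomputable def regWeight (f : ℂ → ℂ) (c ε : ℝ) (z : ℂ) : ℝ :=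
  (‖f z‖ ^ 2 + ε) ^ c * (1 - ‖z‖ ^ 2)

/-- The Wirtinger derivative `∂` of `regWeight f c ε`. -/
noncomputable def regWeightDeriv (f : ℂ → ℂ) (c ε : ℝ) (z : ℂ) : ℂ :=
  ((c * (‖f z‖ ^ 2 + ε) ^ (c - 1) * (1 - ‖z‖ ^ 2) : ℝ) : ℂ) * (deriv f z * (starRingEnd ℂ) (f z))
    - (((‖f z‖ ^ 2 + ε) ^ c : ℝ) : ℂ) * (starRingEnd ℂ) z

section RegWeight

variable {f : ℂ → ℂ} {c ε : ℝ}

theorem normSq_add_pos (hε : 0 < ε) (z : ℂ) : 0 < ‖f z‖ ^ 2 + ε := by positivity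

theorem hasWirtingerAt_normSq_add (hf : Differentiable ℂ f) (z : ℂ) :
    HasWirtingerAt (fun z => ((‖f z‖ ^ 2 + ε : ℝ) : ℂ)) (deriv f z * (starRingEnd ℂ) (f z))
      (f z * (starRingEnd ℂ) (deriv f z)) z := by
  have h := HasWirtingerAt.of_hasDerivAt (hf z).hasDerivAt
  have e : (fun z => ((‖f z‖ ^ 2 + ε : ℝ) : ℂ)) =
      fun z => f z * (starRingEnd ℂ) (f z) + (ε : ℂ) := by
    ext z
    rw [Complex.mul_conj, Complex.normSq_eq_norm_sq]; push_cast; ring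
  rw [e]
  refine ((h.mul h.conj).add .const).congr_deriv ?_ ?_ <;> simp

theorem hasWirtingerAt_normSq_add_rpow (hf : Differentiable ℂ f) (hε : 0 < ε) (m : ℝ) (z : ℂ) :
    HasWirtingerAt (fun z => (((‖f z‖ ^ 2 + ε) ^ m : ℝ) : ℂ))
      ((m * (‖f z‖ ^ 2 + ε) ^ (m - 1) : ℝ) * (deriv f z * (starRingEnd ℂ) (f z)))
      ((m * (‖f z‖ ^ 2 + ε) ^ (m - 1) : ℝ) * (f z * (starRingEnd ℂ) (deriv f z))) z :=
  (hasWirtingerAt_normSq_add hf z).comp_real (g := fun x => x ^ m)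
    (Real.hasDerivAt_rpow_const (Or.inl (normSq_add_pos hε z).ne'))

theorem hasWirtingerAt_one_sub_normSq (z : ℂ) :
    HasWirtingerAt (fun z => ((1 - ‖z‖ ^ 2 : ℝ) : ℂ)) (-(starRingEnd ℂ) z) (-z) z := by
  have hid : HasWirtingerAt (fun z => z) 1 0 z := .of_hasDerivAt (hasDerivAt_id z)
  simp only [one_sub_normSq_cast]
  refine (HasWirtingerAt.const.sub (hid.mul hid.conj)).congr_deriv ?_ ?_ <;> simp

theorem hasWirtingerAt_regWeight (hf : Differentiable ℂ f) (hε : 0 < ε) (z : ℂ) :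
    HasWirtingerAt (fun z => (regWeight f c ε z : ℂ)) (regWeightDeriv f c ε z)
      ((starRingEnd ℂ) (regWeightDeriv f c ε z)) z := by
  have h := (hasWirtingerAt_normSq_add_rpow hf hε c z).mul (hasWirtingerAt_one_sub_normSq z)
  simp only [← Complex.ofReal_mul] at h
  refine h.congr_deriv ?_ ?_
  · simp only [regWeightDeriv]; push_cast; ring
  · simp only [regWeightDeriv, map_sub, map_mul, Complex.conj_ofReal, Complex.conj_conj]
    push_cast; ring

theorem continuous_normSq_add_rpow (hf : Differentiable ℂ f) (hε : 0 < ε) (m : ℝ) :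
    Continuous fun z => (‖f z‖ ^ 2 + ε) ^ m := by
  have := hf.continuous
  exact Continuous.rpow_const (by fun_prop) fun z => Or.inl (normSq_add_pos hε z).ne'

theorem continuous_regWeight (hf : Differentiable ℂ f) (hε : 0 < ε) :
    Continuous (regWeight f c ε) := by
  have := continuous_normSq_add_rpow hf hε c
  unfold regWeight; fun_prop

theorem continuous_deriv_of_differentiable (hf : Differentiable ℂ f) : Continuous (deriv f) :=
  (hf.contDiff (n := 1)).continuous_deriv le_rfl

theorem continuous_regWeightDeriv (hf : Differentiable ℂ f) (hε : 0 < ε) :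
    Continuous (regWeightDeriv f c ε) := by
  have h1 := continuous_normSq_add_rpow hf hε c
  have h2 := continuous_normSq_add_rpow hf hε (c - 1)
  have h3 := continuous_deriv_of_differentiable hf
  have h4 := hf.continuous
  unfold regWeightDeriv; fun_prop

theorem mem_ball_of_regWeight_pos (hε : 0 < ε) {z : ℂ} (hz : 0 < regWeight f c ε z) :
    z ∈ ball (0 : ℂ) 1 := by
  have h := pos_of_mul_pos_right hz (Real.rpow_nonneg (normSq_add_pos hε z).le c)
  rw [mem_ball_zero_iff]
  nlinarith [norm_nonneg z]

theorem isCompact_le_regWeight (hf : Differentiable ℂ f) (hε : 0 < ε) {t : ℝ} (ht : 0 < t) :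
    IsCompact {z | t ≤ regWeight f c ε z} :=
  isCompact_of_isClosed_isBounded (isClosed_le continuous_const (continuous_regWeight hf hε))
    (isBounded_ball.subset fun _ hz => mem_ball_of_regWeight_pos hε (ht.trans_le hz))

end RegWeight

theorem integral_wirtinger_eq_zero {ψ a b : ℂ → ℂ}
    (hψ : ∀ z, HasWirtingerAt ψ (a z) (b z) z)
    (ha : Continuous a) (hb : Continuous b) (hs : HasCompactSupport ψ) :
    ∫ z, a z = 0 := by
  have hid : ∀ z : ℂ, HasWirtingerAt (fun z => z) 1 0 z := fun z =>
    .of_hasDerivAt (hasDerivAt_id z)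
  have cψ : Continuous ψ := continuous_iff_continuousAt.2 fun z => (hψ z).continuousAt
  have h := integral_wirtinger_div_conj (ψ := fun z => ψ z * (starRingEnd ℂ) z)
    (fun z => (hψ z).mul (hid z).conj) (by fun_prop) (by fun_prop) hs.mul_right
  rw [map_zero, mul_zero, mul_zero] at h
  rw [← h]
  refine integral_congr_ae ?_
  have : ∀ᵐ x : ℂ, x ≠ 0 := by simp [ae_iff, measure_singleton]
  filter_upwards [this] with x hx
  have h3 : (starRingEnd ℂ) x ≠ 0 := (map_ne_zero (starRingEnd ℂ)).2 hx
  simp only [mul_zero, add_zero]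
  rw [mul_div_cancel_right₀ _ h3]

section Energy

variable {f : ℂ → ℂ} {c ε t : ℝ} {Ψ η : ℝ → ℝ}

theorem tsupport_comp_regWeight_subset (hf : Differentiable ℂ f) (hε : 0 < ε)
    (hΨt : ∀ x ≤ t, Ψ x = 0) :
    tsupport (fun z => Ψ (regWeight f c ε z)) ⊆ {z | t ≤ regWeight f c ε z} := by
  refine closure_minimal (fun z hz => ?_)
    (isClosed_le continuous_const (continuous_regWeight hf hε))
  by_contra h
  exact hz (hΨt _ (not_le.1 h).le)

theorem hasCompactSupport_comp_regWeight (hf : Differentiable ℂ f) (hε : 0 < ε) (ht : 0 < t)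
    (hΨt : ∀ x ≤ t, Ψ x = 0) : HasCompactSupport fun z => Ψ (regWeight f c ε z) :=
  (isCompact_le_regWeight hf hε ht).of_isClosed_subset (isClosed_tsupport _)
    (tsupport_comp_regWeight_subset hf hε hΨt)

theorem integral_energy_le (hf : Differentiable ℂ f) (hc : 0 ≤ c) (hε : 0 < ε) (ht : 0 < t)
    (hΨ : ∀ x, HasDerivAt Ψ (η x) x) (hη : Continuous η) (hΨt : ∀ x ≤ t, Ψ x = 0)
    (hΨ0 : ∀ x, 0 ≤ Ψ x) (hηt : ∀ x ≤ t, η x = 0) :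
    ∫ z, η (regWeight f c ε z) * ‖regWeightDeriv f c ε z‖ ^ 2 / regWeight f c ε z ≤
      ∫ z, Ψ (regWeight f c ε z) / (1 - ‖z‖ ^ 2) ^ 2 := by
  set v := regWeight f c ε with hv
  set a := regWeightDeriv f c ε with ha
  set K : ℂ → ℂ := fun z => (c : ℂ) * (f z * (starRingEnd ℂ) (deriv f z))
    * ((‖f z‖ ^ 2 + ε : ℝ) : ℂ)⁻¹ with hK
  set ω : ℂ → ℂ := fun z => (1 - z * (starRingEnd ℂ) z)⁻¹ with hω
  have cv : Continuous v := continuous_regWeight hf hε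
  have ca : Continuous a := continuous_regWeightDeriv hf hε
  have cf := hf.continuous
  have cf1 := continuous_deriv_of_differentiable hf
  have hf1 : Differentiable ℂ (deriv f) := fun z =>
    ((hf.analyticAt z).deriv).differentiableAt
  have cf2 := continuous_deriv_of_differentiable hf1
  have cΨ : Continuous Ψ := continuous_iff_continuousAt.2 fun x => (hΨ x).continuousAt
  have hP : ∀ z, ((‖f z‖ ^ 2 + ε : ℝ) : ℂ) ≠ 0 := fun z =>
    Complex.ofReal_ne_zero.2 (normSq_add_pos hε z).ne'
  have cP : Continuous fun z => ((‖f z‖ ^ 2 + ε : ℝ) : ℂ)⁻¹ :=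
    Continuous.inv₀ (by fun_prop) hP
  have cK : Continuous K := by fun_prop
  set φ : ℂ → ℂ := fun z => (Ψ (v z) : ℂ) with hφdef
  have hφ : ∀ z, HasWirtingerAt φ (η (v z) * a z) (η (v z) * (starRingEnd ℂ) (a z)) z :=
    fun z => (hasWirtingerAt_regWeight hf hε z).comp_real (hΨ _)
  have hsupp : ∀ {g : ℝ → ℝ}, (∀ x ≤ t, g x = 0) →
      tsupport (fun z => (g (v z) : ℂ)) ⊆ ball 0 1 := fun {g} hg => by
    have : (tsupport fun z => (g (v z) : ℂ)) = tsupport fun z => g (v z) := by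
      rw [tsupport, tsupport]; congr 1; ext z; simp
    rw [this]
    exact (tsupport_comp_regWeight_subset hf hε hg).trans
      fun z hz => mem_ball_of_regWeight_pos hε (ht.trans_le hz)
  have hφs : HasCompactSupport φ :=
    (hasCompactSupport_comp_regWeight hf hε ht hΨt).comp_left (g := fun x : ℝ => (x : ℂ))
      Complex.ofReal_zero
  have cω : ContinuousOn ω (ball 0 1) := continuousOn_inv_one_sub
  have cη1 : Continuous fun z => (η (v z) : ℂ) * ω z :=
    continuous_mul_of_tsupport_subset (by fun_prop) isOpen_ball (hsupp hηt) cω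
  have cΨ2 : Continuous fun z => φ z * ω z ^ 2 :=
    continuous_mul_of_tsupport_subset (by fun_prop) isOpen_ball (hsupp hΨt) (cω.pow 2)
  have cΨ1 : Continuous fun z => φ z * ω z :=
    continuous_mul_of_tsupport_subset (by fun_prop) isOpen_ball (hsupp hΨt) cω
  have hd := fun z => HasWirtingerAt.of_hasDerivAt (hf z).hasDerivAt
  have hd1 := fun z => HasWirtingerAt.of_hasDerivAt (hf1 z).hasDerivAt
  have hid : ∀ z : ℂ, HasWirtingerAt (fun z => z) 1 0 z := fun z =>
    .of_hasDerivAt (hasDerivAt_id z)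
  have hKW := fun z => (HasWirtingerAt.const (c := (c : ℂ)).mul ((hd z).mul (hd1 z).conj)).mul
    ((hasWirtingerAt_normSq_add (ε := ε) hf z).comp_hasDerivAt (hasDerivAt_inv (hP z)))
  have hne : ∀ z, t < v z → (1 - z * (starRingEnd ℂ) z) ≠ 0 := fun z hz => by
    rw [← one_sub_normSq_cast]
    exact_mod_cast (one_sub_normSq_pos (mem_ball_of_regWeight_pos hε (ht.trans hz))).ne'
  have hW : ∀ z, HasWirtingerAt (fun z => φ z * K z - φ z * ω z * z)
      (η (v z) * a z * K z + φ z * (c * ε * (deriv f z * (starRingEnd ℂ) (deriv f z))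
        * ((‖f z‖ ^ 2 + ε : ℝ) : ℂ)⁻¹ ^ 2) - (η (v z) * ω z * (a z * z) + φ z * ω z ^ 2))
      (η (v z) * (starRingEnd ℂ) (a z) * K z
        + φ z * (c * (f z * (starRingEnd ℂ) (deriv (deriv f) z)) * ((‖f z‖ ^ 2 + ε : ℝ) : ℂ)⁻¹
          - c * (f z * (starRingEnd ℂ) (deriv f z)) ^ 2 * ((‖f z‖ ^ 2 + ε : ℝ) : ℂ)⁻¹ ^ 2)
        - (η (v z) * ω z * ((starRingEnd ℂ) (a z) * z) + φ z * ω z ^ 2 * (z * z))) z := fun z => by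
    refine (((hφ z).mul (hKW z)).sub
      ((hasWirtingerAt_mul_inv_one_sub hφ (hsupp hΨt) z).mul (hid z))).congr_deriv ?_ ?_
    · have e1 : φ z * ω z = φ z * ω z ^ 2 * (1 - z * (starRingEnd ℂ) z) := by
        rcases le_or_gt (v z) t with h | h
        · simp [hφdef, hΨt _ h]
        · have := hne z h
          simp only [hω]; field_simp
      have e2 : f z * (starRingEnd ℂ) (f z) = ((‖f z‖ ^ 2 + ε : ℝ) : ℂ) - ε := by
        rw [Complex.mul_conj, Complex.normSq_eq_norm_sq]; push_cast; ring
      have e3 : ((‖f z‖ ^ 2 + ε : ℝ) : ℂ)⁻¹ =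
          ((‖f z‖ ^ 2 + ε : ℝ) : ℂ) * ((‖f z‖ ^ 2 + ε : ℝ) : ℂ)⁻¹ ^ 2 := by
        have := hP z
        field_simp
      have e4 : (((‖f z‖ ^ 2 + ε : ℝ) : ℂ) ^ 2)⁻¹ = ((‖f z‖ ^ 2 + ε : ℝ) : ℂ)⁻¹ ^ 2 :=
        (inv_pow _ _).symm
      rw [e4]
      simp only [map_zero]
      linear_combination -e1 - φ z * c * deriv f z * (starRingEnd ℂ) (deriv f z)
        * ((‖f z‖ ^ 2 + ε : ℝ) : ℂ)⁻¹ ^ 2 * e2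
        + φ z * c * deriv f z * (starRingEnd ℂ) (deriv f z) * e3
    · rw [← inv_pow]
      simp only [hK, hω]
      ring
  have hI := integral_wirtinger_eq_zero hW (by fun_prop) (by fun_prop)
    (hφs.mul_right.sub (hφs.mul_right.mul_right))
  have hre : ∀ z, η (v z) * a z * K z + φ z * (c * ε * (deriv f z * (starRingEnd ℂ) (deriv f z))
        * ((‖f z‖ ^ 2 + ε : ℝ) : ℂ)⁻¹ ^ 2) - (η (v z) * ω z * (a z * z) + φ z * ω z ^ 2) =
      ((η (v z) * ‖a z‖ ^ 2 / v z + Ψ (v z) * (c * ε * ‖deriv f z‖ ^ 2 / (‖f z‖ ^ 2 + ε) ^ 2)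
        - Ψ (v z) / (1 - ‖z‖ ^ 2) ^ 2 : ℝ) : ℂ) := fun z => by
    rcases le_or_gt (v z) t with h | h
    · simp [hφdef, hΨt _ h, hηt _ h]
    have h1 := hne z h
    have hv0 : (v z : ℂ) ≠ 0 := Complex.ofReal_ne_zero.2 (ht.trans h).ne'
    have key : (v z : ℂ) * (K z - ω z * z) = (starRingEnd ℂ) (a z) := by
      have := hP z
      simp only [hv, ha, regWeight, regWeightDeriv, hK, hω, map_sub, map_mul,
        Complex.conj_ofReal, Complex.conj_conj, Complex.ofReal_mul, one_sub_normSq_cast]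
      rw [Real.rpow_sub_one (normSq_add_pos hε z).ne']
      push_cast at this ⊢
      field_simp
      rw [map_one]
      ring
    have e5 : K z - ω z * z = (starRingEnd ℂ) (a z) / v z := by
      rw [← key]; field_simp
    have e6 : ((‖a z‖ ^ 2 : ℝ) : ℂ) = a z * (starRingEnd ℂ) (a z) := by
      rw [Complex.mul_conj, Complex.normSq_eq_norm_sq]
    have e7 : ((‖deriv f z‖ ^ 2 : ℝ) : ℂ) = deriv f z * (starRingEnd ℂ) (deriv f z) := by
      rw [Complex.mul_conj, Complex.normSq_eq_norm_sq]
    calc _ = η (v z) * a z * (K z - ω z * z)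
          + φ z * (c * ε * (deriv f z * (starRingEnd ℂ) (deriv f z))
          * ((‖f z‖ ^ 2 + ε : ℝ) : ℂ)⁻¹ ^ 2) - φ z * ω z ^ 2 := by ring
      _ = _ := by
        rw [e5, ← e7, hω]
        simp only [hφdef, ← one_sub_normSq_cast]
        rw [mul_div, mul_assoc, ← e6, inv_pow, inv_pow, ← div_eq_mul_inv, ← div_eq_mul_inv]
        norm_cast
  have hva : Continuous fun z => η (v z) * ‖a z‖ ^ 2 / v z := by
    refine continuous_of_tsupport fun z hz => ?_
    have : z ∈ {z | t ≤ v z} := by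
      refine tsupport_comp_regWeight_subset (Ψ := η) hf hε hηt ?_
      simp only [mul_div_assoc] at hz
      exact tsupport_mul_subset_left hz
    have h0 : v z ≠ 0 := (ht.trans_le this).ne'
    exact ContinuousAt.div (by fun_prop) (by fun_prop) h0
  have hηs : HasCompactSupport fun z => η (v z) := hasCompactSupport_comp_regWeight hf hε ht hηt
  have hΨs : HasCompactSupport fun z => Ψ (v z) := hasCompactSupport_comp_regWeight hf hε ht hΨt
  have i1 : Integrable fun z => η (v z) * ‖a z‖ ^ 2 / v z := by
    refine hva.integrable_of_hasCompactSupport ?_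
    simp only [mul_div_assoc]
    exact hηs.mul_right
  have i2 : Integrable fun z =>
      Ψ (v z) * (c * ε * ‖deriv f z‖ ^ 2 / (‖f z‖ ^ 2 + ε) ^ 2) := by
    refine Continuous.integrable_of_hasCompactSupport ?_ hΨs.mul_right
    have : Continuous fun z => c * ε * ‖deriv f z‖ ^ 2 / (‖f z‖ ^ 2 + ε) ^ 2 :=
      Continuous.div (by fun_prop) (by fun_prop) fun z => (pow_pos (normSq_add_pos hε z) 2).ne'
    fun_prop
  have i3 : Integrable fun z => Ψ (v z) / (1 - ‖z‖ ^ 2) ^ 2 := by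
    refine Continuous.integrable_of_hasCompactSupport ?_ ?_
    · refine (Complex.continuous_re.comp cΨ2).congr fun z => ?_
      simp only [Function.comp, hφdef, hω, ← one_sub_normSq_cast]
      rw [inv_pow, div_eq_mul_inv]
      norm_cast
    · simp only [div_eq_mul_inv]
      exact hΨs.mul_right
  simp only [hre] at hI
  have i12 : Integrable fun z => η (v z) * ‖a z‖ ^ 2 / v z
      + Ψ (v z) * (c * ε * ‖deriv f z‖ ^ 2 / (‖f z‖ ^ 2 + ε) ^ 2) := i1.add i2
  rw [integral_complex_ofReal, Complex.ofReal_eq_zero, integral_sub i12 i3,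
    integral_add i1 i2] at hI
  have : 0 ≤ ∫ z, Ψ (v z) * (c * ε * ‖deriv f z‖ ^ 2 / (‖f z‖ ^ 2 + ε) ^ 2) :=
    integral_nonneg fun z => mul_nonneg (hΨ0 _) (by positivity)
  linarith

end Energy

section LevelSets

variable {f : ℂ → ℂ} {c ε t t' : ℝ} {Ψ η : ℝ → ℝ}

theorem continuous_comp_regWeight_div {g : ℝ → ℝ} (hf : Differentiable ℂ f) (hε : 0 < ε)
    (ht : 0 < t) (hg : Continuous g) (hgt : ∀ x ≤ t, g x = 0) (k : ℕ) :
    Continuous fun z => g (regWeight f c ε z) / |1 - ‖z‖ ^ 2| ^ k := by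
  have cv : Continuous (regWeight f c ε) := continuous_regWeight hf hε
  refine continuous_of_tsupport fun z hz => ?_
  have : z ∈ {z | t ≤ regWeight f c ε z} := by
    refine tsupport_comp_regWeight_subset (Ψ := g) hf hε hgt ?_
    simp only [div_eq_mul_inv] at hz
    exact tsupport_mul_subset_left hz
  have h0 := one_sub_normSq_pos (mem_ball_of_regWeight_pos hε (ht.trans_le this))
  exact ContinuousAt.div (by fun_prop) (by fun_prop) (pow_ne_zero _ (abs_ne_zero.2 h0.ne'))

theorem regWeight_level_integral_le (hf : Differentiable ℂ f) (hc : 0 ≤ c) (hε : 0 < ε)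
    (ht : 0 < t) (hΨ : ∀ x, HasDerivAt Ψ (η x) x) (hη : Continuous η)
    (hΨt : ∀ x ≤ t, Ψ x = 0) (hΨ0 : ∀ x, 0 ≤ Ψ x) (hηt : ∀ x ≤ t, η x = 0)
    (hηt' : ∀ x, t' ≤ x → η x = 0) (hη0 : ∀ x, 0 ≤ η x) :
    Real.pi * (∫ z, Ψ (regWeight f c ε z) ^ 2 / (1 - ‖z‖ ^ 2) ^ 2)
        + (∫ z, Ψ (regWeight f c ε z) / (1 - ‖z‖ ^ 2) ^ 2) ^ 2 ≤
      t' * (∫ z, η (regWeight f c ε z) / (1 - ‖z‖ ^ 2) ^ 2)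
        * ∫ z, Ψ (regWeight f c ε z) / (1 - ‖z‖ ^ 2) ^ 2 := by
  set v := regWeight f c ε with hv
  set a := regWeightDeriv f c ε with ha
  have cv : Continuous v := continuous_regWeight hf hε
  have ca : Continuous a := continuous_regWeightDeriv hf hε
  have hηs : HasCompactSupport fun z => η (v z) := hasCompactSupport_comp_regWeight hf hε ht hηt
  have hiso := hyperbolic_isoperimetric (φ := fun z => Ψ (v z))
    (a := fun z => η (v z) * a z) (b := fun z => η (v z) * (starRingEnd ℂ) (a z))
    (fun z => (hasWirtingerAt_regWeight hf hε z).comp_real (hΨ _)) (by fun_prop) (by fun_prop)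
    (hasCompactSupport_comp_regWeight hf hε ht hΨt)
    ((tsupport_comp_regWeight_subset hf hε hΨt).trans
      fun z hz => mem_ball_of_regWeight_pos hε (ht.trans_le hz))
  refine hiso.trans ?_
  have hen := integral_energy_le (c := c) hf hc hε ht hΨ hη hΨt hΨ0 hηt
  rw [← hv, ← ha] at hen
  set E := ∫ z, η (v z) * ‖a z‖ ^ 2 / v z
  set X := ∫ z, ‖(η (v z) : ℂ) * a z‖ / |1 - ‖z‖ ^ 2|
  set D := ∫ z, η (v z) / (1 - ‖z‖ ^ 2) ^ 2
  set B := ∫ z, η (v z) * v z / (1 - ‖z‖ ^ 2) ^ 2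
  have c1 : Continuous fun z => η (v z) * v z / (1 - ‖z‖ ^ 2) ^ 2 := by
    simpa using continuous_comp_regWeight_div (c := c) (g := fun x => η x * x) hf hε ht
      (by fun_prop) (fun x hx => by simp [hηt x hx]) 2
  have c2 : Continuous fun z => η (v z) / (1 - ‖z‖ ^ 2) ^ 2 := by
    simpa using continuous_comp_regWeight_div (c := c) hf hε ht hη hηt 2
  have c3 : Continuous fun z => ‖(η (v z) : ℂ) * a z‖ / |1 - ‖z‖ ^ 2| := by
    have h := (continuous_comp_regWeight_div (c := c) hf hε ht hη hηt 1).mul ca.norm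
    refine h.congr fun z => ?_
    rw [norm_mul, Complex.norm_real, Real.norm_of_nonneg (hη0 _)]
    simp only [Pi.mul_apply, pow_one, ← hv]
    ring
  have c4 : Continuous fun z => η (v z) * ‖a z‖ ^ 2 / v z := by
    refine continuous_of_tsupport fun z hz => ?_
    have : z ∈ {z | t ≤ v z} := by
      refine tsupport_comp_regWeight_subset (Ψ := η) hf hε hηt ?_
      simp only [mul_div_assoc] at hz
      exact tsupport_mul_subset_left hz
    have h0 : v z ≠ 0 := (ht.trans_le this).ne'
    exact ContinuousAt.div (by fun_prop) (by fun_prop) h0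
  have i1 := c1.integrable_of_hasCompactSupport (by
    simp only [mul_div_assoc]; exact hηs.mul_right) (μ := volume)
  have i2 := c2.integrable_of_hasCompactSupport (by
    simp only [div_eq_mul_inv]; exact hηs.mul_right) (μ := volume)
  have i3 := c3.integrable_of_hasCompactSupport (by
    simp only [norm_mul, Complex.norm_real, mul_div_assoc]
    exact hηs.norm.mul_right) (μ := volume)
  have i4 := c4.integrable_of_hasCompactSupport (by
    simp only [mul_div_assoc]; exact hηs.mul_right) (μ := volume)
  have hBD : B ≤ t' * D := by
    rw [← integral_const_mul]
    refine integral_mono i1 (i2.const_mul t') fun z => ?_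
    simp only
    rw [← mul_div_assoc, mul_comm t']
    gcongr ?_ / _
    rcases le_or_gt t' (v z) with h | h
    · simp [hηt' _ h]
    · exact mul_le_mul_of_nonneg_left h.le (hη0 _)
  have hB0 : 0 ≤ E := integral_nonneg fun z => by
    simp only
    rcases le_or_gt (v z) t with h | h
    · simp [hηt _ h]
    · have := ht.trans h
      have := hη0 (v z)
      positivity
  have hCS : X ^ 2 ≤ B * E := by
    have hq : ∀ s : ℝ, 0 ≤ B * (s * s) + (-2 * X) * s + E := fun s => by
      have : B * (s * s) + (-2 * X) * s + E = ∫ z,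
          (η (v z) * v z / (1 - ‖z‖ ^ 2) ^ 2 * (s * s)
          + (‖(η (v z) : ℂ) * a z‖ / |1 - ‖z‖ ^ 2|) * (-2 * s) + η (v z) * ‖a z‖ ^ 2 / v z) := by
        have i13 : Integrable fun z => η (v z) * v z / (1 - ‖z‖ ^ 2) ^ 2 * (s * s)
          + (‖(η (v z) : ℂ) * a z‖ / |1 - ‖z‖ ^ 2|) * (-2 * s) :=
          (i1.mul_const _).add (i3.mul_const _)
        rw [integral_add i13 i4, integral_add (i1.mul_const _) (i3.mul_const _),
          integral_mul_const, integral_mul_const]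
        ring
      rw [this]
      refine integral_nonneg fun z => ?_
      simp only [Pi.zero_apply]
      rcases le_or_gt (v z) t with h | h
      · simp [hηt _ h]
      · have h0 := ht.trans h
        have h1 := one_sub_normSq_pos (mem_ball_of_regWeight_pos hε h0)
        rw [norm_mul, Complex.norm_real, Real.norm_of_nonneg (hη0 _), abs_of_pos h1]
        have : η (v z) * v z / (1 - ‖z‖ ^ 2) ^ 2 * (s * s)
            + η (v z) * ‖a z‖ / (1 - ‖z‖ ^ 2) * (-2 * s) + η (v z) * ‖a z‖ ^ 2 / v z =
            η (v z) * v z * (s / (1 - ‖z‖ ^ 2) - ‖a z‖ / v z) ^ 2 := by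
          field_simp
          ring
        rw [this]
        have := hη0 (v z)
        positivity
    have := discrim_le_zero hq
    rw [discrim] at this
    nlinarith
  calc X ^ 2 ≤ B * E := hCS
    _ ≤ (t' * D) * E := by gcongr
    _ ≤ _ := by
      have hB : 0 ≤ B := integral_nonneg fun z => by
        simp only
        rcases le_or_gt (v z) t with h | h
        · simp [hηt _ h]
        · have := ht.trans h
          have := hη0 (v z)
          positivity
      gcongr
      exact hB.trans hBD

/-- The measure `(1-|z|²)⁻² dA(z)` on the unit disk. -/
noncomputable def hypMeasure : Measure ℂ :=
  ((volume : Measure ℂ).restrict (ball (0 : ℂ) 1)).withDensity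
    fun z => ENNReal.ofReal (1 / (Real.pi * (1 - ‖z‖ ^ 2) ^ 2))

theorem integral_div_eq_integral_hypMeasure {g : ℂ → ℝ} (hg : ∀ z ∉ ball (0 : ℂ) 1, g z = 0) :
    ∫ z, g z / (1 - ‖z‖ ^ 2) ^ 2 = Real.pi * ∫ z, g z ∂hypMeasure := by
  rw [hypMeasure, integral_withDensity_eq_integral_toReal_smul (by fun_prop) (by simp),
    ← integral_const_mul, setIntegral_eq_integral_of_forall_compl_eq_zero]
  · refine integral_congr_ae (Filter.Eventually.of_forall fun z => ?_)
    simp only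
    rw [ENNReal.toReal_ofReal (by positivity), smul_eq_mul, ← mul_assoc, mul_one_div,
      div_mul_cancel_left₀ Real.pi_ne_zero, div_eq_inv_mul]
  · intro z hz
    simp [hg z hz]

theorem hypMeasure_lt_top_of_isCompact {K : Set ℂ} (hK : IsCompact K) (hKb : K ⊆ ball 0 1) :
    hypMeasure K < ⊤ := by
  rw [hypMeasure, withDensity_apply _ hK.measurableSet, Measure.restrict_restrict hK.measurableSet,
    Set.inter_eq_left.2 hKb]
  refine IntegrableOn.setLIntegral_lt_top (ContinuousOn.integrableOn_compact hK ?_)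
  refine ContinuousOn.div (by fun_prop) (by fun_prop) fun z hz => ?_
  have := one_sub_normSq_pos (hKb hz)
  have := Real.pi_pos
  positivity

theorem hypMeasure_regWeight_lt_top (hf : Differentiable ℂ f) (hε : 0 < ε) (ht : 0 < t) :
    hypMeasure {z | t < regWeight f c ε z} < ⊤ :=
  (measure_mono (t := {z | t ≤ regWeight f c ε z}) fun _ (hz : t < _) => hz.le).trans_lt
    (hypMeasure_lt_top_of_isCompact (isCompact_le_regWeight hf hε ht)
      fun _ (hz : t ≤ _) => mem_ball_of_regWeight_pos hε (ht.trans_le hz))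

theorem exists_plateau {t t' J : ℝ} (hJ : J < t' - t) (hJ0 : 0 < J) :
    ∃ η : ℝ → ℝ, Continuous η ∧ (∀ x ≤ t, η x = 0) ∧ (∀ x, t' ≤ x → η x = 0) ∧
      (∀ x, 0 ≤ η x) ∧ (∀ x, η x ≤ 1) ∧ J ≤ ∫ x in t..t', η x := by
  set δ := (t' - t - J) / 2 with hδ
  obtain ⟨η, h0, h1, h01⟩ := exists_continuous_zero_one_of_isClosed (s := (Set.Ioo t t')ᶜ)
    (t := Set.Icc (t + δ) (t' - δ)) isOpen_Ioo.isClosed_compl isClosed_Icc (by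
      rw [Set.disjoint_compl_left_iff_subset]
      exact Set.Icc_subset_Ioo (by linarith) (by linarith))
  refine ⟨η, η.continuous, fun x hx => h0 fun h => hx.not_gt h.1,
    fun x hx => h0 fun h => hx.not_gt h.2, fun x => (h01 x).1, fun x => (h01 x).2, ?_⟩
  calc J = ∫ x in (t + δ)..(t' - δ), (1 : ℝ) := by simp [hδ]; ring
    _ = ∫ x in (t + δ)..(t' - δ), η x := by
      refine intervalIntegral.integral_congr fun x hx => ?_
      rw [Set.uIcc_of_le (by linarith)] at hx
      exact (h1 hx).symm
    _ ≤ _ := intervalIntegral.integral_mono_interval (by linarith) (by linarith) (by linarith)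
      (Filter.Eventually.of_forall fun x => (h01 x).1) (η.continuous.intervalIntegrable _ _)

/-- Discrete differential inequality for the distribution function of `regWeight`. -/
theorem hypMeasure_regWeight_level (hf : Differentiable ℂ f) (hc : 0 ≤ c) (hε : 0 < ε)
    (ht : 0 < t) (htt' : t < t') :
    (t' - t) * (hypMeasure.real {z | t' < regWeight f c ε z}
        * (1 + hypMeasure.real {z | t' < regWeight f c ε z})) ≤
      t' * (hypMeasure.real {z | t < regWeight f c ε z}
        - hypMeasure.real {z | t' < regWeight f c ε z})
        * hypMeasure.real {z | t < regWeight f c ε z} := by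
  set v := regWeight f c ε with hv
  have cv : Continuous v := continuous_regWeight hf hε
  have hm : ∀ s, MeasurableSet {z | s < v z} := fun s =>
    (isOpen_lt continuous_const cv).measurableSet
  have hfin : hypMeasure {z | t < v z} < ⊤ := hypMeasure_regWeight_lt_top hf hε ht
  have hfin' : hypMeasure {z | t' < v z} < ⊤ := hypMeasure_regWeight_lt_top hf hε (ht.trans htt')
  set A := hypMeasure.real {z | t < v z}
  set A' := hypMeasure.real {z | t' < v z}
  have hA' : 0 ≤ A' := measureReal_nonneg
  have hball : ∀ {g : ℝ → ℝ}, (∀ x ≤ t, g x = 0) → ∀ z ∉ ball (0 : ℂ) 1, g (v z) = 0 :=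
    fun {g} hg z hz => hg _ (by
      by_contra h
      exact hz (mem_ball_of_regWeight_pos hε (ht.trans (not_le.1 h))))
  have key : ∀ J, 0 < J → J < t' - t → J * (A' * (1 + A')) ≤ t' * (A - A') * A := by
    intro J₀ hJ0 hJ
    obtain ⟨η, cη, hηt, hηt', hη0, hη1, hJη⟩ := exists_plateau hJ hJ0
    set J := ∫ x in t..t', η x
    set Ψ : ℝ → ℝ := fun x => ∫ y in t..x, η y with hΨdef
    have hΨ : ∀ x, HasDerivAt Ψ (η x) x := fun x => cη.integral_hasStrictDerivAt t x |>.hasDerivAt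
    have hΨt : ∀ x ≤ t, Ψ x = 0 := fun x hx => by
      rw [hΨdef]
      refine intervalIntegral.integral_zero_ae (Filter.Eventually.of_forall fun y hy => ?_)
      rw [Set.uIoc_of_ge hx] at hy
      exact hηt y hy.2
    have hmono : Monotone Ψ := monotone_of_hasDerivAt_nonneg hΨ hη0
    have hΨ0 : ∀ x, 0 ≤ Ψ x := fun x => by
      rcases le_total x t with h | h
      · exact (hΨt x h).ge
      · rw [← hΨt t le_rfl]; exact hmono h
    have hΨJ : ∀ x, t' ≤ x → Ψ x = J := fun x hx => by
      have : Ψ x = J + ∫ y in t'..x, η y :=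
        (intervalIntegral.integral_add_adjacent_intervals (cη.intervalIntegrable _ _)
          (cη.intervalIntegrable _ _)).symm
      rw [this, add_eq_left]
      refine intervalIntegral.integral_zero_ae (Filter.Eventually.of_forall fun y hy => ?_)
      rw [Set.uIoc_of_le hx] at hy
      exact hηt' y hy.1.le
    have hΨle : ∀ x, Ψ x ≤ J := fun x => by
      rcases le_total x t' with h | h
      · rw [← hΨJ t' le_rfl]; exact hmono h
      · exact (hΨJ x h).le
    have cΨ : Continuous Ψ := continuous_iff_continuousAt.2 fun x => (hΨ x).continuousAt
    have h := regWeight_level_integral_le (c := c) hf hc hε ht hΨ cη hΨt hΨ0 hηt hηt' hη0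
    rw [← hv, integral_div_eq_integral_hypMeasure (hball hΨt),
      integral_div_eq_integral_hypMeasure (hball hηt),
      integral_div_eq_integral_hypMeasure (g := fun z => Ψ (v z) ^ 2)
        (hball (g := fun x => Ψ x ^ 2) fun x hx => by simp [hΨt x hx])] at h
    have ind : Integrable ({z | t < v z}.indicator fun _ => (1 : ℝ)) hypMeasure :=
      (integrable_indicator_iff (hm t)).2 (integrableOn_const hfin.ne)
    have ind' : Integrable ({z | t' < v z}.indicator fun _ => (1 : ℝ)) hypMeasure :=
      (integrable_indicator_iff (hm t')).2 (integrableOn_const hfin'.ne)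
    have eA : ∫ z, {z | t < v z}.indicator (fun _ => (1 : ℝ)) z ∂hypMeasure = A :=
      integral_indicator_one (hm t)
    have eA' : ∫ z, {z | t' < v z}.indicator (fun _ => (1 : ℝ)) z ∂hypMeasure = A' :=
      integral_indicator_one (hm t')
    have hinteg : ∀ {g : ℝ → ℝ} {C : ℝ}, Continuous g → (∀ x ≤ t, g x = 0) → (∀ x, 0 ≤ g x) →
        (∀ x, g x ≤ C) → Integrable (fun z => g (v z)) hypMeasure := by
      intro g C cg hg hg0 hgC
      refine (ind.const_mul C).mono' (by fun_prop) (Filter.Eventually.of_forall fun z => ?_)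
      rcases le_or_gt (v z) t with h | h
      · simp [hg _ h, h.not_gt]
      · simp [h, abs_of_nonneg (hg0 _), hgC]
    have b1 : J ^ 2 * A' ≤ ∫ z, Ψ (v z) ^ 2 ∂hypMeasure := by
      rw [← eA', ← integral_const_mul]
      refine integral_mono (ind'.const_mul _) (hinteg (g := fun x => Ψ x ^ 2) (C := J ^ 2)
        (by fun_prop) (fun x hx => by simp [hΨt x hx]) (fun x => sq_nonneg _)
        fun x => pow_le_pow_left₀ (hΨ0 x) (hΨle x) 2) fun z => ?_
      by_cases hz : t' < v z
      · simp [hz, hΨJ _ hz.le]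
      · simp [hz]; positivity
    have b2 : J * A' ≤ ∫ z, Ψ (v z) ∂hypMeasure := by
      rw [← eA', ← integral_const_mul]
      refine integral_mono (ind'.const_mul _) (hinteg cΨ hΨt hΨ0 hΨle) fun z => ?_
      by_cases hz : t' < v z
      · simp [hz, hΨJ _ hz.le]
      · simp [hz, hΨ0]
    have b3 : ∫ z, Ψ (v z) ∂hypMeasure ≤ J * A := by
      rw [← eA, ← integral_const_mul]
      refine integral_mono (hinteg cΨ hΨt hΨ0 hΨle) (ind.const_mul _) fun z => ?_
      by_cases hz : t < v z
      · simp [hz, hΨle]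
      · simp [hz, hΨt _ (not_lt.1 hz)]
    have b4 : ∫ z, η (v z) ∂hypMeasure ≤ A - A' := by
      rw [← eA, ← eA', ← integral_sub ind ind']
      refine integral_mono (hinteg cη hηt hη0 hη1) (ind.sub ind') fun z => ?_
      by_cases hz : t < v z
      · by_cases hz' : t' < v z
        · simp [hz, hz', hηt' _ hz'.le]
        · simp [hz, hz', hη1]
      · have hz' : ¬ t' < v z := fun h => hz (htt'.trans h)
        simp [hz, hz', hηt _ (not_lt.1 hz)]
    have b0 : 0 ≤ ∫ z, η (v z) ∂hypMeasure := integral_nonneg fun z => hη0 _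
    set I1 := ∫ z, Ψ (v z) ^ 2 ∂hypMeasure
    set I2 := ∫ z, Ψ (v z) ∂hypMeasure
    set I3 := ∫ z, η (v z) ∂hypMeasure
    have hpi : 0 < Real.pi ^ 2 := by positivity
    have h5 : I1 + I2 ^ 2 ≤ t' * I3 * I2 := by
      refine le_of_mul_le_mul_left ?_ hpi
      linarith
    have hJp : 0 < J := hJ0.trans_le hJη
    have ht' := ht.trans htt'
    have h6 : J * (J * (A' * (1 + A'))) ≤ J * (t' * (A - A') * A) := by
      calc _ = J ^ 2 * A' + (J * A') ^ 2 := by ring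
        _ ≤ I1 + I2 ^ 2 := by gcongr
        _ ≤ t' * I3 * I2 := h5
        _ ≤ t' * (A - A') * (J * A) := by
          gcongr
          · exact (by positivity : 0 ≤ J * A').trans b2
          · exact mul_nonneg ht'.le (b0.trans b4)
        _ = _ := by ring
    exact (mul_le_mul_of_nonneg_right hJη (by positivity)).trans (le_of_mul_le_mul_left h6 hJp)
  have hlim : Filter.Tendsto (fun J => J * (A' * (1 + A'))) (nhdsWithin (t' - t) (Set.Iio (t' - t)))
      (nhds ((t' - t) * (A' * (1 + A')))) :=
    ((continuous_id.mul continuous_const).tendsto _).mono_left nhdsWithin_le_nhds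
  refine le_of_tendsto hlim ?_
  have : Set.Ioo 0 (t' - t) ∈ nhdsWithin (t' - t) (Set.Iio (t' - t)) :=
    Ioo_mem_nhdsLT (by linarith)
  filter_upwards [this] with J hJ
  exact key J hJ.1 hJ.2

end LevelSets

/-- A decreasing function satisfying the discrete differential inequality
`(t' - t) A(t') (1 + A(t')) ≤ t' (A(t) - A(t')) A(t)` is such that `t (1 + A(t))` decreases. -/
theorem mul_one_add_le_of_level {A : ℝ → ℝ} (hA : ∀ ⦃t t'⦄, 0 < t → t ≤ t' → A t' ≤ A t)
    (hlev : ∀ t t', 0 < t → t < t' →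
      (t' - t) * (A t' * (1 + A t')) ≤ t' * (A t - A t') * A t)
    {t T : ℝ} (ht : 0 < t) (htT : t < T) (hT : 0 < A T) : T * (1 + A T) ≤ t * (1 + A t) := by
  set a := A T with ha
  set M := 1 + A t with hM
  have haM : a ≤ M := by have := hA ht htT.le; linarith
  have hstep : ∀ u s, 0 < u → t ≤ s → s * Real.exp u ≤ T →
      (1 + A (s * Real.exp u)) * (1 + u * a / (a + u * (a + M))) ≤ 1 + A s := by
    intro u s hu hts hsT
    have hs : 0 < s := ht.trans_le hts
    have he : 1 + u ≤ Real.exp u := by linarith [Real.add_one_le_exp u]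
    have hs' : 0 < s * Real.exp u := by positivity
    set s' := s * Real.exp u with hs'def
    have hlt : s < s' := by rw [hs'def]; nlinarith
    have hA' : a ≤ A s' := hA hs' hsT
    have hA'M : 1 + A s' ≤ M := by have := hA ht (hts.trans hlt.le); linarith
    have hAs : A s' ≤ A s := hA hs hlt.le
    have h := hlev s s' hs hlt
    set y := u * a / (a + u * (a + M)) with hy
    have hden : 0 < a + u * (a + M) := by have : 0 < M := hT.trans_le haM; positivity
    have hy0 : 0 < y := by positivity
    have hyden : y * (a + u * (a + M)) = u * a := by rw [hy]; field_simp
    by_contra! hcon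
    have hd : A s - A s' < y * (1 + A s') := by linarith
    have hx : u * s' ≤ (1 + u) * (s' - s) := by
      rw [hs'def]
      nlinarith
    have hA'0 : 0 < A s' := hT.trans_le hA'
    have hMp : 0 < M := hT.trans_le haM
    have hyu : y * (1 + u) ≤ u := by
      have : y * (1 + u) * a ≤ u * a := by nlinarith [mul_pos hy0 (mul_pos hu hMp)]
      exact le_of_mul_le_mul_right this hT
    have hgoal : (1 + u) * (y * (A s' + y * M)) ≤ u * A s' := by
      have h1 : (1 + u) * (y * (A s' + y * M)) ≤ y * (A s' * (1 + u) + u * M) := by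
        nlinarith [mul_pos hy0 hMp]
      refine h1.trans (le_of_mul_le_mul_right ?_ hden)
      calc y * (A s' * (1 + u) + u * M) * (a + u * (a + M))
          = (y * (a + u * (a + M))) * (A s' * (1 + u) + u * M) := by ring
        _ = u * a * (A s' * (1 + u) + u * M) := by rw [hyden]
        _ ≤ u * A s' * (a + u * (a + M)) := by
          nlinarith [mul_le_mul_of_nonneg_left hA' (mul_pos (mul_pos hu hu) hMp).le]
    have hstrict : (A s - A s') * A s < y * (1 + A s') * (A s' + y * M) := by
      have e : A s < A s' + y * M := by nlinarith
      have : 0 < A s := hA'0.trans_le hAs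
      calc (A s - A s') * A s ≤ (y * (1 + A s')) * A s := by gcongr
        _ < _ := by gcongr
    have hA'1 : 0 < A s' * (1 + A s') := by positivity
    have := calc u * s' * (A s' * (1 + A s'))
        ≤ (1 + u) * (s' - s) * (A s' * (1 + A s')) := by gcongr
      _ = (1 + u) * ((s' - s) * (A s' * (1 + A s'))) := by ring
      _ ≤ (1 + u) * (s' * (A s - A s') * A s) := by gcongr
      _ = (1 + u) * s' * ((A s - A s') * A s) := by ring
      _ < (1 + u) * s' * (y * (1 + A s') * (A s' + y * M)) := by gcongr
      _ = ((1 + u) * (y * (A s' + y * M))) * (s' * (1 + A s')) := by ring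
      _ ≤ u * A s' * (s' * (1 + A s')) := by gcongr
      _ = u * s' * (A s' * (1 + A s')) := by ring
    exact lt_irrefl _ this
  set L := Real.log (T / t) with hL
  have hTt : 0 < T / t := div_pos (ht.trans htT) ht
  have hL0 : 0 < L := Real.log_pos ((one_lt_div ht).2 htT)
  have hiter : ∀ N : ℕ, 0 < N →
      (1 + a) * (1 + L / N * a / (a + L / N * (a + M))) ^ N ≤ M := by
    intro N hN
    have hN' : (0 : ℝ) < N := by exact_mod_cast hN
    have hu : 0 < L / N := by positivity
    have hend : t * Real.exp (N * (L / N)) = T := by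
      rw [mul_div_cancel₀ _ hN'.ne', hL, Real.exp_log hTt]
      field_simp
    have hind : ∀ k : ℕ, k ≤ N → (1 + A (t * Real.exp (k * (L / N))))
        * (1 + L / N * a / (a + L / N * (a + M))) ^ k ≤ M := by
      intro k
      induction k with
      | zero => intro; simp [hM]
      | succ k ih =>
        intro hk
        have hs := hstep (L / N) (t * Real.exp (k * (L / N))) hu
          (le_mul_of_one_le_right ht.le (Real.one_le_exp (by positivity))) (by
            rw [mul_assoc, ← Real.exp_add, ← hend]
            gcongr
            have : (k : ℝ) + 1 ≤ N := by exact_mod_cast hk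
            nlinarith)
        rw [mul_assoc, ← Real.exp_add] at hs
        refine le_trans ?_ (ih (by omega))
        rw [pow_succ', ← mul_assoc]
        have hMp : 0 < M := hT.trans_le haM
        have : 0 < 1 + L / N * a / (a + L / N * (a + M)) := by positivity
        gcongr
        rwa [Nat.cast_succ, add_one_mul]
    have := hind N le_rfl
    rwa [hend] at this
  have hlim : Filter.Tendsto (fun N : ℕ => (1 + L / N * a / (a + L / N * (a + M))) ^ N)
      Filter.atTop (nhds (Real.exp L)) := by
    refine Real.tendsto_one_add_pow_exp_of_tendsto ?_
    have h1 : Filter.Tendsto (fun N : ℕ => L * a / (a + L / N * (a + M))) Filter.atTop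
        (nhds (L * a / (a + 0 * (a + M)))) := by
      refine Filter.Tendsto.div tendsto_const_nhds (tendsto_const_nhds.add
        ((tendsto_const_div_atTop_nhds_zero_nat L).mul_const _)) (by simpa using hT.ne')
    rw [zero_mul, add_zero, mul_div_cancel_right₀ _ hT.ne'] at h1
    refine h1.congr' ?_
    filter_upwards [Filter.eventually_gt_atTop 0] with N hN
    have hN' : (N : ℝ) ≠ 0 := by exact_mod_cast hN.ne'
    rw [← mul_div_assoc, ← mul_assoc, mul_div_cancel₀ _ hN']
  have hfinal : (1 + a) * Real.exp L ≤ M := by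
    refine le_of_tendsto (hlim.const_mul (1 + a)) ?_
    filter_upwards [Filter.eventually_gt_atTop 0] with N hN using hiter N hN
  rw [hL, Real.exp_log hTt, ← mul_div_assoc, div_le_iff₀ ht] at hfinal
  linarith

theorem regWeight_mul_one_add_le {f : ℂ → ℂ} {c ε t t' : ℝ} (hf : Differentiable ℂ f)
    (hc : 0 ≤ c) (hε : 0 < ε) (ht : 0 < t) (htt' : t < t')
    (hpos : 0 < hypMeasure.real {z | t' < regWeight f c ε z}) :
    t' * (1 + hypMeasure.real {z | t' < regWeight f c ε z}) ≤
      t * (1 + hypMeasure.real {z | t < regWeight f c ε z}) :=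
  mul_one_add_le_of_level (A := fun t => hypMeasure.real {z | t < regWeight f c ε z})
    (fun _ _ h0 h => measureReal_mono (fun _ hz => h.trans_lt hz)
      (hypMeasure_regWeight_lt_top hf hε h0).ne)
    (fun _ _ h0 h => hypMeasure_regWeight_level hf hc hε h0 h) ht htt' hpos

theorem rpow_sub_one_eq_mul {τ a b : ℝ} (hτ : 0 < τ) : τ ^ (b - 1) = τ ^ (a - 1) * τ ^ (b - a) := by
  rw [← Real.rpow_add hτ]; congr 1; ring

/-- The moments of the extremal distribution function `(c/τ - 1)₊`. -/
theorem integral_extremal_mul_rpow {c s : ℝ} (hc : 0 < c) (hs : 1 < s) :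
    IntegrableOn (fun τ => (Set.Ioc 0 c).indicator (fun τ => c / τ - 1) τ * τ ^ (s - 1))
      (Set.Ioi 0) ∧
    ∫ τ in Set.Ioi 0, (Set.Ioc 0 c).indicator (fun τ => c / τ - 1) τ * τ ^ (s - 1) =
      c ^ s / (s * (s - 1)) := by
  have e : (fun τ => (Set.Ioc 0 c).indicator (fun τ => c / τ - 1) τ * τ ^ (s - 1)) =
      (Set.Ioc 0 c).indicator fun τ => c * τ ^ (s - 2) - τ ^ (s - 1) := by
    ext τ
    by_cases h : τ ∈ Set.Ioc 0 c
    · rw [Set.indicator_of_mem h, Set.indicator_of_mem h,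
        show s - 1 = (s - 2) + 1 by ring, Real.rpow_add_one h.1.ne']
      have := h.1.ne'
      field_simp
    · simp [h]
  have hi : IntervalIntegrable (fun τ : ℝ => c * τ ^ (s - 2)) volume 0 c :=
    (intervalIntegral.intervalIntegrable_rpow' (by linarith)).const_mul c
  have hi' : IntervalIntegrable (fun τ : ℝ => τ ^ (s - 1)) volume 0 c :=
    intervalIntegral.intervalIntegrable_rpow' (by linarith)
  constructor
  · rw [e]
    refine Integrable.integrableOn ((integrable_indicator_iff measurableSet_Ioc).2 ?_)
    exact (intervalIntegrable_iff_integrableOn_Ioc_of_le hc.le).1 (hi.sub hi')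
  · rw [e, setIntegral_indicator measurableSet_Ioc,
      Set.inter_eq_right.2 fun x hx => hx.1, ← intervalIntegral.integral_of_le hc.le,
      intervalIntegral.integral_sub hi hi', intervalIntegral.integral_const_mul,
      integral_rpow (Or.inl (by linarith)), integral_rpow (Or.inl (by linarith)),
      Real.zero_rpow (by linarith), Real.zero_rpow (by linarith)]
    have h1 : s - 1 ≠ 0 := by linarith
    have h2 : s ≠ 0 := by linarith
    rw [show s - 2 + 1 = s - 1 by ring, show s - 1 + 1 = s by ring, Real.rpow_sub_one hc.ne']
    field_simp
    ring

theorem moment_le_of_mul_one_add_le {A : ℝ → ℝ} (hA0 : ∀ t, 0 ≤ A t) (hAm : Measurable A)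
    (hA : ∀ ⦃t t'⦄, 0 < t → t < t' → 0 < A t' → t' * (1 + A t') ≤ t * (1 + A t))
    {a b : ℝ} (ha : 1 < a) (hab : a ≤ b)
    (hinteg : IntegrableOn (fun τ => A τ * τ ^ (a - 1)) (Set.Ioi 0)) :
    IntegrableOn (fun τ => A τ * τ ^ (b - 1)) (Set.Ioi 0) ∧
    (b * (b - 1) * ∫ τ in Set.Ioi 0, A τ * τ ^ (b - 1)) ^ (1 / b) ≤
      (a * (a - 1) * ∫ τ in Set.Ioi 0, A τ * τ ^ (a - 1)) ^ (1 / a) := by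
  have hb : 1 < b := ha.trans_le hab
  have hintb : IntegrableOn (fun τ => A τ * τ ^ (b - 1)) (Set.Ioi 0) := by
    refine (hinteg.const_mul ((1 + A 1) ^ (b - a))).mono' (by fun_prop) ?_
    refine (ae_restrict_iff' measurableSet_Ioi).2 (Filter.Eventually.of_forall fun τ hτ => ?_)
    have hτ : 0 < τ := hτ
    have hpos : 0 ≤ A τ * τ ^ (a - 1) := mul_nonneg (hA0 τ) (Real.rpow_nonneg hτ.le _)
    rw [rpow_sub_one_eq_mul (a := a) hτ, ← mul_assoc,
      Real.norm_of_nonneg (mul_nonneg hpos (Real.rpow_nonneg hτ.le _)), mul_comm]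
    rcases (hA0 τ).eq_or_lt with h | h
    · simp [← h]
    · refine mul_le_mul_of_nonneg_right (Real.rpow_le_rpow hτ.le ?_ (by linarith)) hpos
      rcases le_or_gt τ 1 with h1 | h1
      · linarith [hA0 1]
      · have := hA one_pos h1 h
        nlinarith
  refine ⟨hintb, ?_⟩
  have hIa : 0 ≤ ∫ τ in Set.Ioi 0, A τ * τ ^ (a - 1) :=
    setIntegral_nonneg measurableSet_Ioi fun τ hτ =>
      mul_nonneg (hA0 τ) (Real.rpow_nonneg (le_of_lt hτ) _)
  rcases hIa.eq_or_lt with h0 | hpos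
  · have hz : ∫ τ in Set.Ioi 0, A τ * τ ^ (b - 1) = 0 := by
      have h1 := (setIntegral_eq_zero_iff_of_nonneg_ae ((ae_restrict_iff' measurableSet_Ioi).2
        (Filter.Eventually.of_forall fun τ hτ => mul_nonneg (hA0 τ)
          (Real.rpow_nonneg (le_of_lt hτ) _))) hinteg).1 h0.symm
      refine integral_eq_zero_of_ae ?_
      filter_upwards [h1, ae_restrict_mem measurableSet_Ioi] with τ h1 hτ
      have hτ : 0 < τ := hτ
      rw [rpow_sub_one_eq_mul (a := a) hτ, ← mul_assoc, h1]
      simp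
    rw [hz, mul_zero, Real.zero_rpow (by positivity)]
    positivity
  set c := (a * (a - 1) * ∫ τ in Set.Ioi 0, A τ * τ ^ (a - 1)) ^ (1 / a) with hcdef
  have ha1 : 0 < a * (a - 1) := mul_pos (by linarith) (by linarith)
  have hb1 : 0 < b * (b - 1) := mul_pos (by linarith) (by linarith)
  have hc : 0 < c := Real.rpow_pos_of_pos (mul_pos ha1 hpos) _
  have hca : c ^ a / (a * (a - 1)) = ∫ τ in Set.Ioi 0, A τ * τ ^ (a - 1) := by
    rw [hcdef, ← Real.rpow_mul (mul_pos ha1 hpos).le, one_div_mul_cancel (by linarith),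
      Real.rpow_one, mul_div_cancel_left₀ _ ha1.ne']
  set A₀ := (Set.Ioc 0 c).indicator (fun τ => c / τ - 1) with hA₀
  obtain ⟨ia, ea⟩ := integral_extremal_mul_rpow hc ha
  obtain ⟨ib, eb⟩ := integral_extremal_mul_rpow hc hb
  rw [hca] at ea
  have hA₀in : ∀ τ, 0 < τ → τ < c → A₀ τ = c / τ - 1 := fun τ h h' =>
    Set.indicator_of_mem (show τ ∈ Set.Ioc 0 c from ⟨h, h'.le⟩) _
  have hA₀out : ∀ τ, c ≤ τ → A₀ τ = 0 := fun τ h => by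
    rcases h.eq_or_lt with rfl | h
    · rw [hA₀, Set.indicator_of_mem (show c ∈ Set.Ioc 0 c from ⟨hc, le_rfl⟩), div_self hc.ne', sub_self]
    · exact Set.indicator_of_notMem (fun h' => h'.2.not_gt h) _
  have hle : ∀ τ, 0 < τ → τ < c → (A₀ τ ≤ A τ ↔ c ≤ τ * (1 + A τ)) := fun τ h h' => by
    rw [hA₀in τ h h', sub_le_iff_le_add, div_le_iff₀ h, add_comm, mul_comm]
  have hsupp : ∀ τ, c ≤ τ → A τ = 0 := by
    intro τ₁ hτ₁
    by_contra hne
    have hA1 : 0 < A τ₁ := (hA0 τ₁).lt_of_ne' hne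
    have hlt : ∀ τ, 0 < τ → τ < c → A₀ τ < A τ := fun τ h h' => by
      have := hA h (h'.trans_le hτ₁) hA1
      rw [hA₀in τ h h', sub_lt_iff_lt_add, div_lt_iff₀ h]
      nlinarith
    have hz : ∫ τ in Set.Ioi 0, (A τ - A₀ τ) * τ ^ (a - 1) = 0 := by
      simp only [sub_mul]
      rw [integral_sub hinteg ia, ea, sub_self]
    have hi : IntegrableOn (fun τ => (A τ - A₀ τ) * τ ^ (a - 1)) (Set.Ioi 0) := by
      simp only [sub_mul]; exact hinteg.sub ia
    have h1 := (setIntegral_eq_zero_iff_of_nonneg_ae ((ae_restrict_iff' measurableSet_Ioi).2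
      (Filter.Eventually.of_forall fun τ (hτ : 0 < τ) => by
        refine mul_nonneg (sub_nonneg.2 ?_) (Real.rpow_nonneg hτ.le _)
        rcases lt_or_ge τ c with h | h
        · exact (hlt τ hτ h).le
        · rw [hA₀out τ h]; exact hA0 τ)) hi).1 hz
    rw [Filter.EventuallyEq, ae_restrict_iff' measurableSet_Ioi, ae_iff] at h1
    have h2 : volume (Set.Ioo 0 c) ≤ 0 := by
      rw [← h1]
      refine measure_mono fun τ hτ => ?_
      simp only [Set.mem_ofPred_eq, Classical.not_imp, Pi.zero_apply]
      exact ⟨hτ.1, (mul_pos (sub_pos.2 (hlt τ hτ.1 hτ.2)) (Real.rpow_pos_of_pos hτ.1 _)).ne'⟩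
    simp at h2
    exact absurd h2 (not_le.2 hc)
  obtain ⟨τ₀, hτ₀, hcross⟩ : ∃ τ₀, 0 ≤ τ₀ ∧ ∀ τ, 0 < τ →
      (A τ - A₀ τ) * (τ ^ (b - a) - τ₀ ^ (b - a)) ≤ 0 := by
    set S : Set ℝ := insert 0 {τ | 0 < τ ∧ τ < c ∧ c ≤ τ * (1 + A τ)} with hS
    have hbdd : BddAbove S := ⟨c, by rintro x (rfl | hx); exacts [hc.le, hx.2.1.le]⟩
    have h0 : 0 ≤ sSup S := le_csSup hbdd (Set.mem_insert _ _)
    refine ⟨sSup S, h0, fun τ hτ => ?_⟩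
    rcases le_or_gt c τ with h | h
    · simp [hsupp τ h, hA₀out τ h]
    rcases lt_or_ge τ (sSup S) with h' | h'
    · obtain ⟨s, hs, hτs⟩ := exists_lt_of_lt_csSup ⟨0, Set.mem_insert _ _⟩ h'
      rcases hs with rfl | ⟨hs0, hsc, hs⟩
      · exact absurd hτs hτ.not_gt
      have hAs : 0 < A s := by
        by_contra hn
        have : A s = 0 := le_antisymm (not_lt.1 hn) (hA0 s)
        rw [this] at hs
        linarith
      have := (hle τ hτ h).2 (hs.trans (hA hτ hτs hAs))
      exact mul_nonpos_of_nonneg_of_nonpos (sub_nonneg.2 this)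
        (sub_nonpos.2 (Real.rpow_le_rpow hτ.le h'.le (by linarith)))
    · rcases h'.eq_or_lt with h'' | h''
      · rw [← h'', sub_self, mul_zero]
      have hn : ¬ A₀ τ ≤ A τ := fun hh =>
        h''.not_ge (le_csSup hbdd (Or.inr ⟨hτ, h, (hle τ hτ h).1 hh⟩))
      exact mul_nonpos_of_nonpos_of_nonneg (sub_nonpos.2 (not_le.1 hn).le)
        (sub_nonneg.2 (Real.rpow_le_rpow h0 h' (by linarith)))
  have hmain : ∫ τ in Set.Ioi 0, A τ * τ ^ (b - 1) ≤ c ^ b / (b * (b - 1)) := by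
    rw [← eb, ← sub_nonpos, ← integral_sub hintb ib]
    have hz : ∫ τ in Set.Ioi 0, (A τ * τ ^ (a - 1) - A₀ τ * τ ^ (a - 1)) * τ₀ ^ (b - a) = 0 := by
      rw [integral_mul_const, integral_sub hinteg ia, ea, sub_self, zero_mul]
    have hib : IntegrableOn (fun τ => A τ * τ ^ (b - 1) - A₀ τ * τ ^ (b - 1)) (Set.Ioi 0) :=
      hintb.sub ib
    have hia : IntegrableOn (fun τ => (A τ * τ ^ (a - 1) - A₀ τ * τ ^ (a - 1)) * τ₀ ^ (b - a))
        (Set.Ioi 0) := (hinteg.sub ia).mul_const _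
    refine (setIntegral_mono_on hib hia measurableSet_Ioi fun τ (hτ : 0 < τ) => ?_).trans_eq hz
    have h1 := mul_le_mul_of_nonneg_right (hcross τ hτ) (Real.rpow_nonneg hτ.le (a - 1))
    rw [rpow_sub_one_eq_mul (a := a) hτ]
    linarith
  rw [le_div_iff₀ hb1, mul_comm] at hmain
  have hIb : 0 ≤ ∫ τ in Set.Ioi 0, A τ * τ ^ (b - 1) :=
    setIntegral_nonneg measurableSet_Ioi fun τ hτ =>
      mul_nonneg (hA0 τ) (Real.rpow_nonneg (le_of_lt hτ) _)
  calc _ ≤ (c ^ b) ^ (1 / b) := Real.rpow_le_rpow (by positivity) hmain (by positivity)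
    _ = c := by rw [← Real.rpow_mul hc.le, mul_one_div_cancel (by linarith), Real.rpow_one]

theorem ae_mem_ball_hypMeasure : ∀ᵐ z ∂hypMeasure, z ∈ ball (0 : ℂ) 1 :=
  (withDensity_absolutelyContinuous _ _).ae_le (ae_restrict_mem measurableSet_ball)

theorem ae_mem_ball_bergmanMeasure (α : ℝ) : ∀ᵐ z ∂bergmanMeasure α, z ∈ ball (0 : ℂ) 1 :=
  (withDensity_absolutelyContinuous _ _).ae_le (ae_restrict_mem measurableSet_ball)

theorem lintegral_bergmanMeasure {g : ℂ → ENNReal} (hg : Measurable g) (α : ℝ) :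
    ∫⁻ z, g z ∂bergmanMeasure α =
      ∫⁻ z in ball (0 : ℂ) 1,
        ENNReal.ofReal ((α - 1) * (1 - ‖z‖ ^ 2) ^ (α - 2) / Real.pi) * g z := by
  rw [bergmanMeasure, lintegral_withDensity_eq_lintegral_mul _ (by fun_prop) hg]
  rfl

theorem lintegral_bergmanMeasure_eq_hypMeasure {g : ℂ → ℝ} (hg : Measurable g)
    {α : ℝ} (hα : 1 < α) :
    ∫⁻ z, ENNReal.ofReal (g z) ∂bergmanMeasure α =
      ENNReal.ofReal (α - 1) * ∫⁻ z, ENNReal.ofReal (g z * (1 - ‖z‖ ^ 2) ^ α) ∂hypMeasure := by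
  rw [lintegral_bergmanMeasure (by fun_prop), hypMeasure,
    lintegral_withDensity_eq_lintegral_mul _ (by fun_prop) (by fun_prop),
    ← lintegral_const_mul _ (by fun_prop)]
  refine setLIntegral_congr_fun measurableSet_ball fun z hz => ?_
  have hz := one_sub_normSq_pos hz
  have hπ := Real.pi_pos
  simp only [Pi.mul_apply]
  rw [← ENNReal.ofReal_mul (by have : 0 < α - 1 := by linarith
                               positivity),
    ← ENNReal.ofReal_mul (by positivity), ← ENNReal.ofReal_mul (by linarith)]
  congr 1
  rw [Real.rpow_sub hz, Real.rpow_two]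
  field_simp

section

variable {f : ℂ → ℂ} {c ε : ℝ}

theorem lintegral_regWeight_rpow_eq (hf : Differentiable ℂ f) (hε : 0 < ε) {b : ℝ} (hb : 0 < b) :
    ∫⁻ z, ENNReal.ofReal (regWeight f c ε z ^ b) ∂hypMeasure = ENNReal.ofReal b *
      ∫⁻ t in Set.Ioi 0,
        ENNReal.ofReal (hypMeasure.real {z | t < regWeight f c ε z} * t ^ (b - 1)) := by
  rw [lintegral_rpow_eq_lintegral_meas_lt_mul _ _
    (continuous_regWeight hf hε).measurable.aemeasurable hb]
  · congr 1
    refine setLIntegral_congr_fun measurableSet_Ioi fun t ht => ?_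
    rw [ENNReal.ofReal_mul measureReal_nonneg,
      ofReal_measureReal (hypMeasure_regWeight_lt_top hf hε ht).ne]
  · filter_upwards [ae_mem_ball_hypMeasure] with z hz
    exact mul_nonneg (Real.rpow_nonneg (normSq_add_pos hε z).le _) (one_sub_normSq_pos hz).le

theorem lintegral_regWeight_rpow_le (hf : Differentiable ℂ f) (hc : 0 ≤ c) (hε : 0 < ε)
    {a b : ℝ} (ha : 1 < a) (hab : a ≤ b) :
    (ENNReal.ofReal (b - 1) * ∫⁻ z, ENNReal.ofReal (regWeight f c ε z ^ b) ∂hypMeasure) ^ (1 / b) ≤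
      (ENNReal.ofReal (a - 1) *
        ∫⁻ z, ENNReal.ofReal (regWeight f c ε z ^ a) ∂hypMeasure) ^ (1 / a) := by
  have ha0 : 0 < a := by linarith
  have hb0 : 0 < b := by linarith
  rw [lintegral_regWeight_rpow_eq hf hε ha0, lintegral_regWeight_rpow_eq hf hε hb0]
  set A : ℝ → ℝ := fun t => hypMeasure.real {z | t < regWeight f c ε z} with hA
  have hA0 : ∀ t, 0 ≤ A t := fun t => measureReal_nonneg
  have hAm : Measurable A := by
    refine Measurable.ennreal_toReal (f := fun t => hypMeasure {z | t < regWeight f c ε z}) ?_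
    exact Antitone.measurable fun s t hst => measure_mono fun z hz => lt_of_le_of_lt hst hz
  by_cases htop : ∫⁻ t in Set.Ioi 0, ENNReal.ofReal (A t * t ^ (a - 1)) = ⊤
  · rw [htop, ENNReal.mul_top (by simpa using ha0), ENNReal.mul_top (by simpa using ha),
      ENNReal.top_rpow_of_pos (by positivity)]
    exact le_top
  have hnn : ∀ s : ℝ, 0 ≤ᵐ[volume.restrict (Set.Ioi 0)] fun t => A t * t ^ s := fun s =>
    (ae_restrict_mem measurableSet_Ioi).mono fun t ht =>
      mul_nonneg (hA0 t) (Real.rpow_nonneg (le_of_lt ht) _)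
  have hinteg : IntegrableOn (fun τ => A τ * τ ^ (a - 1)) (Set.Ioi 0) :=
    (lintegral_ofReal_ne_top_iff_integrable (by fun_prop) (hnn _)).1 htop
  obtain ⟨hintb, hle⟩ := moment_le_of_mul_one_add_le hA0 hAm
    (fun t t' h h' => regWeight_mul_one_add_le hf hc hε h h') ha hab hinteg
  have key : ∀ s : ℝ, 1 < s → IntegrableOn (fun τ => A τ * τ ^ (s - 1)) (Set.Ioi 0) →
      (ENNReal.ofReal (s - 1) * (ENNReal.ofReal s *
        ∫⁻ t in Set.Ioi 0, ENNReal.ofReal (A t * t ^ (s - 1)))) ^ (1 / s) =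
      ENNReal.ofReal ((s * (s - 1) * ∫ τ in Set.Ioi 0, A τ * τ ^ (s - 1)) ^ (1 / s)) := by
    intro s hs hi
    have h0 := integral_nonneg_of_ae (hnn (s - 1))
    rw [← ofReal_integral_eq_lintegral_ofReal hi (hnn _), ← ENNReal.ofReal_mul (by linarith),
      ← ENNReal.ofReal_mul (by linarith), ENNReal.ofReal_rpow_of_nonneg _ (by positivity)]
    · congr 2; ring
    · exact mul_nonneg (by linarith) (mul_nonneg (by linarith) h0)
  rw [key b (by linarith) hintb, key a ha hinteg]
  exact ENNReal.ofReal_le_ofReal hle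

/-- The contractive embedding of weighted Bergman spaces, for a regularized entire function. -/
theorem bergman_embedding_reg (hf : Differentiable ℂ f) (hε : 0 < ε) {α p q : ℝ} (hα : 1 < α)
    (hp : 0 < p) (hpq : p ≤ q) :
    (∫⁻ z, ENNReal.ofReal ((‖f z‖ ^ 2 + ε) ^ (q / 2)) ∂bergmanMeasure (α * q / p)) ^ (1 / q) ≤
      (∫⁻ z, ENNReal.ofReal ((‖f z‖ ^ 2 + ε) ^ (p / 2)) ∂bergmanMeasure α) ^ (1 / p) := by
  have hα0 : 0 < α := by linarith
  have hq : 0 < q := by linarith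
  have hle : α ≤ α * q / p := by rw [le_div_iff₀ hp]; gcongr
  have key : ∀ s : ℝ, 0 < s → 1 < α * s / p →
      ∫⁻ z, ENNReal.ofReal ((‖f z‖ ^ 2 + ε) ^ (s / 2)) ∂bergmanMeasure (α * s / p) =
        ENNReal.ofReal (α * s / p - 1) *
          ∫⁻ z, ENNReal.ofReal (regWeight f (p / (2 * α)) ε z ^ (α * s / p)) ∂hypMeasure := by
    intro s hs h1
    rw [lintegral_bergmanMeasure_eq_hypMeasure
      (continuous_normSq_add_rpow hf hε _).measurable
      h1]
    congr 1
    refine lintegral_congr_ae ?_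
    filter_upwards [ae_mem_ball_hypMeasure] with z hz
    rw [regWeight, Real.mul_rpow (Real.rpow_nonneg (normSq_add_pos hε z).le _)
      (one_sub_normSq_pos hz).le, ← Real.rpow_mul (normSq_add_pos hε z).le]
    congr 3
    field_simp
  have h := lintegral_regWeight_rpow_le (c := p / (2 * α)) hf (by positivity) hε hα hle
  have hkp := key p hp (by rwa [mul_div_cancel_right₀ _ hp.ne'])
  rw [mul_div_cancel_right₀ _ hp.ne'] at hkp
  rw [← key q hq (hα.trans_le hle), ← hkp] at h
  have h2 := ENNReal.rpow_le_rpow h (show 0 ≤ α / p by positivity)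
  rw [← ENNReal.rpow_mul, ← ENNReal.rpow_mul] at h2
  convert h2 using 2 <;> field_simp

end

/-- The integral of `w` over the circle of squared radius `s`. -/
noncomputable def circleSqIntegral {E : Type*} [NormedAddCommGroup E] [NormedSpace ℝ E]
    (w : ℂ → E) (s : ℝ) : E := ∫ θ in -Real.pi..Real.pi, w (polarPt (√s) θ)

theorem continuous_circleSqIntegral {E : Type*} [NormedAddCommGroup E] [NormedSpace ℝ E]
    {w : ℂ → E} (hw : Continuous w) : Continuous (circleSqIntegral w) := by
  refine intervalIntegral.continuous_parametric_intervalIntegral_of_continuous' ?_ _ _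
  exact hw.comp (continuous_polarPt.comp
    ((Real.continuous_sqrt.comp continuous_fst).prodMk continuous_snd))

theorem circleSqIntegral_ofReal (u : ℂ → ℝ) (s : ℝ) :
    circleSqIntegral (fun z => (u z : ℂ)) s = ((circleSqIntegral u s : ℝ) : ℂ) :=
  intervalIntegral.integral_ofReal

section Derivative

variable {w a b : ℂ → ℂ}

theorem hasDerivAt_intervalIntegral_polarPt (hw : ∀ z, HasWirtingerAt w (a z) (b z) z)
    (ha : Continuous a) (hb : Continuous b) {r : ℝ} (hr : r ≠ 0) :
    HasDerivAt (fun r => ∫ θ in -Real.pi..Real.pi, w (polarPt r θ))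
      (2 * ∫ θ in -Real.pi..Real.pi, a (polarPt r θ) * Complex.exp (θ * Complex.I)) r := by
  have cw : Continuous w := continuous_iff_continuousAt.2 fun z => (hw z).continuousAt
  have hp := continuous_polarPt
  have hp2 : Continuous fun θ => polarPt r θ := hp.comp (Continuous.prodMk_right r)
  set F' : ℝ → ℝ → ℂ := fun r θ => a (polarPt r θ) * Complex.exp (θ * Complex.I)
    + b (polarPt r θ) * Complex.exp (-(θ * Complex.I)) with hF'
  have cF' : Continuous fun x : ℝ × ℝ => F' x.1 x.2 := by
    have h1 : Continuous fun x : ℝ × ℝ => a (polarPt x.1 x.2) := ha.comp hp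
    have h2 : Continuous fun x : ℝ × ℝ => b (polarPt x.1 x.2) := hb.comp hp
    fun_prop
  obtain ⟨C, hC⟩ := ((isCompact_closedBall r 1).prod
    (isCompact_uIcc (a := -Real.pi) (b := Real.pi))).exists_bound_of_continuousOn cF'.continuousOn
  have h := (intervalIntegral.hasDerivAt_integral_of_dominated_loc_of_deriv_le (𝕜 := ℝ)
    (μ := volume) (a := -Real.pi) (b := Real.pi) (F := fun r θ => w (polarPt r θ)) (F' := F')
    (x₀ := r) (bound := fun _ => C) (closedBall_mem_nhds r one_pos)
    (Filter.Eventually.of_forall fun x =>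
      (cw.comp (hp.comp (Continuous.prodMk_right x))).aestronglyMeasurable)
    ((cw.comp hp2).intervalIntegrable _ _)
    (cF'.comp (Continuous.prodMk_right r)).aestronglyMeasurable
    (Filter.Eventually.of_forall fun θ hθ x hx => hC (x, θ) ⟨hx, Set.uIoc_subset_uIcc hθ⟩)
    (by simp)
    (Filter.Eventually.of_forall fun θ _ x _ => hasDerivAt_comp_polarPt_left hw x θ)).2
  refine h.congr_deriv ?_
  have ca : Continuous fun θ : ℝ => a (polarPt r θ) * Complex.exp (θ * Complex.I) := by fun_prop
  have cb : Continuous fun θ : ℝ => b (polarPt r θ) * Complex.exp (-(θ * Complex.I)) := by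
    fun_prop
  rw [intervalIntegral.integral_add (ca.intervalIntegrable _ _) (cb.intervalIntegrable _ _),
    ← intervalIntegral_circle_wirtinger_eq hw ha hb hr, two_mul]

theorem hasDerivAt_circleSqIntegral (hw : ∀ z, HasWirtingerAt w (a z) (b z) z)
    (ha : Continuous a) (hb : Continuous b) {s : ℝ} (hs : 0 < s) :
    HasDerivAt (circleSqIntegral w) (circleSqIntegral (fun z => z * a z) s / s) s := by
  have hr : 0 < √s := Real.sqrt_pos.2 hs
  have h := (hasDerivAt_intervalIntegral_polarPt hw ha hb hr.ne').scomp s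
    (Real.hasDerivAt_sqrt hs.ne')
  refine h.congr_deriv ?_
  have e : circleSqIntegral (fun z => z * a z) s = (√s : ℂ) *
      ∫ θ in -Real.pi..Real.pi, a (polarPt (√s) θ) * Complex.exp (θ * Complex.I) := by
    rw [circleSqIntegral, ← intervalIntegral.integral_const_mul]
    congr 1 with θ
    rw [polarPt]; ring
  have hs2 : (s : ℂ) = (√s : ℂ) * (√s : ℂ) := by
    rw [← Complex.ofReal_mul, Real.mul_self_sqrt hs.le]
  have hr' : (√s : ℂ) ≠ 0 := by exact_mod_cast hr.ne'
  rw [e, hs2, Complex.real_smul]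
  generalize (∫ θ in -Real.pi..Real.pi, a (polarPt (√s) θ) * Complex.exp (θ * Complex.I)) = J
  push_cast
  field_simp

theorem hasDerivAt_circleSqIntegral_id_mul (hw : ∀ z, HasWirtingerAt w (a z) (b z) z)
    (ha : Continuous a) (hb : Continuous b) {s : ℝ} (hs : 0 < s) :
    HasDerivAt (circleSqIntegral fun z => z * w z) (circleSqIntegral b s) s := by
  have cw : Continuous w := continuous_iff_continuousAt.2 fun z => (hw z).continuousAt
  have hr : 0 < √s := Real.sqrt_pos.2 hs
  have hid : ∀ z : ℂ, HasWirtingerAt (fun z => z) 1 0 z := fun z =>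
    .of_hasDerivAt (hasDerivAt_id z)
  have hzw : ∀ z, HasWirtingerAt (fun z => z * w z) (w z + z * a z) (z * b z) z := fun z =>
    ((hid z).mul (hw z)).congr_deriv (by ring) (by ring)
  have h := (hasDerivAt_intervalIntegral_polarPt hzw (by fun_prop) (by fun_prop) hr.ne').scomp s
    (Real.hasDerivAt_sqrt hs.ne')
  rw [intervalIntegral_circle_wirtinger_eq hzw (by fun_prop) (by fun_prop) hr.ne'] at h
  refine h.congr_deriv ?_
  have e : ∫ θ in -Real.pi..Real.pi, polarPt (√s) θ * b (polarPt (√s) θ) *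
      Complex.exp (-(θ * Complex.I)) = (√s : ℂ) * circleSqIntegral b s := by
    rw [circleSqIntegral, ← intervalIntegral.integral_const_mul]
    congr 1 with θ
    have : Complex.exp (θ * Complex.I) * Complex.exp (-(θ * Complex.I)) = 1 := by
      rw [← Complex.exp_add, add_neg_cancel, Complex.exp_zero]
    rw [polarPt]
    linear_combination (√s : ℂ) * b (↑√s * Complex.exp (↑θ * Complex.I)) * this
  have hr' : (√s : ℂ) ≠ 0 := by exact_mod_cast hr.ne'
  rw [e, Complex.real_smul]
  push_cast
  field_simp

end Derivative

section Subharmonic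

variable {u g : ℂ → ℝ} {a b c : ℂ → ℂ}

theorem circleSqIntegral_nonneg (hg0 : ∀ z, 0 ≤ g z) (s : ℝ) : 0 ≤ circleSqIntegral g s :=
  intervalIntegral.integral_nonneg (by linarith [Real.pi_pos]) fun _ _ => hg0 _

theorem hasDerivAt_re_circleSqIntegral (ha : ∀ z, HasWirtingerAt a (c z) (g z) z)
    (cc : Continuous c) (cg : Continuous g) {s : ℝ} (hs : 0 < s) :
    HasDerivAt (fun s => (circleSqIntegral (fun z => z * a z) s).re) (circleSqIntegral g s) s := by
  have h := hasDerivAt_circleSqIntegral_id_mul ha cc (by fun_prop) hs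
  rw [circleSqIntegral_ofReal] at h
  exact Complex.reCLM.hasFDerivAt.comp_hasDerivAt s h

theorem hasDerivAt_circleSqIntegral_real (hu : ∀ z, HasWirtingerAt (fun z => (u z : ℂ)) (a z) (b z) z)
    (ca : Continuous a) (cb : Continuous b) {s : ℝ} (hs : 0 < s) :
    HasDerivAt (circleSqIntegral u) ((circleSqIntegral (fun z => z * a z) s).re / s) s := by
  have h := Complex.reCLM.hasFDerivAt.comp_hasDerivAt s (hasDerivAt_circleSqIntegral hu ca cb hs)
  simp only [Function.comp_def, circleSqIntegral_ofReal] at h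
  simpa using h

theorem re_circleSqIntegral_nonneg (ha : ∀ z, HasWirtingerAt a (c z) (g z) z)
    (cc : Continuous c) (cg : Continuous g) (hg0 : ∀ z, 0 ≤ g z) {s : ℝ} (hs : 0 ≤ s) :
    0 ≤ (circleSqIntegral (fun z => z * a z) s).re := by
  have ca : Continuous a := continuous_iff_continuousAt.2 fun z => (ha z).continuousAt
  have hmono : MonotoneOn (fun s => (circleSqIntegral (fun z => z * a z) s).re) (Set.Ici 0) := by
    refine monotoneOn_of_deriv_nonneg (convex_Ici 0)
      (Complex.continuous_re.comp (continuous_circleSqIntegral (by fun_prop))).continuousOn ?_ ?_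
    · intro s hs
      rw [interior_Ici] at hs
      exact (hasDerivAt_re_circleSqIntegral ha cc cg hs).differentiableAt.differentiableWithinAt
    · intro s hs
      rw [interior_Ici] at hs
      rw [(hasDerivAt_re_circleSqIntegral ha cc cg hs).deriv]
      exact circleSqIntegral_nonneg hg0 s
  have := hmono Set.self_mem_Ici hs hs
  simpa [circleSqIntegral, polarPt] using this

/-- Circle means of a `C²` function with nonnegative Laplacian are nondecreasing. -/
theorem monotoneOn_circleSqIntegral (hu : ∀ z, HasWirtingerAt (fun z => (u z : ℂ)) (a z) (b z) z)
    (cb : Continuous b) (ha : ∀ z, HasWirtingerAt a (c z) (g z) z)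
    (cc : Continuous c) (cg : Continuous g) (hg0 : ∀ z, 0 ≤ g z) :
    MonotoneOn (circleSqIntegral u) (Set.Ici 0) := by
  have ca : Continuous a := continuous_iff_continuousAt.2 fun z => (ha z).continuousAt
  have cu : Continuous u := by
    have : Continuous fun z => (u z : ℂ) :=
      continuous_iff_continuousAt.2 fun z => (hu z).continuousAt
    exact Complex.continuous_re.comp this
  refine monotoneOn_of_deriv_nonneg (convex_Ici 0)
    (continuous_circleSqIntegral cu).continuousOn ?_ ?_
  · intro s hs
    rw [interior_Ici] at hs
    exact (hasDerivAt_circleSqIntegral_real hu ca cb hs).differentiableAt.differentiableWithinAt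
  · intro s hs
    rw [interior_Ici] at hs
    rw [(hasDerivAt_circleSqIntegral_real hu ca cb hs).deriv]
    exact div_nonneg (re_circleSqIntegral_nonneg ha cc cg hg0 (le_of_lt hs)) (le_of_lt hs)

/-- If moreover the circle means of the Laplacian are nondecreasing, the circle means are
primitives, in the squared radius, of a nonnegative nondecreasing function. -/
theorem exists_circleSqIntegral_eq_add_integral
    (hu : ∀ z, HasWirtingerAt (fun z => (u z : ℂ)) (a z) (b z) z)
    (cb : Continuous b) (ha : ∀ z, HasWirtingerAt a (c z) (g z) z)
    (cc : Continuous c) (cg : Continuous g) (hg0 : ∀ z, 0 ≤ g z)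
    (hg : MonotoneOn (circleSqIntegral g) (Set.Ici 0)) :
    ∃ ψ : ℝ → ℝ, (∀ s, 0 < s → 0 ≤ ψ s) ∧ MonotoneOn ψ (Set.Ioi 0) ∧ ∀ s, 0 ≤ s →
      IntervalIntegrable ψ volume 0 s ∧
      circleSqIntegral u s = circleSqIntegral u 0 + ∫ t in 0..s, ψ t := by
  have ca : Continuous a := continuous_iff_continuousAt.2 fun z => (ha z).continuousAt
  have cu : Continuous u := by
    have : Continuous fun z => (u z : ℂ) :=
      continuous_iff_continuousAt.2 fun z => (hu z).continuousAt
    exact Complex.continuous_re.comp this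
  set V : ℝ → ℝ := fun s => (circleSqIntegral (fun z => z * a z) s).re with hV
  have hV0 : V 0 = 0 := by simp [hV, circleSqIntegral, polarPt]
  have hconv : ConvexOn ℝ (Set.Ici 0) V := by
    refine MonotoneOn.convexOn_of_deriv (convex_Ici 0)
      (Complex.continuous_re.comp (continuous_circleSqIntegral (by fun_prop))).continuousOn ?_ ?_
    · intro s hs
      rw [interior_Ici] at hs
      exact (hasDerivAt_re_circleSqIntegral ha cc cg hs).differentiableAt.differentiableWithinAt
    · rw [interior_Ici]
      intro s hs t ht hst
      rw [(hasDerivAt_re_circleSqIntegral ha cc cg hs).deriv,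
        (hasDerivAt_re_circleSqIntegral ha cc cg ht).deriv]
      exact hg (Set.Ioi_subset_Ici_self hs) (Set.Ioi_subset_Ici_self ht) hst
  have hψ0 : ∀ s, 0 < s → 0 ≤ V s / s := fun s hs =>
    div_nonneg (re_circleSqIntegral_nonneg ha cc cg hg0 hs.le) hs.le
  refine ⟨fun s => V s / s, hψ0, ?_, fun s hs => ?_⟩
  · intro s hs t ht hst
    have := hconv.secant_mono Set.self_mem_Ici (Set.Ioi_subset_Ici_self hs)
      (Set.Ioi_subset_Ici_self ht) (ne_of_gt hs)
      (ne_of_gt ht) hst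
    simpa [hV0] using this
  · have hd : ∀ x ∈ Set.Ioo 0 s, HasDerivAt (circleSqIntegral u) (V x / x) x := fun x hx =>
      hasDerivAt_circleSqIntegral_real hu ca cb hx.1
    have hi : IntervalIntegrable (fun s => V s / s) volume 0 s := by
      refine intervalIntegral.intervalIntegrable_deriv_of_nonneg
        (continuous_circleSqIntegral cu).continuousOn ?_ ?_
      · rw [min_eq_left hs, max_eq_right hs]; exact hd
      · rw [min_eq_left hs, max_eq_right hs]; exact fun x hx => hψ0 x hx.1
    refine ⟨hi, ?_⟩
    rw [intervalIntegral.integral_eq_sub_of_hasDerivAt_of_le hs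
      (continuous_circleSqIntegral cu).continuousOn hd hi]
    ring

end Subharmonic

section NormSq

variable {f : ℂ → ℂ} {ε : ℝ}

/-- The Laplacian `∂∂̄` of `(‖f‖² + ε) ^ m`. -/
noncomputable def normSqLaplacian (f : ℂ → ℂ) (m ε : ℝ) (z : ℂ) : ℝ :=
  ‖deriv f z‖ ^ 2 *
    (m ^ 2 * (‖f z‖ ^ 2 + ε) ^ (m - 1) - m * (m - 1) * ε * (‖f z‖ ^ 2 + ε) ^ (m - 2))

theorem normSqLaplacian_nonneg (hε : 0 < ε) {m : ℝ} (hm : 0 < m) (z : ℂ) :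
    0 ≤ normSqLaplacian f m ε z := by
  have hP := normSq_add_pos (f := f) hε z
  have e : m ^ 2 * (‖f z‖ ^ 2 + ε) ^ (m - 1) - m * (m - 1) * ε * (‖f z‖ ^ 2 + ε) ^ (m - 2) =
      m * (‖f z‖ ^ 2 + ε) ^ (m - 2) * (m * ‖f z‖ ^ 2 + ε) := by
    rw [show m - 1 = m - 2 + 1 by ring, Real.rpow_add_one hP.ne']; ring
  rw [normSqLaplacian, e]
  positivity

theorem continuous_normSqLaplacian (hf : Differentiable ℂ f) (hε : 0 < ε) (m : ℝ) :
    Continuous (normSqLaplacian f m ε) := by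
  have h1 := continuous_normSq_add_rpow hf hε (m - 1)
  have h2 := continuous_normSq_add_rpow hf hε (m - 2)
  have h3 := continuous_deriv_of_differentiable hf
  unfold normSqLaplacian; fun_prop

theorem exists_hasWirtingerAt_normSq_rpow_deriv (hf : Differentiable ℂ f) (hε : 0 < ε) (m : ℝ) :
    ∃ c : ℂ → ℂ, Continuous c ∧ ∀ z, HasWirtingerAt
      (fun z => (m * (‖f z‖ ^ 2 + ε) ^ (m - 1) : ℝ) * (deriv f z * (starRingEnd ℂ) (f z)))
      (c z) (normSqLaplacian f m ε z) z := by
  have hf1 := hf.deriv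
  have c0 := hf.continuous
  have c1 := hf1.continuous
  have c2 := continuous_deriv_of_differentiable hf1
  have r1 := continuous_normSq_add_rpow hf hε (m - 1)
  have r2 := continuous_normSq_add_rpow hf hε (m - 1 - 1)
  refine ⟨fun z => m * (((m - 1) * (‖f z‖ ^ 2 + ε) ^ (m - 1 - 1) : ℝ) *
      (deriv f z * (starRingEnd ℂ) (f z))) * (deriv f z * (starRingEnd ℂ) (f z)) +
      (m * (‖f z‖ ^ 2 + ε) ^ (m - 1) : ℝ) * (deriv (deriv f) z * (starRingEnd ℂ) (f z)),
      by fun_prop, fun z => ?_⟩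
  have h1 : HasWirtingerAt (fun _ => (m : ℂ)) 0 0 z := .const
  have h2 := HasWirtingerAt.of_hasDerivAt (hf z).hasDerivAt
  have h3 := HasWirtingerAt.of_hasDerivAt (hf1 z).hasDerivAt
  have h := (h1.mul (hasWirtingerAt_normSq_add_rpow hf hε (m - 1) z)).mul (h3.mul h2.conj)
  simp only [← Complex.ofReal_mul] at h
  refine h.congr_deriv ?_ ?_
  · push_cast; simp only [map_zero]; ring
  · have e : ∀ w : ℂ, (‖w‖ : ℂ) ^ 2 = w * (starRingEnd ℂ) w := fun w => by
      rw [Complex.mul_conj, Complex.normSq_eq_norm_sq]; push_cast; rfl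
    have hP := normSq_add_pos (f := f) hε z
    have hPc : (ε : ℂ) = ((‖f z‖ ^ 2 + ε : ℝ) : ℂ) - f z * (starRingEnd ℂ) (f z) := by
      rw [← e]; push_cast; ring
    rw [normSqLaplacian, show m - 1 = m - 2 + 1 by ring, Real.rpow_add_one hP.ne',
      show m - 2 + 1 - 1 = m - 2 by ring]
    simp only [Complex.ofReal_mul, Complex.ofReal_sub, Complex.ofReal_pow, e]
    rw [hPc]
    push_cast
    ring

/-- Circle means of `(‖f‖² + ε) ^ m` are nondecreasing. -/
theorem monotoneOn_circleSqIntegral_normSq (hf : Differentiable ℂ f) (hε : 0 < ε) {m : ℝ}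
    (hm : 0 < m) : MonotoneOn (circleSqIntegral fun z => (‖f z‖ ^ 2 + ε) ^ m) (Set.Ici 0) := by
  obtain ⟨c, cc, hc⟩ := exists_hasWirtingerAt_normSq_rpow_deriv hf hε m
  have c0 := hf.continuous
  have c1 := continuous_deriv_of_differentiable hf
  have r1 := continuous_normSq_add_rpow hf hε (m - 1)
  exact monotoneOn_circleSqIntegral (fun z => hasWirtingerAt_normSq_add_rpow hf hε m z)
    (by fun_prop) hc cc (continuous_normSqLaplacian hf hε m) (normSqLaplacian_nonneg hε hm)

/-- The Laplacian `∂∂̄` of `‖f'‖² (‖f‖² + ε) ^ k`. -/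
noncomputable def derivNormSqLaplacian (f : ℂ → ℂ) (k ε : ℝ) (z : ℂ) : ℝ :=
  ‖deriv (deriv f) z‖ ^ 2 * (‖f z‖ ^ 2 + ε) ^ k +
    2 * (deriv (deriv f) z * f z * (starRingEnd ℂ) (deriv f z) ^ 2).re *
      (k * (‖f z‖ ^ 2 + ε) ^ (k - 1)) +
    ‖deriv f z‖ ^ 4 * (k * (‖f z‖ ^ 2 + ε) ^ (k - 1) +
      ‖f z‖ ^ 2 * (k * (k - 1) * (‖f z‖ ^ 2 + ε) ^ (k - 1 - 1)))

theorem continuous_derivNormSqLaplacian (hf : Differentiable ℂ f) (hε : 0 < ε) (k : ℝ) :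
    Continuous (derivNormSqLaplacian f k ε) := by
  have hf1 := hf.deriv
  have c0 := hf.continuous
  have c1 := hf1.continuous
  have c2 := continuous_deriv_of_differentiable hf1
  have r0 := continuous_normSq_add_rpow hf hε k
  have r1 := continuous_normSq_add_rpow hf hε (k - 1)
  have r2 := continuous_normSq_add_rpow hf hε (k - 1 - 1)
  unfold derivNormSqLaplacian; fun_prop

theorem exists_hasWirtingerAt_derivNormSq (hf : Differentiable ℂ f) (hε : 0 < ε) (k : ℝ) :
    ∃ a b c : ℂ → ℂ, Continuous b ∧ Continuous c ∧
      (∀ z, HasWirtingerAt (fun z => ((‖deriv f z‖ ^ 2 * (‖f z‖ ^ 2 + ε) ^ k : ℝ) : ℂ))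
        (a z) (b z) z) ∧
      ∀ z, HasWirtingerAt a (c z) (derivNormSqLaplacian f k ε z) z := by
  have hf1 := hf.deriv
  have hf2 := hf1.deriv
  have c0 := hf.continuous
  have c1 := hf1.continuous
  have c2 := hf2.continuous
  have c3 := continuous_deriv_of_differentiable hf2
  have r0 := continuous_normSq_add_rpow hf hε k
  have r1 := continuous_normSq_add_rpow hf hε (k - 1)
  have r2 := continuous_normSq_add_rpow hf hε (k - 1 - 1)
  have e : ∀ w : ℂ, (‖w‖ : ℂ) ^ 2 = w * (starRingEnd ℂ) w := fun w => by
    rw [Complex.mul_conj, Complex.normSq_eq_norm_sq]; push_cast; rfl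
  have h0 := fun z => HasWirtingerAt.of_hasDerivAt (hf z).hasDerivAt
  have h1 := fun z => HasWirtingerAt.of_hasDerivAt (hf1 z).hasDerivAt
  have h2 := fun z => HasWirtingerAt.of_hasDerivAt (hf2 z).hasDerivAt
  refine ⟨fun z => deriv (deriv f) z * (starRingEnd ℂ) (deriv f z) * ((‖f z‖ ^ 2 + ε) ^ k : ℝ) +
      deriv f z * (starRingEnd ℂ) (deriv f z) *
        (k * (((‖f z‖ ^ 2 + ε) ^ (k - 1) : ℝ) * (deriv f z * (starRingEnd ℂ) (f z)))),
    fun z => deriv f z * (starRingEnd ℂ) (deriv (deriv f) z) * ((‖f z‖ ^ 2 + ε) ^ k : ℝ) +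
      deriv f z * (starRingEnd ℂ) (deriv f z) *
        (k * (((‖f z‖ ^ 2 + ε) ^ (k - 1) : ℝ) * (f z * (starRingEnd ℂ) (deriv f z)))),
    fun z => deriv (deriv (deriv f)) z * (starRingEnd ℂ) (deriv f z) *
        ((‖f z‖ ^ 2 + ε) ^ k : ℝ) +
      deriv (deriv f) z * (starRingEnd ℂ) (deriv f z) *
        ((k * (‖f z‖ ^ 2 + ε) ^ (k - 1) : ℝ) * (deriv f z * (starRingEnd ℂ) (f z))) +
      (deriv (deriv f) z * (starRingEnd ℂ) (deriv f z) *
        (k * (((‖f z‖ ^ 2 + ε) ^ (k - 1) : ℝ) * (deriv f z * (starRingEnd ℂ) (f z)))) +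
      deriv f z * (starRingEnd ℂ) (deriv f z) *
        (k * (((k - 1) * (‖f z‖ ^ 2 + ε) ^ (k - 1 - 1) : ℝ) *
          (deriv f z * (starRingEnd ℂ) (f z)) * (deriv f z * (starRingEnd ℂ) (f z)) +
          ((‖f z‖ ^ 2 + ε) ^ (k - 1) : ℝ) * (deriv (deriv f) z * (starRingEnd ℂ) (f z))))),
    by fun_prop, by fun_prop, fun z => ?_, fun z => ?_⟩
  · have h := ((h1 z).mul (h1 z).conj).mul (hasWirtingerAt_normSq_add_rpow hf hε k z)
    simp only [Complex.ofReal_mul, Complex.ofReal_pow, e]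
    refine h.congr_deriv ?_ ?_
    · push_cast; rw [map_zero]; ring
    · push_cast; ring
  · have hk : HasWirtingerAt (fun _ => (k : ℂ)) 0 0 z := .const
    have h := (((h2 z).mul (h1 z).conj).mul (hasWirtingerAt_normSq_add_rpow hf hε k z)).add
      (((h1 z).mul (h1 z).conj).mul (hk.mul ((hasWirtingerAt_normSq_add_rpow hf hε (k - 1) z).mul
        ((h1 z).mul (h0 z).conj))))
    refine h.congr_deriv ?_ ?_
    · push_cast; simp only [map_zero]; ring
    · have hre : ((2 * (deriv (deriv f) z * f z * (starRingEnd ℂ) (deriv f z) ^ 2).re : ℝ) : ℂ) =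
          deriv (deriv f) z * f z * (starRingEnd ℂ) (deriv f z) ^ 2 +
            (starRingEnd ℂ) (deriv (deriv f) z) * (starRingEnd ℂ) (f z) * (deriv f z) ^ 2 := by
        rw [← Complex.add_conj]; simp
      have e4 : (‖deriv f z‖ : ℂ) ^ 4 = (deriv f z * (starRingEnd ℂ) (deriv f z)) ^ 2 := by
        rw [← e]; ring
      rw [derivNormSqLaplacian, Complex.ofReal_add, Complex.ofReal_add,
        Complex.ofReal_mul (2 * _), hre]
      simp only [Complex.ofReal_mul, Complex.ofReal_add, Complex.ofReal_pow, e, e4]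
      push_cast
      ring

theorem derivNormSqLaplacian_comb_nonneg (hε : 0 < ε) {m : ℝ} (hm : 1 ≤ m) (z : ℂ) :
    0 ≤ m ^ 2 * derivNormSqLaplacian f (m - 1) ε z -
      m * (m - 1) * ε * derivNormSqLaplacian f (m - 2) ε z := by
  have hP := normSq_add_pos (f := f) hε z
  set T := ‖f z‖ ^ 2 with hT
  set X := deriv (deriv f) z
  set Y := f z * (starRingEnd ℂ) (deriv f z) ^ 2
  have hT0 : 0 ≤ T := by positivity
  have hm1 : 0 ≤ m - 1 := by linarith
  set R := (T + ε) ^ (m - 4) with hR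
  have hR0 : 0 < R := Real.rpow_pos_of_pos hP _
  have e3 : (T + ε) ^ (m - 3) = R * (T + ε) := by
    rw [hR, ← Real.rpow_add_one hP.ne']; congr 1; ring
  have e2 : (T + ε) ^ (m - 2) = R * (T + ε) ^ 2 := by
    rw [show m - 2 = m - 3 + 1 by ring, Real.rpow_add_one hP.ne', e3]; ring
  have e1 : (T + ε) ^ (m - 1) = R * (T + ε) ^ 3 := by
    rw [show m - 1 = m - 2 + 1 by ring, Real.rpow_add_one hP.ne', e2]; ring
  set G := m * R * (T + ε) ^ 2 * (m * T + ε) with hG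
  set G₁ := m * (m - 1) * R * (T + ε) * (m * T + 2 * ε) with hG₁
  set H := m * (m - 1) * R * (m * (m - 1) * T ^ 2 + 4 * (m - 1) * ε * T + 2 * ε ^ 2) with hH
  have hGpos : 0 < G := by positivity
  have hY : ‖Y‖ ^ 2 = T * ‖deriv f z‖ ^ 4 := by
    simp only [Y, norm_mul, norm_pow, RCLike.norm_conj, hT]; ring
  have hXY : deriv (deriv f) z * f z * (starRingEnd ℂ) (deriv f z) ^ 2 = X * Y := by
    simp only [X, Y]; ring
  have key : m ^ 2 * derivNormSqLaplacian f (m - 1) ε z -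
      m * (m - 1) * ε * derivNormSqLaplacian f (m - 2) ε z =
      ‖X‖ ^ 2 * G + 2 * (X * Y).re * G₁ + ‖deriv f z‖ ^ 4 * H := by
    rw [derivNormSqLaplacian, derivNormSqLaplacian, hXY, ← hT, show m - 1 - 1 = m - 2 by ring,
      show m - 2 - 1 = m - 3 by ring, show m - 3 - 1 = m - 4 by ring, e1, e2, e3]
    simp only [hG, hG₁, hH, ← hR]
    ring
  have hdisc : T * G₁ ^ 2 ≤ G * H := by
    have : G * H - T * G₁ ^ 2 = m ^ 2 * (m - 1) * R ^ 2 * (T + ε) ^ 2 *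
        (m * (m - 1) * ε * T ^ 2 + 2 * m * ε ^ 2 * T + 2 * ε ^ 3) := by
      simp only [hG, hG₁, hH]; ring
    have h2 : 0 ≤ G * H - T * G₁ ^ 2 := by rw [this]; positivity
    linarith
  have hre : -(‖X‖ * ‖Y‖) ≤ (X * Y).re := by
    rw [← norm_mul]; exact neg_le_of_abs_le (Complex.abs_re_le_norm _)
  have hG₁0 : 0 ≤ G₁ := by positivity
  rw [key]
  refine nonneg_of_mul_nonneg_right ?_ hGpos
  have h1 := mul_le_mul_of_nonneg_right hre (mul_nonneg hG₁0 hGpos.le)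
  have h2 := mul_le_mul_of_nonneg_right hdisc (by positivity : 0 ≤ ‖deriv f z‖ ^ 4)
  have h3 : G₁ ^ 2 * ‖Y‖ ^ 2 = T * G₁ ^ 2 * ‖deriv f z‖ ^ 4 := by rw [hY]; ring
  clear_value G G₁ H
  linarith [sq_nonneg (G * ‖X‖ - G₁ * ‖Y‖)]

theorem monotoneOn_circleSqIntegral_normSqLaplacian (hf : Differentiable ℂ f) (hε : 0 < ε) {m : ℝ}
    (hm : 1 ≤ m) : MonotoneOn (circleSqIntegral (normSqLaplacian f m ε)) (Set.Ici 0) := by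
  obtain ⟨a, b, c, cb, cc, hb, hc⟩ := exists_hasWirtingerAt_derivNormSq hf hε (m - 1)
  obtain ⟨a', b', c', cb', cc', hb', hc'⟩ := exists_hasWirtingerAt_derivNormSq hf hε (m - 2)
  have k1 : ∀ z, HasWirtingerAt (fun _ => ((m ^ 2 : ℝ) : ℂ)) 0 0 z := fun z => .const
  have k2 : ∀ z, HasWirtingerAt (fun _ => ((m * (m - 1) * ε : ℝ) : ℂ)) 0 0 z := fun z => .const
  have l1 := continuous_derivNormSqLaplacian hf hε (m - 1)
  have l2 := continuous_derivNormSqLaplacian hf hε (m - 2)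
  refine monotoneOn_circleSqIntegral
    (a := fun z => ((m ^ 2 : ℝ) : ℂ) * a z - ((m * (m - 1) * ε : ℝ) : ℂ) * a' z)
    (b := fun z => ((m ^ 2 : ℝ) : ℂ) * b z - ((m * (m - 1) * ε : ℝ) : ℂ) * b' z)
    (c := fun z => ((m ^ 2 : ℝ) : ℂ) * c z - ((m * (m - 1) * ε : ℝ) : ℂ) * c' z)
    (g := fun z => m ^ 2 * derivNormSqLaplacian f (m - 1) ε z -
      m * (m - 1) * ε * derivNormSqLaplacian f (m - 2) ε z)
    (fun z => ?_) (by fun_prop) (fun z => ?_) (by fun_prop) (by fun_prop)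
    (derivNormSqLaplacian_comb_nonneg hε hm)
  · have h := (((k1 z).mul (hb z)).sub ((k2 z).mul (hb' z)))
    simp only [← Complex.ofReal_mul, ← Complex.ofReal_sub] at h
    have e : (fun z => (normSqLaplacian f m ε z : ℂ)) = fun z =>
        ((m ^ 2 * (‖deriv f z‖ ^ 2 * (‖f z‖ ^ 2 + ε) ^ (m - 1)) -
          m * (m - 1) * ε * (‖deriv f z‖ ^ 2 * (‖f z‖ ^ 2 + ε) ^ (m - 2)) : ℝ) : ℂ) := by
      ext z; rw [normSqLaplacian]; congr 1; ring
    rw [e]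
    exact h.congr_deriv (by ring) (by ring)
  · refine (((k1 z).mul (hc z)).sub ((k2 z).mul (hc' z))).congr_deriv (by ring) ?_
    push_cast; ring

/-- For `m ≥ 1` the circle means of `(‖f‖² + ε) ^ m` are convex in the squared radius. -/
theorem exists_circleSqIntegral_normSq_eq (hf : Differentiable ℂ f) (hε : 0 < ε) {m : ℝ}
    (hm : 1 ≤ m) :
    ∃ ψ : ℝ → ℝ, (∀ s, 0 < s → 0 ≤ ψ s) ∧ MonotoneOn ψ (Set.Ioi 0) ∧ ∀ s, 0 ≤ s →
      IntervalIntegrable ψ volume 0 s ∧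
      circleSqIntegral (fun z => (‖f z‖ ^ 2 + ε) ^ m) s =
        circleSqIntegral (fun z => (‖f z‖ ^ 2 + ε) ^ m) 0 + ∫ t in 0..s, ψ t := by
  obtain ⟨c, cc, hc⟩ := exists_hasWirtingerAt_normSq_rpow_deriv hf hε m
  have c0 := hf.continuous
  have c1 := continuous_deriv_of_differentiable hf
  have r1 := continuous_normSq_add_rpow hf hε (m - 1)
  exact exists_circleSqIntegral_eq_add_integral
    (fun z => hasWirtingerAt_normSq_add_rpow hf hε m z) (by fun_prop) hc cc
    (continuous_normSqLaplacian hf hε m) (normSqLaplacian_nonneg hε (by linarith))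
    (monotoneOn_circleSqIntegral_normSqLaplacian hf hε hm)

end NormSq

/-- The distribution of `‖z‖²` under the Bergman measure. -/
noncomputable def radialMeasure (α : ℝ) : Measure ℝ :=
  (volume.restrict (Set.Ioo 0 1)).withDensity
    fun s => ENNReal.ofReal ((α - 1) * (1 - s) ^ (α - 2))

theorem lintegral_radialMeasure (α : ℝ) {h : ℝ → ENNReal} (hh : Measurable h) :
    ∫⁻ s, h s ∂radialMeasure α =
      ∫⁻ s in Set.Ioo 0 1, ENNReal.ofReal ((α - 1) * (1 - s) ^ (α - 2)) * h s := by
  rw [radialMeasure, lintegral_withDensity_eq_lintegral_mul _ (by fun_prop) hh]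
  rfl

theorem ae_mem_Ioo_radialMeasure (α : ℝ) : ∀ᵐ s ∂radialMeasure α, s ∈ Set.Ioo (0 : ℝ) 1 :=
  (withDensity_absolutelyContinuous _ _).ae_le (ae_restrict_mem measurableSet_Ioo)

theorem setLIntegral_Ioo_sub_left (h : ℝ → ENNReal) :
    ∫⁻ s in Set.Ioo (0 : ℝ) 1, h (1 - s) = ∫⁻ s in Set.Ioo (0 : ℝ) 1, h s := by
  rw [← lintegral_indicator measurableSet_Ioo, ← lintegral_indicator measurableSet_Ioo,
    ← lintegral_sub_left_eq_self _ (1 : ℝ)]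
  refine lintegral_congr fun s => ?_
  by_cases hs : s ∈ Set.Ioo (0 : ℝ) 1
  · have hs' : 1 - s ∈ Set.Ioo (0 : ℝ) 1 := ⟨by linarith [hs.2], by linarith [hs.1]⟩
    rw [Set.indicator_of_mem hs', Set.indicator_of_mem hs]; simp
  · have hs' : 1 - s ∉ Set.Ioo (0 : ℝ) 1 := fun h => hs ⟨by linarith [h.2], by linarith [h.1]⟩
    rw [Set.indicator_of_notMem hs', Set.indicator_of_notMem hs]

theorem lintegral_radialMeasure_eq (α : ℝ) {h : ℝ → ENNReal} (hh : Measurable h) :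
    ∫⁻ s, h s ∂radialMeasure α =
      ∫⁻ τ in Set.Ioo 0 1, ENNReal.ofReal ((α - 1) * τ ^ (α - 2)) * h (1 - τ) := by
  rw [lintegral_radialMeasure α hh, ← setLIntegral_Ioo_sub_left]
  refine lintegral_congr fun s => ?_
  simp

theorem radialMeasure_univ {α : ℝ} (hα : 1 < α) : radialMeasure α Set.univ = 1 := by
  rw [← lintegral_one, lintegral_radialMeasure_eq α (h := fun _ => 1) measurable_const]
  simp only [mul_one]
  have hi : IntervalIntegrable (fun τ : ℝ => (α - 1) * τ ^ (α - 2)) volume 0 1 :=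
    (intervalIntegral.intervalIntegrable_rpow' (by linarith)).const_mul _
  rw [restrict_Ioo_eq_restrict_Ioc, ← ofReal_integral_eq_lintegral_ofReal
    ((intervalIntegrable_iff_integrableOn_Ioc_of_le zero_le_one).1 hi),
    ← intervalIntegral.integral_of_le zero_le_one, intervalIntegral.integral_const_mul,
    integral_rpow (Or.inl (by linarith)), Real.one_rpow, Real.zero_rpow (by linarith)]
  · rw [show α - 2 + 1 = α - 1 by ring, sub_zero, mul_one_div_cancel (by linarith),
      ENNReal.ofReal_one]
  · filter_upwards [ae_restrict_mem measurableSet_Ioc] with τ hτ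
    exact mul_nonneg (by linarith) (Real.rpow_nonneg hτ.1.le _)

instance isProbabilityMeasure_radialMeasure {α : ℝ} [Fact (1 < α)] :
    IsProbabilityMeasure (radialMeasure α) := ⟨radialMeasure_univ Fact.out⟩

theorem lintegral_radialMeasure_sub {β y : ℝ} (hβ : 1 < β) (hy : 0 ≤ y) :
    ∫⁻ s, ENNReal.ofReal (s - y) ∂radialMeasure β = ENNReal.ofReal ((max (1 - y) 0) ^ β / β) := by
  rcases le_or_gt 1 y with h1 | h1
  · rw [max_eq_right (by linarith), Real.zero_rpow (by linarith), zero_div, ENNReal.ofReal_zero]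
    refine (lintegral_congr_ae ?_).trans lintegral_zero
    filter_upwards [ae_mem_Ioo_radialMeasure β] with s hs
    exact ENNReal.ofReal_of_nonpos (by linarith [hs.2])
  rw [max_eq_left (by linarith), lintegral_radialMeasure_eq β (by fun_prop)]
  obtain ⟨hi, he⟩ := integral_extremal_mul_rpow (c := 1 - y) (s := β) (by linarith) hβ
  have h0 : ∀ τ ∈ Set.Ioi (0 : ℝ),
      0 ≤ (β - 1) * ((Set.Ioc 0 (1 - y)).indicator (fun τ => (1 - y) / τ - 1) τ * τ ^ (β - 1)) := by
    intro τ hτ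
    have hτ : 0 < τ := hτ
    refine mul_nonneg (by linarith) (mul_nonneg (Set.indicator_nonneg (fun x hx => ?_) τ)
      (by positivity))
    rw [sub_nonneg, one_le_div hx.1]; exact hx.2
  calc _ = ∫⁻ τ in Set.Ioi 0, ENNReal.ofReal ((β - 1) *
        ((Set.Ioc 0 (1 - y)).indicator (fun τ => (1 - y) / τ - 1) τ * τ ^ (β - 1))) := by
        rw [← lintegral_indicator measurableSet_Ioo, ← lintegral_indicator measurableSet_Ioi]
        refine lintegral_congr fun τ => ?_
        by_cases hτ : 0 < τ
        swap
        · rw [Set.indicator_of_notMem (fun h => hτ h.1), Set.indicator_of_notMem (by exact hτ)]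
        rw [Set.indicator_of_mem (show τ ∈ Set.Ioi 0 from hτ)]
        by_cases hτ' : τ ≤ 1 - y
        · rw [Set.indicator_of_mem (show τ ∈ Set.Ioc 0 (1 - y) from ⟨hτ, hτ'⟩)]
          have e : ENNReal.ofReal ((β - 1) * τ ^ (β - 2)) * ENNReal.ofReal (1 - τ - y) =
              ENNReal.ofReal ((β - 1) * (((1 - y) / τ - 1) * τ ^ (β - 1))) := by
            rw [← ENNReal.ofReal_mul (mul_nonneg (by linarith) (by positivity)),
              show β - 1 = β - 2 + 1 by ring, Real.rpow_add_one hτ.ne']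
            congr 1
            field_simp
            ring
          rcases lt_or_ge τ 1 with h | h
          · rw [Set.indicator_of_mem (show τ ∈ Set.Ioo 0 1 from ⟨hτ, h⟩), e]
          · rw [Set.indicator_of_notMem (fun h' => absurd h'.2 (not_lt.2 h)), ← e,
              ENNReal.ofReal_of_nonpos (p := 1 - τ - y) (by linarith), mul_zero]
        · rw [Set.indicator_of_notMem (s := Set.Ioc 0 (1 - y)) (fun h => hτ' h.2)]
          simp only [zero_mul, mul_zero, ENNReal.ofReal_zero]
          refine Set.indicator_apply_eq_zero.2 fun _ => ?_
          rw [ENNReal.ofReal_of_nonpos (p := 1 - τ - y) (by linarith), mul_zero]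
    _ = _ := by
        rw [← ofReal_integral_eq_lintegral_ofReal (hi.const_mul _)
          ((ae_restrict_iff' measurableSet_Ioi).2 (Filter.Eventually.of_forall h0)),
          integral_const_mul, he]
        congr 1
        have : β - 1 ≠ 0 := by linarith
        field_simp

/-- Convex order between the dilated radial measures, tested on `(· - x)₊`. -/
theorem lintegral_radialMeasure_dilate_sub_le {β γ ρ x : ℝ} (hβ : 1 < β) (hβγ : β ≤ γ)
    (hρ0 : 0 ≤ ρ) (hρ : ρ ≤ β / γ) (hx : 0 ≤ x) :
    ∫⁻ s, ENNReal.ofReal (ρ * s - x) ∂radialMeasure β ≤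
      ∫⁻ s, ENNReal.ofReal (s - x) ∂radialMeasure γ := by
  have hγ0 : 0 < γ := by linarith
  have hβ0 : 0 < β := by linarith
  rcases hρ0.eq_or_lt with rfl | hρ0
  · refine le_trans (le_of_eq ?_) (zero_le)
    simp [ENNReal.ofReal_of_nonpos (neg_nonpos.2 hx)]
  have e : ∀ s, ENNReal.ofReal (ρ * s - x) = ENNReal.ofReal ρ * ENNReal.ofReal (s - x / ρ) :=
    fun s => by
      rw [← ENNReal.ofReal_mul hρ0.le]; congr 1; field_simp
  simp only [e]
  rw [lintegral_const_mul _ (by fun_prop), lintegral_radialMeasure_sub hβ (by positivity),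
    lintegral_radialMeasure_sub (by linarith) hx, ← ENNReal.ofReal_mul hρ0.le]
  refine ENNReal.ofReal_le_ofReal ?_
  rcases le_or_gt (1 - x / ρ) 0 with h | h
  · rw [max_eq_right h, Real.zero_rpow hβ0.ne', zero_div, mul_zero]
    positivity
  have hx1 : x < ρ := by
    rw [sub_pos, div_lt_one hρ0] at h; exact h
  have hρ1 : ρ ≤ 1 := hρ.trans ((div_le_one hγ0).2 hβγ)
  rw [max_eq_left h.le, max_eq_left (by linarith)]
  have hb : 1 - x / ρ ≤ (1 - x) ^ (γ / β) := by
    have h1 := one_add_mul_self_le_rpow_one_add (s := -x) (by linarith) ((one_le_div hβ0).2 hβγ)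
    rw [← sub_eq_add_neg] at h1
    refine le_trans ?_ h1
    have : γ / β * x ≤ x / ρ := by
      rw [le_div_iff₀ hρ0]
      have : ρ * (γ / β) ≤ 1 := by
        rw [le_div_iff₀ hγ0] at hρ
        rw [← mul_div_assoc, div_le_one hβ0]; exact hρ
      nlinarith
    linarith
  have hb' : (1 - x / ρ) ^ β ≤ (1 - x) ^ γ := by
    refine (Real.rpow_le_rpow h.le hb hβ0.le).trans_eq ?_
    rw [← Real.rpow_mul (by linarith), div_mul_cancel₀ _ hβ0.ne']
  calc ρ * ((1 - x / ρ) ^ β / β) ≤ β / γ * ((1 - x) ^ γ / β) := by gcongr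
    _ = _ := by field_simp

/-- Convex order between the dilated radial measures, tested on primitives of
nonnegative nondecreasing functions. -/
theorem lintegral_radialMeasure_primitive_le {β γ ρ : ℝ} (hβ : 1 < β) (hβγ : β ≤ γ)
    (hρ0 : 0 ≤ ρ) (hρ : ρ ≤ β / γ) {ψ : ℝ → ℝ} (hψ0 : ∀ s, 0 < s → 0 ≤ ψ s)
    (hψ : MonotoneOn ψ (Set.Ioi 0)) :
    ∫⁻ s, (∫⁻ t in Set.Ioo 0 (ρ * s), ENNReal.ofReal (ψ t)) ∂radialMeasure β ≤
      ∫⁻ s, (∫⁻ t in Set.Ioo 0 s, ENNReal.ofReal (ψ t)) ∂radialMeasure γ := by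
  have : Fact (1 < β) := ⟨hβ⟩
  have : Fact (1 < γ) := ⟨by linarith⟩
  have hρ1 : ρ ≤ 1 := hρ.trans ((div_le_one (by linarith)).2 hβγ)
  set S : ℝ → Set ℝ := fun l => insert 1 {t | t ∈ Set.Ioo 0 1 ∧ l < ψ t} with hS
  set x : ℝ → ℝ := fun l => sInf (S l) with hx
  have hSb : ∀ l, BddBelow (S l) := fun l => ⟨0, by
    rintro t (rfl | ht); exacts [zero_le_one, ht.1.1.le]⟩
  have hx0 : ∀ l, 0 ≤ x l := fun l => le_csInf ⟨1, Set.mem_insert _ _⟩ (by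
    rintro t (rfl | ht); exacts [zero_le_one, ht.1.1.le])
  have hxm : Measurable x := Monotone.measurable fun l l' hl =>
    csInf_le_csInf (hSb l) ⟨1, Set.mem_insert _ _⟩
      (Set.insert_subset_insert fun t ht => ⟨ht.1, hl.trans_lt ht.2⟩)
  have layer : ∀ y, 0 ≤ y → y ≤ 1 → ∫⁻ t in Set.Ioo 0 y, ENNReal.ofReal (ψ t) =
      ∫⁻ l in Set.Ioi 0, ENNReal.ofReal (y - x l) := by
    intro y hy0 hy1
    rw [lintegral_eq_lintegral_meas_lt]
    · refine lintegral_congr fun l => ?_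
      rw [Measure.restrict_apply' measurableSet_Ioo]
      refine le_antisymm ?_ ?_
      · rw [← Real.volume_Icc]
        refine measure_mono fun t ht => ⟨csInf_le (hSb l) (Or.inr ⟨?_, ht.1⟩), ht.2.2.le⟩
        exact ⟨ht.2.1, ht.2.2.trans_le hy1⟩
      · rw [← Real.volume_Ioo]
        refine measure_mono fun t ht => ?_
        obtain ⟨t', ht', htt'⟩ := exists_lt_of_csInf_lt ⟨1, Set.mem_insert _ _⟩ ht.1
        rcases ht' with rfl | ht'
        · exact absurd (htt'.trans ht.2) (not_lt.2 hy1)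
        have ht0 : 0 < t := ht'.1.1.trans htt'
        exact ⟨ht'.2.trans_le (hψ ht'.1.1 ht0 htt'.le), ht0, ht.2⟩
    · filter_upwards [ae_restrict_mem measurableSet_Ioo] with t ht using hψ0 t ht.1
    · exact (aemeasurable_restrict_of_monotoneOn measurableSet_Ioo
        (hψ.mono Set.Ioo_subset_Ioi_self))
  calc _ = ∫⁻ s, (∫⁻ l in Set.Ioi 0, ENNReal.ofReal (ρ * s - x l)) ∂radialMeasure β := by
        refine lintegral_congr_ae ?_
        filter_upwards [ae_mem_Ioo_radialMeasure β] with s hs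
        exact layer _ (mul_nonneg hρ0 hs.1.le) (by nlinarith [hs.1, hs.2])
    _ = ∫⁻ l in Set.Ioi 0, ∫⁻ s, ENNReal.ofReal (ρ * s - x l) ∂radialMeasure β :=
        lintegral_lintegral_swap (by fun_prop)
    _ ≤ ∫⁻ l in Set.Ioi 0, ∫⁻ s, ENNReal.ofReal (s - x l) ∂radialMeasure γ :=
        lintegral_mono fun l =>
          lintegral_radialMeasure_dilate_sub_le hβ hβγ hρ0 hρ (hx0 l)
    _ = ∫⁻ s, (∫⁻ l in Set.Ioi 0, ENNReal.ofReal (s - x l)) ∂radialMeasure γ :=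
        lintegral_lintegral_swap (by fun_prop)
    _ = _ := by
        refine lintegral_congr_ae ?_
        filter_upwards [ae_mem_Ioo_radialMeasure γ] with s hs
        exact (layer _ hs.1.le hs.2.le).symm

theorem measurable_lintegral_polarPt_sqrt {g : ℂ → ENNReal} (hg : Measurable g) :
    Measurable fun s => ∫⁻ θ in Set.Ioo (-Real.pi) Real.pi, g (polarPt (√s) θ) :=
  Measurable.lintegral_prod_right (f := fun s θ => g (polarPt (√s) θ)) (hg.comp
    (continuous_polarPt.comp
      ((Real.continuous_sqrt.comp continuous_fst).prodMk continuous_snd)).measurable)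

theorem lintegral_bergmanMeasure_eq_radialMeasure {g : ℂ → ENNReal} (hg : Measurable g) (α : ℝ) :
    ∫⁻ z, g z ∂bergmanMeasure α = ENNReal.ofReal (1 / (2 * Real.pi)) *
      ∫⁻ s, (∫⁻ θ in Set.Ioo (-Real.pi) Real.pi, g (polarPt (√s) θ)) ∂radialMeasure α := by
  have hG := measurable_lintegral_polarPt_sqrt hg
  have hsq : (fun r : ℝ => r ^ 2) '' Set.Ioo 0 1 = Set.Ioo 0 1 := by
    ext s
    constructor
    · rintro ⟨r, hr, rfl⟩
      exact ⟨pow_pos hr.1 2, pow_lt_one₀ hr.1.le hr.2 two_ne_zero⟩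
    · intro hs
      refine ⟨√s, ⟨Real.sqrt_pos.2 hs.1, ?_⟩, Real.sq_sqrt hs.1.le⟩
      rw [Real.sqrt_lt' one_pos, one_pow]; exact hs.2
  have hinj : Set.InjOn (fun r : ℝ => r ^ 2) (Set.Ioo 0 1) := fun a ha b hb h =>
    (pow_left_inj₀ ha.1.le hb.1.le two_ne_zero).1 h
  have hπ := Real.pi_pos
  have hm : Measurable fun z : ℂ =>
      ENNReal.ofReal ((α - 1) * (1 - ‖z‖ ^ 2) ^ (α - 2) / Real.pi) * g z := by fun_prop
  rw [lintegral_bergmanMeasure hg, ← lintegral_indicator measurableSet_ball,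
    lintegral_eq_lintegral_polarPt (hm.indicator measurableSet_ball),
    lintegral_radialMeasure α hG, ← hsq,
    lintegral_image_eq_lintegral_abs_deriv_mul measurableSet_Ioo
      (fun r _ => (hasDerivAt_pow 2 r).hasDerivWithinAt) hinj,
    ← lintegral_const_mul' _ _ ENNReal.ofReal_ne_top, ← lintegral_indicator measurableSet_Ioo,
    ← lintegral_indicator measurableSet_Ioi]
  refine lintegral_congr fun r => ?_
  by_cases hr : 0 < r
  swap
  · rw [Set.indicator_of_notMem (by exact hr), Set.indicator_of_notMem (fun h => hr h.1)]
  rw [Set.indicator_of_mem (show r ∈ Set.Ioi 0 from hr)]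
  by_cases hr1 : r < 1
  · rw [Set.indicator_of_mem (show r ∈ Set.Ioo 0 1 from ⟨hr, hr1⟩)]
    have hb : ∀ θ, polarPt r θ ∈ ball (0 : ℂ) 1 := fun θ => by
      rw [mem_ball_zero_iff, norm_polarPt, abs_of_pos hr]; exact hr1
    simp only [Set.indicator_of_mem (hb _), norm_polarPt, sq_abs, Real.sqrt_sq hr.le]
    rw [lintegral_const_mul' _ _ ENNReal.ofReal_ne_top, ← mul_assoc, ← mul_assoc, ← mul_assoc,
      ← ENNReal.ofReal_mul hr.le, ← ENNReal.ofReal_mul (by positivity),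
      ← ENNReal.ofReal_mul (by positivity)]
    congr 2
    rw [abs_of_pos (by positivity)]
    field_simp
    norm_num
    ring
  · rw [Set.indicator_of_notMem (s := Set.Ioo (0 : ℝ) 1) (fun h => hr1 h.2)]
    have hb : ∀ θ, polarPt r θ ∉ ball (0 : ℂ) 1 := fun θ => by
      rw [mem_ball_zero_iff, norm_polarPt, abs_of_pos hr]; exact hr1
    simp [Set.indicator_of_notMem (hb _)]

theorem bergmanMeasure_univ {α : ℝ} (hα : 1 < α) : bergmanMeasure α Set.univ = 1 := by
  have hπ := Real.pi_pos
  rw [← lintegral_one, lintegral_bergmanMeasure_eq_radialMeasure measurable_const]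
  simp only [lintegral_const, Measure.restrict_apply_univ, Real.volume_Ioo, radialMeasure_univ hα,
    one_mul, mul_one]
  rw [← ENNReal.ofReal_mul (by positivity), ← ENNReal.ofReal_one]
  congr 1
  field_simp
  ring

theorem lintegral_ofReal_polarPt_sqrt {u : ℂ → ℝ} (hu : Continuous u) (hu0 : ∀ z, 0 ≤ u z) (s : ℝ) :
    ∫⁻ θ in Set.Ioo (-Real.pi) Real.pi, ENNReal.ofReal (u (polarPt (√s) θ)) =
      ENNReal.ofReal (circleSqIntegral u s) := by
  have hc : Continuous fun θ => u (polarPt (√s) θ) :=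
    hu.comp (continuous_polarPt.comp (continuous_const.prodMk continuous_id))
  have hπ : -Real.pi ≤ Real.pi := by linarith [Real.pi_pos]
  rw [circleSqIntegral, intervalIntegral.integral_of_le hπ, restrict_Ioo_eq_restrict_Ioc,
    ofReal_integral_eq_lintegral_ofReal
      ((intervalIntegrable_iff_integrableOn_Ioc_of_le hπ).1 (hc.intervalIntegrable _ _))
      (Filter.Eventually.of_forall fun θ => hu0 _)]

theorem mul_polarPt_sqrt {r : ℝ} (hr : 0 ≤ r) {s : ℝ} (θ : ℝ) :
    (r : ℂ) * polarPt (√s) θ = polarPt (√(r ^ 2 * s)) θ := by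
  rw [Real.sqrt_mul (sq_nonneg r), Real.sqrt_sq hr, polarPt, polarPt]
  push_cast
  ring

/-- Dilation contracts the integrals of `(‖f‖² + ε) ^ m` from weight `γ` to weight `β ≤ γ`. -/
theorem lintegral_dilate_reg_le {f : ℂ → ℂ} (hf : Differentiable ℂ f) {ε : ℝ} (hε : 0 < ε)
    {m β γ r : ℝ} (hm : 1 ≤ m) (hβ : 1 < β) (hβγ : β ≤ γ) (hr0 : 0 ≤ r) (hr : r ^ 2 ≤ β / γ) :
    ∫⁻ z, ENNReal.ofReal ((‖f (r * z)‖ ^ 2 + ε) ^ m) ∂bergmanMeasure β ≤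
      ∫⁻ z, ENNReal.ofReal ((‖f z‖ ^ 2 + ε) ^ m) ∂bergmanMeasure γ := by
  have hcu := continuous_normSq_add_rpow hf hε m
  have h0u : ∀ z, 0 ≤ (‖f z‖ ^ 2 + ε) ^ m := fun z => by positivity
  have hfr : Differentiable ℂ fun z => f (r * z) := hf.comp (differentiable_id.const_mul _)
  obtain ⟨ψ, hψ0, hψm, hψ⟩ := exists_circleSqIntegral_normSq_eq hf hε hm
  set u : ℂ → ℝ := fun z => (‖f z‖ ^ 2 + ε) ^ m with hu
  have key : ∀ s, 0 ≤ s → ∫⁻ θ in Set.Ioo (-Real.pi) Real.pi, ENNReal.ofReal (u (polarPt (√s) θ)) =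
      ENNReal.ofReal (circleSqIntegral u 0) + ∫⁻ t in Set.Ioo 0 s, ENNReal.ofReal (ψ t) := by
    intro s hs
    obtain ⟨hi, he⟩ := hψ s hs
    have hn : 0 ≤ᵐ[volume.restrict (Set.Ioc 0 s)] ψ := by
      filter_upwards [ae_restrict_mem measurableSet_Ioc] with t ht using hψ0 t ht.1
    rw [lintegral_ofReal_polarPt_sqrt hcu h0u, he, intervalIntegral.integral_of_le hs,
      ENNReal.ofReal_add (circleSqIntegral_nonneg h0u 0) (integral_nonneg_of_ae hn),
      ofReal_integral_eq_lintegral_ofReal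
        ((intervalIntegrable_iff_integrableOn_Ioc_of_le hs).1 hi) hn,
      restrict_Ioo_eq_restrict_Ioc]
  change ∫⁻ z, ENNReal.ofReal (u (r * z)) ∂_ ≤ ∫⁻ z, ENNReal.ofReal (u z) ∂_
  rw [lintegral_bergmanMeasure_eq_radialMeasure (by fun_prop),
    lintegral_bergmanMeasure_eq_radialMeasure (by fun_prop)]
  refine mul_le_mul_right ?_ _
  calc _ = ∫⁻ s, (ENNReal.ofReal (circleSqIntegral u 0) +
          ∫⁻ t in Set.Ioo 0 (r ^ 2 * s), ENNReal.ofReal (ψ t)) ∂radialMeasure β := by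
        refine lintegral_congr_ae ?_
        filter_upwards [ae_mem_Ioo_radialMeasure β] with s hs
        simp only [mul_polarPt_sqrt hr0]
        exact key _ (mul_nonneg (sq_nonneg r) hs.1.le)
    _ ≤ ∫⁻ s, (ENNReal.ofReal (circleSqIntegral u 0) +
          ∫⁻ t in Set.Ioo 0 s, ENNReal.ofReal (ψ t)) ∂radialMeasure γ := by
        rw [lintegral_add_left measurable_const, lintegral_add_left measurable_const,
          lintegral_const, lintegral_const, radialMeasure_univ hβ,
          radialMeasure_univ (hβ.trans_le hβγ)]
        exact add_le_add_right
          (lintegral_radialMeasure_primitive_le hβ hβγ (sq_nonneg r) hr hψ0 hψm) _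
    _ = _ := by
        refine lintegral_congr_ae ?_
        filter_upwards [ae_mem_Ioo_radialMeasure γ] with s hs
        exact (key s hs.1.le).symm

theorem hypercontractive_reg {f : ℂ → ℂ} (hf : Differentiable ℂ f) {ε : ℝ} (hε : 0 < ε)
    {α β p q r : ℝ} (hα : 1 < α) (hβ : 1 < β) (hp : 0 < p) (hpq : p ≤ q)
    (hq2 : 2 ≤ q) (h : β * p ≤ α * q) (hr0 : 0 ≤ r) (hr : r ^ 2 ≤ β * p / (α * q)) :
    (∫⁻ z, ENNReal.ofReal ((‖f (r * z)‖ ^ 2 + ε) ^ (q / 2)) ∂bergmanMeasure β) ^ (1 / q) ≤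
      (∫⁻ z, ENNReal.ofReal ((‖f z‖ ^ 2 + ε) ^ (p / 2)) ∂bergmanMeasure α) ^ (1 / p) := by
  refine le_trans (ENNReal.rpow_le_rpow ?_ (by positivity))
    (bergman_embedding_reg hf hε hα hp hpq)
  refine lintegral_dilate_reg_le hf hε (by linarith) hβ ?_ hr0 (hr.trans_eq ?_)
  · rwa [le_div_iff₀ hp]
  · field_simp

/-- A holomorphic function on the unit disk is a locally bounded pointwise limit of entire
functions. -/
theorem exists_entire_tendsto {f : ℂ → ℂ} (hf : DifferentiableOn ℂ f (ball 0 1)) :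
    ∃ g : ℕ → ℂ → ℂ, (∀ n, Differentiable ℂ (g n)) ∧
      (∀ z ∈ ball (0 : ℂ) 1, Filter.Tendsto (fun n => g n z) Filter.atTop (nhds (f z))) ∧
      ∀ R, R < 1 → ∃ C, ∀ n z, ‖z‖ ≤ R → ‖g n z‖ ≤ C := by
  have hs : ∀ z ∈ ball (0 : ℂ) 1, HasSum
      (fun n : ℕ => ((n.factorial : ℂ)⁻¹ * iteratedDeriv n f 0) * z ^ n) (f z) := fun z hz => by
    have := Complex.hasSum_taylorSeries_on_ball (r := 1) (c := 0) (by simpa using hf) (by simpa using hz)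
    simpa [mul_assoc, mul_comm, mul_left_comm] using this
  set a : ℕ → ℂ := fun n => (n.factorial : ℂ)⁻¹ * iteratedDeriv n f 0 with ha
  refine ⟨fun n z => ∑ k ∈ Finset.range n, a k * z ^ k, fun n => by fun_prop,
    fun z hz => (hs z hz).tendsto_sum_nat, fun R hR => ?_⟩
  rcases lt_or_ge R 0 with hR0 | hR0
  · exact ⟨0, fun n z hz => absurd (hz.trans_lt hR0) (not_lt.2 (norm_nonneg z))⟩
  have hsR := (hs R (by simpa [abs_of_nonneg hR0] using hR)).summable.norm
  refine ⟨∑' k, ‖a k * (R : ℂ) ^ k‖, fun n z hz => ?_⟩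
  refine (norm_sum_le _ _).trans (le_trans (Finset.sum_le_sum fun k _ => ?_)
    (hsR.sum_le_tsum (Finset.range n) fun _ _ => norm_nonneg _))
  simp only [norm_mul, norm_pow, Complex.norm_real, Real.norm_of_nonneg hR0]
  gcongr

/-- Regularized powers of a bounded pointwise limit converge in the mean. -/
theorem tendsto_lintegral_normSq_add_rpow {X : Type*} [MeasurableSpace X] {μ : Measure X}
    [IsFiniteMeasure μ] {g : ℕ → X → ℂ} {f : X → ℂ} {C p : ℝ} (hp : 0 < p)
    (hg : ∀ n, Measurable (g n)) (hC : ∀ᵐ x ∂μ, ∀ n, ‖g n x‖ ≤ C)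
    (hlim : ∀ᵐ x ∂μ, Filter.Tendsto (fun n => g n x) Filter.atTop (nhds (f x))) :
    Filter.Tendsto
      (fun n : ℕ => ∫⁻ x, ENNReal.ofReal ((‖g n x‖ ^ 2 + 1 / ((n : ℝ) + 1)) ^ (p / 2)) ∂μ)
      Filter.atTop (nhds (∫⁻ x, ENNReal.ofReal (‖f x‖ ^ p) ∂μ)) := by
  refine tendsto_lintegral_of_dominated_convergence
    (fun _ => ENNReal.ofReal ((C ^ 2 + 1) ^ (p / 2))) (fun n => ?_) (fun n => ?_) ?_ ?_
  · have := hg n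
    fun_prop
  · filter_upwards [hC] with x hx
    have h1 : 1 / ((n : ℝ) + 1) ≤ 1 := by
      rw [div_le_one (by positivity)]; linarith [n.cast_nonneg (α := ℝ)]
    have := hx n
    gcongr
  · rw [lintegral_const]
    exact ENNReal.mul_ne_top ENNReal.ofReal_ne_top (measure_ne_top _ _)
  · filter_upwards [hlim] with x hx
    have h1 : Filter.Tendsto (fun n : ℕ => ‖g n x‖ ^ 2 + 1 / ((n : ℝ) + 1)) Filter.atTop
        (nhds (‖f x‖ ^ 2)) := by
      simpa using (hx.norm.pow 2).add tendsto_one_div_add_atTop_nhds_zero_nat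
    have h2 := h1.rpow_const (p := p / 2) (Or.inr (by positivity))
    rw [← Real.rpow_natCast, ← Real.rpow_mul (norm_nonneg _), Nat.cast_ofNat,
      mul_div_cancel₀ _ two_ne_zero] at h2
    exact ENNReal.tendsto_ofReal h2

section

variable {f : ℂ → ℂ} {α β p q : ℝ}

theorem isFiniteMeasure_bergmanMeasure (hα : 1 < α) : IsFiniteMeasure (bergmanMeasure α) :=
  ⟨by rw [bergmanMeasure_univ hα]; exact ENNReal.one_lt_top⟩

/-- Hardy's theorem: the `p`-means over circles are nondecreasing in the radius. -/
theorem lintegral_polarPt_le (hf : DifferentiableOn ℂ f (ball 0 1)) (hp : 0 < p) {s t : ℝ}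
    (hs : 0 ≤ s) (hst : s ≤ t) (ht : t < 1) :
    ∫⁻ θ in Set.Ioo (-Real.pi) Real.pi, ENNReal.ofReal (‖f (polarPt (√s) θ)‖ ^ p) ≤
      ∫⁻ θ in Set.Ioo (-Real.pi) Real.pi, ENNReal.ofReal (‖f (polarPt (√t) θ)‖ ^ p) := by
  obtain ⟨g, hg, hlim, hbd⟩ := exists_entire_tendsto hf
  have lim : ∀ s, 0 ≤ s → s < 1 → Filter.Tendsto (fun n : ℕ =>
      ∫⁻ θ in Set.Ioo (-Real.pi) Real.pi,
        ENNReal.ofReal ((‖g n (polarPt (√s) θ)‖ ^ 2 + 1 / ((n : ℝ) + 1)) ^ (p / 2))) Filter.atTop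
      (nhds (∫⁻ θ in Set.Ioo (-Real.pi) Real.pi, ENNReal.ofReal (‖f (polarPt (√s) θ)‖ ^ p))) := by
    intro s hs hs1
    have hs1 : √s < 1 := by rw [Real.sqrt_lt' one_pos, one_pow]; exact hs1
    have hn : ∀ θ, ‖polarPt (√s) θ‖ = √s := fun θ => by
      rw [norm_polarPt, abs_of_nonneg (Real.sqrt_nonneg s)]
    obtain ⟨C, hC⟩ := hbd _ hs1
    refine tendsto_lintegral_normSq_add_rpow (C := C) hp (fun n => ?_) ?_ ?_
    · exact ((hg n).continuous.comp
        (continuous_polarPt.comp (continuous_const.prodMk continuous_id))).measurable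
    · exact Filter.Eventually.of_forall fun θ n => hC n _ (hn θ).le
    · exact Filter.Eventually.of_forall fun θ => hlim _ (by
        rw [mem_ball_zero_iff, hn]; exact hs1)
  refine le_of_tendsto_of_tendsto' (lim s hs (hst.trans_lt ht)) (lim t (hs.trans hst) ht)
    fun n => ?_
  have hε : 0 < 1 / ((n : ℝ) + 1) := by positivity
  have hcu := continuous_normSq_add_rpow (hg n) hε (p / 2)
  rw [lintegral_ofReal_polarPt_sqrt hcu (fun z => by positivity),
    lintegral_ofReal_polarPt_sqrt hcu (fun z => by positivity)]
  exact ENNReal.ofReal_le_ofReal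
    (monotoneOn_circleSqIntegral_normSq (hg n) hε (by positivity) hs (hs.trans hst) hst)

theorem lintegral_dilate_le (hfm : Measurable f) (hf : DifferentiableOn ℂ f (ball 0 1))
    (hp : 0 < p) {R : ℝ} (hR0 : 0 ≤ R) (hR1 : R ≤ 1) (α : ℝ) :
    ∫⁻ z, ENNReal.ofReal (‖f (R * z)‖ ^ p) ∂bergmanMeasure α ≤
      ∫⁻ z, ENNReal.ofReal (‖f z‖ ^ p) ∂bergmanMeasure α := by
  rw [lintegral_bergmanMeasure_eq_radialMeasure (by fun_prop),
    lintegral_bergmanMeasure_eq_radialMeasure (by fun_prop)]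
  refine mul_le_mul_right (lintegral_mono_ae ?_) _
  filter_upwards [ae_mem_Ioo_radialMeasure α] with s hs
  simp only [mul_polarPt_sqrt hR0]
  exact lintegral_polarPt_le hf hp (mul_nonneg (sq_nonneg R) hs.1.le)
    (mul_le_of_le_one_left hs.1.le (pow_le_one₀ hR0 hR1)) hs.2

/-- Hypercontractivity on the disk for dilates. -/
theorem hypercontractive_dilate (hf : DifferentiableOn ℂ f (ball 0 1))
    {r R : ℝ} (hα : 1 < α) (hβ : 1 < β) (hp : 0 < p) (hpq : p ≤ q)
    (hq2 : 2 ≤ q) (h : β * p ≤ α * q) (hr0 : 0 ≤ r) (hr1 : r ≤ 1)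
    (hr : r ^ 2 ≤ β * p / (α * q)) (hR0 : 0 ≤ R) (hR1 : R < 1) :
    (∫⁻ z, ENNReal.ofReal (‖f (R * (r * z))‖ ^ q) ∂bergmanMeasure β) ^ (1 / q) ≤
      (∫⁻ z, ENNReal.ofReal (‖f (R * z)‖ ^ p) ∂bergmanMeasure α) ^ (1 / p) := by
  have := isFiniteMeasure_bergmanMeasure hα
  have := isFiniteMeasure_bergmanMeasure hβ
  obtain ⟨g, hg, hlim, hbd⟩ := exists_entire_tendsto hf
  obtain ⟨C, hC⟩ := hbd _ hR1
  have hn : ∀ z ∈ ball (0 : ℂ) 1, ‖(R : ℂ) * z‖ ≤ R := fun z hz => by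
    rw [norm_mul, Complex.norm_real, Real.norm_of_nonneg hR0]
    exact mul_le_of_le_one_right hR0 (mem_ball_zero_iff.1 hz).le
  have hrz : ∀ z ∈ ball (0 : ℂ) 1, (r : ℂ) * z ∈ ball (0 : ℂ) 1 := fun z hz => by
    rw [mem_ball_zero_iff, norm_mul, Complex.norm_real, Real.norm_of_nonneg hr0]
    exact (mul_le_of_le_one_left (norm_nonneg z) hr1).trans_lt (mem_ball_zero_iff.1 hz)
  have hb : ∀ z ∈ ball (0 : ℂ) 1, (R : ℂ) * z ∈ ball (0 : ℂ) 1 := fun z hz =>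
    mem_ball_zero_iff.2 ((hn z hz).trans_lt hR1)
  have hgd : ∀ n, Differentiable ℂ fun z => g n (R * z) := fun n =>
    (hg n).comp (differentiable_id.const_mul _)
  refine le_of_tendsto_of_tendsto'
    (((tendsto_lintegral_normSq_add_rpow (μ := bergmanMeasure β) (C := C)
      (g := fun n z => g n (R * (r * z))) (f := fun z => f (R * (r * z))) (p := q)
      (by linarith) (fun n => ?_) ?_ ?_).ennrpow_const (1 / q)))
    (((tendsto_lintegral_normSq_add_rpow (μ := bergmanMeasure α) (C := C)
      (g := fun n z => g n (R * z)) (f := fun z => f (R * z)) hp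
      (fun n => (hgd n).continuous.measurable) ?_ ?_).ennrpow_const (1 / p))) fun n =>
      hypercontractive_reg (hgd n) (by positivity) hα hβ hp hpq hq2 h hr0 hr
  · exact ((hgd n).continuous.comp (continuous_const_mul (r : ℂ))).measurable
  · filter_upwards [ae_mem_ball_bergmanMeasure β] with z hz n using hC n _ (hn _ (hrz z hz))
  · filter_upwards [ae_mem_ball_bergmanMeasure β] with z hz using hlim _ (hb _ (hrz z hz))
  · filter_upwards [ae_mem_ball_bergmanMeasure α] with z hz n using hC n _ (hn z hz)
  · filter_upwards [ae_mem_ball_bergmanMeasure α] with z hz using hlim _ (hb z hz)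

/-- Hypercontractivity on the disk. -/
theorem hypercontractive_disk (hfm : Measurable f) (hf : DifferentiableOn ℂ f (ball 0 1))
    {r : ℝ} (hα : 1 < α) (hβ : 1 < β) (hp : 0 < p) (hpq : p ≤ q)
    (hq2 : 2 ≤ q) (h : β * p ≤ α * q) (hr0 : 0 ≤ r) (hr1 : r ≤ 1)
    (hr : r ^ 2 ≤ β * p / (α * q)) :
    (∫⁻ z, ENNReal.ofReal (‖f (r * z)‖ ^ q) ∂bergmanMeasure β) ^ (1 / q) ≤
      (∫⁻ z, ENNReal.ofReal (‖f z‖ ^ p) ∂bergmanMeasure α) ^ (1 / p) := by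
  have hq : 0 < q := by linarith
  set B := (∫⁻ z, ENNReal.ofReal (‖f z‖ ^ p) ∂bergmanMeasure α) ^ (1 / p)
  obtain ⟨R, -, hR, hRlim⟩ := exists_seq_strictMono_tendsto' (show (0 : ℝ) < 1 from zero_lt_one)
  have hn : ∀ n, ∫⁻ z, ENNReal.ofReal (‖f (R n * (r * z))‖ ^ q) ∂bergmanMeasure β ≤ B ^ q :=
    fun n => by
      rw [← ENNReal.rpow_inv_le_iff hq, ← one_div]
      exact (hypercontractive_dilate hf hα hβ hp hpq hq2 h hr0 hr1 hr (hR n).1.le (hR n).2).trans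
        (ENNReal.rpow_le_rpow (lintegral_dilate_le hfm hf hp (hR n).1.le (hR n).2.le α)
          (by positivity))
  rw [one_div, ENNReal.rpow_inv_le_iff hq]
  calc _ = ∫⁻ z, Filter.liminf (fun n => ENNReal.ofReal (‖f (R n * (r * z))‖ ^ q)) Filter.atTop
        ∂bergmanMeasure β := by
        refine lintegral_congr_ae ?_
        filter_upwards [ae_mem_ball_bergmanMeasure β] with z hz
        have hrz : (r : ℂ) * z ∈ ball (0 : ℂ) 1 := by
          rw [mem_ball_zero_iff, norm_mul, Complex.norm_real, Real.norm_of_nonneg hr0]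
          exact (mul_le_of_le_one_left (norm_nonneg z) hr1).trans_lt (mem_ball_zero_iff.1 hz)
        have h1 : Filter.Tendsto (fun n => (R n : ℂ) * (r * z)) Filter.atTop (nhds (r * z)) := by
          simpa using ((Complex.continuous_ofReal.tendsto _).comp hRlim).mul_const ((r : ℂ) * z)
        have h2 := (hf.continuousOn.continuousAt (isOpen_ball.mem_nhds hrz)).tendsto.comp h1
        exact (ENNReal.tendsto_ofReal (h2.norm.rpow_const (Or.inr hq.le))).liminf_eq.symm
    _ ≤ Filter.liminf
        (fun n => ∫⁻ z, ENNReal.ofReal (‖f (R n * (r * z))‖ ^ q) ∂bergmanMeasure β)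
        Filter.atTop := lintegral_liminf_le fun n => by fun_prop
    _ ≤ B ^ q := Filter.liminf_le_of_frequently_le' (Filter.Frequently.of_forall hn)

end

section Minkowski

variable {X Y : Type*} [MeasurableSpace X] [MeasurableSpace Y] {μ : Measure X} {ν : Measure Y}
  [SFinite μ]

theorem lintegral_min_natCast_rpow_le [IsFiniteMeasure ν] {F : X → Y → ENNReal}
    (hF : Measurable (Function.uncurry F)) {k : ℝ} (hk : 1 < k) (N : ℕ) :
    (∫⁻ y, (min (∫⁻ x, F x y ∂μ) N) ^ k ∂ν) ^ (1 / k) ≤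
      ∫⁻ x, (∫⁻ y, F x y ^ k ∂ν) ^ (1 / k) ∂μ := by
  have hk0 : 0 < k := by linarith
  have hH : Measurable fun y => ∫⁻ x, F x y ∂μ := hF.lintegral_prod_left'
  have hFx : ∀ x, Measurable (F x) := fun x => hF.comp measurable_prodMk_left
  have hFy : ∀ y, Measurable fun x => F x y := fun y => hF.comp measurable_prodMk_right
  set G : Y → ENNReal := fun y => min (∫⁻ x, F x y ∂μ) N with hG
  have hGm : Measurable G := hH.min measurable_const
  set A := ∫⁻ y, G y ^ k ∂ν with hA
  set M := ∫⁻ x, (∫⁻ y, F x y ^ k ∂ν) ^ (1 / k) ∂μ with hM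
  have hkc := Real.HolderConjugate.conjExponent hk
  have hAt : A ≠ ⊤ := by
    refine ((lintegral_mono (g := fun _ => (N : ENNReal) ^ k) fun y =>
      ENNReal.rpow_le_rpow (min_le_right _ _) hk0.le).trans_lt ?_).ne
    rw [lintegral_const]
    exact ENNReal.mul_lt_top (ENNReal.rpow_lt_top_of_nonneg hk0.le (ENNReal.natCast_ne_top N))
      (measure_lt_top _ _)
  have hle : A ≤ M * A ^ (1 / k.conjExponent) := by
    calc A ≤ ∫⁻ y, (∫⁻ x, F x y ∂μ) * G y ^ (k - 1) ∂ν := by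
          refine lintegral_mono fun y => ?_
          have e : G y ^ k = G y * G y ^ (k - 1) := by
            conv_lhs => rw [show k = 1 + (k - 1) by ring,
              ENNReal.rpow_add_of_nonneg _ _ zero_le_one (by linarith), ENNReal.rpow_one]
          rw [e]
          exact mul_le_mul_left (min_le_left _ _) _
      _ = ∫⁻ y, ∫⁻ x, F x y * G y ^ (k - 1) ∂μ ∂ν := by
          refine lintegral_congr fun y => ?_
          rw [lintegral_mul_const _ (hFy y)]
      _ = ∫⁻ x, ∫⁻ y, F x y * G y ^ (k - 1) ∂ν ∂μ := by
          refine (lintegral_lintegral_swap (Measurable.aemeasurable ?_)).symm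
          exact hF.mul ((hGm.pow_const _).comp measurable_snd)
      _ ≤ ∫⁻ x, (∫⁻ y, F x y ^ k ∂ν) ^ (1 / k) * A ^ (1 / k.conjExponent) ∂μ := by
          refine lintegral_mono fun x => ?_
          refine (ENNReal.lintegral_mul_le_Lp_mul_Lq ν hkc (hFx x).aemeasurable
            (hGm.pow_const (k - 1)).aemeasurable).trans_eq ?_
          have e : (k - 1) * k.conjExponent = k := hkc.sub_one_mul_conj
          simp only [← ENNReal.rpow_mul, e, hA]
      _ = _ := by
          have hm : Measurable fun x => ∫⁻ y, F x y ^ k ∂ν := (hF.pow_const k).lintegral_prod_right'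
          rw [lintegral_mul_const _ (hm.pow_const _)]
  rcases eq_or_ne A 0 with h0 | h0
  · rw [h0, ENNReal.zero_rpow_of_pos (by positivity)]; exact zero_le
  have hc0 : A ^ (1 / k.conjExponent) ≠ 0 := (ENNReal.rpow_pos (pos_iff_ne_zero.2 h0) hAt).ne'
  have hct : A ^ (1 / k.conjExponent) ≠ ⊤ :=
    ENNReal.rpow_ne_top_of_nonneg (one_div_nonneg.2 hkc.symm.nonneg) hAt
  refine (ENNReal.mul_le_mul_iff_left hc0 hct).1 (le_trans (le_of_eq ?_) hle)
  rw [← ENNReal.rpow_add _ _ h0 hAt, one_div, one_div, hkc.inv_add_inv_eq_one, ENNReal.rpow_one]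

/-- **Minkowski's integral inequality**. -/
theorem lintegral_lintegral_rpow_le [IsFiniteMeasure ν] {F : X → Y → ENNReal}
    (hF : Measurable (Function.uncurry F)) {k : ℝ} (hk : 1 ≤ k) :
    (∫⁻ y, (∫⁻ x, F x y ∂μ) ^ k ∂ν) ^ (1 / k) ≤
      ∫⁻ x, (∫⁻ y, F x y ^ k ∂ν) ^ (1 / k) ∂μ := by
  rcases hk.eq_or_lt with rfl | hk
  · simp only [ENNReal.rpow_one, one_div, inv_one]
    exact (lintegral_lintegral_swap hF.aemeasurable).ge
  have hH : Measurable fun y => ∫⁻ x, F x y ∂μ := hF.lintegral_prod_left'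
  refine le_of_tendsto' ((lintegral_tendsto_of_tendsto_of_monotone
    (f := fun (N : ℕ) y => (min (∫⁻ x, F x y ∂μ) N) ^ k) (fun N => ?_) ?_ ?_).ennrpow_const (1 / k))
    (lintegral_min_natCast_rpow_le hF hk)
  · exact ((hH.min measurable_const).pow_const k).aemeasurable
  · refine Filter.Eventually.of_forall fun y N N' hN => ?_
    exact ENNReal.rpow_le_rpow (min_le_min_left _ (by exact_mod_cast hN)) (by linarith)
  · refine Filter.Eventually.of_forall fun y => Filter.Tendsto.ennrpow_const k ?_
    simpa using (tendsto_const_nhds (x := ∫⁻ x, F x y ∂μ)).min ENNReal.tendsto_nat_nhds_top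

end Minkowski

theorem measurable_finCons (n : ℕ) :
    Measurable fun x : ℂ × (Fin n → ℂ) => (Fin.cons x.1 x.2 : Fin (n + 1) → ℂ) := by
  refine measurable_pi_iff.2 fun i => ?_
  refine Fin.cases ?_ (fun j => ?_) i
  · simpa using measurable_fst
  · simpa [Function.comp_def] using (measurable_pi_apply j).comp measurable_snd

theorem lintegral_pi_succ {μ : Measure ℂ} [SigmaFinite μ] {n : ℕ}
    {g : (Fin (n + 1) → ℂ) → ENNReal} (hg : Measurable g) :
    ∫⁻ z, g z ∂(Measure.pi fun _ => μ) =
      ∫⁻ x, ∫⁻ y, g (Fin.cons x y) ∂(Measure.pi fun _ : Fin n => μ) ∂μ := by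
  rw [← (measurePreserving_piFinSuccAbove (fun _ => μ) 0).symm.lintegral_comp hg,
    lintegral_prod]
  · refine lintegral_congr fun x => lintegral_congr fun y => ?_
    simp [MeasurableEquiv.piFinSuccAbove, Fin.consEquiv]
  · exact (hg.comp (MeasurableEquiv.measurable _)).aemeasurable

theorem ae_mem_polydisc_bergmanMeasurePi (n : ℕ) {α : ℝ} (hα : 1 < α) :
    ∀ᵐ z ∂bergmanMeasurePi n α, ∀ i, z i ∈ ball (0 : ℂ) 1 :=
  have := isFiniteMeasure_bergmanMeasure hα
  ae_all_iff.2 fun _ => Measure.tendsto_eval_ae_ae.eventually (ae_mem_ball_bergmanMeasure α)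

theorem hypercontractive_polydisc {α β p q : ℝ} (hα : 1 < α) (hβ : 1 < β) (hp : 0 < p)
    (hpq : p ≤ q) (hq2 : 2 ≤ q) (h : β * p ≤ α * q) (n : ℕ) {r : Fin n → ℝ} (hr0 : ∀ i, 0 ≤ r i)
    (hr1 : ∀ i, r i ≤ 1) (hr : ∀ i, r i ^ 2 ≤ β * p / (α * q)) {f : (Fin n → ℂ) → ℂ}
    (hfm : Measurable f) (hf : DifferentiableOn ℂ f {z | ∀ i, z i ∈ ball (0 : ℂ) 1}) :
    (∫⁻ z, ENNReal.ofReal (‖f fun i => r i * z i‖ ^ q) ∂bergmanMeasurePi n β) ^ (1 / q) ≤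
      (∫⁻ z, ENNReal.ofReal (‖f z‖ ^ p) ∂bergmanMeasurePi n α) ^ (1 / p) := by
  have := isFiniteMeasure_bergmanMeasure hα
  have := isFiniteMeasure_bergmanMeasure hβ
  have hq : 0 < q := by linarith
  unfold bergmanMeasurePi
  induction n with
  | zero =>
    rw [Measure.pi_of_empty, Measure.pi_of_empty, lintegral_dirac, lintegral_dirac]
    rw [← ENNReal.ofReal_rpow_of_nonneg (norm_nonneg _) hq.le,
      ← ENNReal.ofReal_rpow_of_nonneg (norm_nonneg _) hp.le, ← ENNReal.rpow_mul,
      ← ENNReal.rpow_mul, mul_one_div_cancel hq.ne', mul_one_div_cancel hp.ne']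
    refine le_of_eq ?_
    congr 5
    exact Subsingleton.elim _ _
  | succ n ih =>
    have hcons : ∀ (x : ℂ) (y : Fin n → ℂ), (fun i => (r i : ℂ) * (Fin.cons x y : Fin (n + 1) → ℂ) i) =
        Fin.cons (r 0 * x) fun i => (r i.succ : ℂ) * y i := by
      intro x y
      funext i
      refine Fin.cases ?_ (fun j => ?_) i <;> simp
    have hfc : Measurable fun x : ℂ × (Fin n → ℂ) => f (Fin.cons x.1 x.2) :=
      hfm.comp (measurable_finCons n)
    have hfx : ∀ x, Measurable fun y => f (Fin.cons x y) := fun x =>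
      hfc.comp measurable_prodMk_left
    have hfy : ∀ y, Measurable fun x => f (Fin.cons x y) := fun y =>
      hfc.comp measurable_prodMk_right
    have hdx : ∀ x ∈ ball (0 : ℂ) 1, DifferentiableOn ℂ (fun y => f (Fin.cons x y))
        {y : Fin n → ℂ | ∀ i, y i ∈ ball (0 : ℂ) 1} := fun x hx => by
      refine hf.comp (differentiable_pi.2 fun i => ?_).differentiableOn fun y hy i => ?_
      · refine Fin.cases ?_ (fun j => ?_) i
        · simp
        · simpa using differentiable_apply j
      · refine Fin.cases ?_ (fun j => ?_) i
        · simpa using hx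
        · simpa using hy j
    have hdy : ∀ y : Fin n → ℂ, (∀ i, y i ∈ ball (0 : ℂ) 1) →
        DifferentiableOn ℂ (fun x => f (Fin.cons x y)) (ball 0 1) := fun y hy => by
      refine hf.comp (differentiable_pi.2 fun i => ?_).differentiableOn fun x hx i => ?_
      · refine Fin.cases ?_ (fun j => ?_) i
        · simp
        · simp
      · refine Fin.cases ?_ (fun j => ?_) i
        · simpa using hx
        · simpa using hy j
    have hk : 1 ≤ q / p := (one_le_div hp).2 hpq
    set F : (Fin n → ℂ) → ℂ → ENNReal :=
      fun y x => ENNReal.ofReal (‖f (Fin.cons (r 0 * x) y)‖ ^ p) with hF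
    have hFm : Measurable (Function.uncurry F) := by
      have : Measurable fun z : (Fin n → ℂ) × ℂ => f (Fin.cons (r 0 * z.2) z.1) :=
        hfc.comp ((measurable_snd.const_mul _).prodMk measurable_fst)
      exact (this.norm.pow_const p).ennreal_ofReal
    have hmr : Measurable fun z : Fin (n + 1) → ℂ => f fun i => r i * z i :=
      hfm.comp (measurable_pi_iff.2 fun i => (measurable_pi_apply i).const_mul _)
    rw [lintegral_pi_succ (hmr.norm.pow_const q).ennreal_ofReal,
      lintegral_pi_succ (hfm.norm.pow_const p).ennreal_ofReal]
    simp only [hcons]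
    calc _ ≤ (∫⁻ x, (∫⁻ y, F y x ∂(Measure.pi fun _ : Fin n => bergmanMeasure α)) ^ (q / p)
          ∂bergmanMeasure β) ^ (1 / q) := by
          refine ENNReal.rpow_le_rpow (lintegral_mono_ae ?_) (by positivity)
          filter_upwards [ae_mem_ball_bergmanMeasure β] with x hx
          have hrx : (r 0 : ℂ) * x ∈ ball (0 : ℂ) 1 := by
            rw [mem_ball_zero_iff, norm_mul, Complex.norm_real, Real.norm_of_nonneg (hr0 0)]
            exact (mul_le_of_le_one_left (norm_nonneg x) (hr1 0)).trans_lt (mem_ball_zero_iff.1 hx)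
          have := ih (fun i => hr0 i.succ) (fun i => hr1 i.succ) (fun i => hr i.succ)
            (hfx (r 0 * x)) (hdx _ hrx)
          rw [one_div, ENNReal.rpow_inv_le_iff hq, ← ENNReal.rpow_mul, one_div_mul_eq_div] at this
          exact this
      _ = ((∫⁻ x, (∫⁻ y, F y x ∂(Measure.pi fun _ : Fin n => bergmanMeasure α)) ^ (q / p)
          ∂bergmanMeasure β) ^ (1 / (q / p))) ^ (1 / p) := by
          rw [← ENNReal.rpow_mul]
          congr 1
          field_simp
      _ ≤ (∫⁻ y, (∫⁻ x, F y x ^ (q / p) ∂bergmanMeasure β) ^ (1 / (q / p))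
          ∂(Measure.pi fun _ : Fin n => bergmanMeasure α)) ^ (1 / p) :=
          ENNReal.rpow_le_rpow (lintegral_lintegral_rpow_le hFm hk) (by positivity)
      _ ≤ (∫⁻ y, ∫⁻ x, ENNReal.ofReal (‖f (Fin.cons x y)‖ ^ p) ∂bergmanMeasure α
          ∂(Measure.pi fun _ : Fin n => bergmanMeasure α)) ^ (1 / p) := by
          refine ENNReal.rpow_le_rpow (lintegral_mono_ae ?_) (by positivity)
          filter_upwards [ae_mem_polydisc_bergmanMeasurePi n hα] with y hy
          have := hypercontractive_disk (hfy y) (hdy y hy) hα hβ hp hpq hq2 h (hr0 0) (hr1 0) (hr 0)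
          rw [one_div p, ENNReal.le_rpow_inv_iff hp, ← ENNReal.rpow_mul, one_div_mul_eq_div] at this
          have e : ∀ x, F y x ^ (q / p) = ENNReal.ofReal (‖f (Fin.cons (r 0 * x) y)‖ ^ q) := by
            intro x
            rw [hF, ENNReal.ofReal_rpow_of_nonneg (by positivity) (by positivity),
              ← Real.rpow_mul (norm_nonneg _), mul_div_cancel₀ _ hp.ne']
          simp only [e, one_div_div]
          exact this
      _ = _ := by
          rw [lintegral_lintegral_swap]
          exact ((hfc.comp measurable_swap).norm.pow_const p).ennreal_ofReal.aemeasurable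

/-- Sufficiency in Lemma 3.1: hypercontractivity on the polydisc. If `1 < α, β < ∞`,
`0 < p ≤ q < ∞`, `q ≥ 2`, `βp ≤ αq` and `0 ≤ rᵢ < 1` with `rᵢ² ≤ βp/(αq)` for all `i`,
then `‖T_𝐫 f‖_{A_β^q(𝔻ⁿ)} ≤ ‖f‖_{A_α^p(𝔻ⁿ)}` for every analytic `f` on the polydisc. -/
theorem polydisc_hypercontractive_sufficiency
    (n : ℕ) (hn : 0 < n)
    (α β p q : ℝ) (hα : 1 < α) (hβ : 1 < β) (hp : 0 < p) (hpq : p ≤ q)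
    (hq2 : 2 ≤ q) (hβpαq : β * p ≤ α * q)
    (r : Fin n → ℝ) (hr0 : ∀ i, 0 ≤ r i) (hr1 : ∀ i, r i < 1)
    (hr : ∀ i, (r i) ^ 2 ≤ β * p / (α * q))
    (f : (Fin n → ℂ) → ℂ)
    (hf : AnalyticOnNhd ℂ f {z : Fin n → ℂ | ∀ i, z i ∈ ball (0 : ℂ) 1}) :
    (∫⁻ z, ENNReal.ofReal (‖f (fun i => (r i : ℂ) * z i)‖ ^ q)
        ∂(bergmanMeasurePi n β)) ^ (1 / q) ≤
      (∫⁻ z, ENNReal.ofReal (‖f z‖ ^ p) ∂(bergmanMeasurePi n α)) ^ (1 / p) := by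
  set D : Set (Fin n → ℂ) := {z | ∀ i, z i ∈ ball (0 : ℂ) 1} with hD
  have hDm : MeasurableSet D := by
    rw [hD, Set.ofPred_forall]
    exact MeasurableSet.iInter fun i => measurable_pi_apply i measurableSet_ball
  have hfm : Measurable (D.indicator f) := by
    classical
    rw [← Set.piecewise_eq_indicator]
    exact hf.continuousOn.measurable_piecewise continuousOn_const hDm
  have hfd : DifferentiableOn ℂ (D.indicator f) D :=
    hf.differentiableOn.congr fun z hz => Set.indicator_of_mem hz f
  have hmain := hypercontractive_polydisc hα hβ hp hpq hq2 hβpαq n hr0 (fun i => (hr1 i).le) hr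
    hfm hfd
  convert hmain using 2
  · refine lintegral_congr_ae ?_
    filter_upwards [ae_mem_polydisc_bergmanMeasurePi n hβ] with z hz
    rw [Set.indicator_of_mem]
    intro i
    rw [mem_ball_zero_iff, norm_mul, Complex.norm_real, Real.norm_of_nonneg (hr0 i)]
    exact (mul_le_of_le_one_left (norm_nonneg _) (hr1 i).le).trans_lt (mem_ball_zero_iff.1 (hz i))
  · refine lintegral_congr_ae ?_
    filter_upwards [ae_mem_polydisc_bergmanMeasurePi n hα] with z hz
    rw [Set.indicator_of_mem (show z ∈ D from hz)]
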